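/- arXiv:1508.05293 — 5 statements merged into one kernel-verified Lean document; each statement's English description precedes it below -/
import Mathlib

section
/- For coprime positive integers a and b, the number of partitions that are simultaneously a-cores and b-cores equals (1/(a+b)) * binomial(a+b, b). -/
/-- The hook length of the cell `(i, j)` in a Young diagram. -/
def YoungDiagram.hookLength (μ : YoungDiagram) (i j : ℕ) : ℕ :=
  (μ.rowLen i - j) + (μ.colLen j - i) - 1

/-- A Young diagram is an `a`-core if none of its hook lengths is divisible by `a`. -/
def YoungDiagram.IsCore (μ : YoungDiagram) (a : ℕ) : Prop :=
  ∀ i j : ℕ, (i, j) ∈ μ → ¬ a ∣ μ.hookLength i j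


namespace SimCores

def gfun (μ : YoungDiagram) (j : ℕ) : ℕ := j + μ.colLen 0 - μ.colLen j

def GS (μ : YoungDiagram) : Set ℕ := Set.range (gfun μ)

lemma gfun_add (μ : YoungDiagram) (j : ℕ) : gfun μ j + μ.colLen j = j + μ.colLen 0 := by
  have := μ.colLen_anti 0 j (Nat.zero_le _)
  unfold gfun; omega

lemma gfun_strictMono (μ : YoungDiagram) : StrictMono (gfun μ) := by
  apply strictMono_nat_of_lt_succ
  intro j
  have := μ.colLen_anti j (j+1) (Nat.le_succ _)
  have := gfun_add μ j
  have := gfun_add μ (j+1)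
  omega

lemma gfun_zero (μ : YoungDiagram) : gfun μ 0 = 0 := by simp [gfun]

lemma zero_mem_GS (μ : YoungDiagram) : 0 ∈ GS μ := ⟨0, gfun_zero μ⟩

lemma colLen_eventually (μ : YoungDiagram) (j : ℕ) (hj : μ.rowLen 0 ≤ j) : μ.colLen j = 0 := by
  by_contra h
  have h1 : (0, j) ∈ μ := YoungDiagram.mem_iff_lt_colLen.2 (Nat.pos_of_ne_zero h)
  have := YoungDiagram.mem_iff_lt_rowLen.1 h1
  omega

lemma ext_colLen {μ ν : YoungDiagram} (h : ∀ j, μ.colLen j = ν.colLen j) : μ = ν := by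
  ext ⟨i, j⟩
  rw [YoungDiagram.mem_cells, YoungDiagram.mem_cells, YoungDiagram.mem_iff_lt_colLen,
    YoungDiagram.mem_iff_lt_colLen, h]

lemma GS_injective : Function.Injective GS := by
  intro μ ν h
  have hg : gfun μ = gfun ν := ((gfun_strictMono μ).range_inj (gfun_strictMono ν)).1 h
  have key : ∀ j, μ.colLen j + ν.colLen 0 = ν.colLen j + μ.colLen 0 := by
    intro j
    have h1 := gfun_add μ j
    have h2 := gfun_add ν j
    rw [hg] at h1
    omega
  have h0 := key (max (μ.rowLen 0) (ν.rowLen 0))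
  rw [colLen_eventually μ _ (le_max_left _ _), colLen_eventually ν _ (le_max_right _ _)] at h0
  apply ext_colLen
  intro j
  have := key j
  omega

/-- hook = x_i - g_j -/
lemma hook_eq (μ : YoungDiagram) (i j : ℕ) (h : (i, j) ∈ μ) :
    gfun μ j + μ.hookLength i j + i + 1 = μ.rowLen i + μ.colLen 0 := by
  have h1 := YoungDiagram.mem_iff_lt_colLen.1 h
  have h2 := YoungDiagram.mem_iff_lt_rowLen.1 h
  have h3 := gfun_add μ j
  unfold YoungDiagram.hookLength
  omega

lemma not_mem_GS (μ : YoungDiagram) (i n : ℕ) (h : n + i + 1 = μ.rowLen i + μ.colLen 0) :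
    n ∉ GS μ := by
  rintro ⟨j, rfl⟩
  have h3 := gfun_add μ j
  by_cases hm : (i, j) ∈ μ
  · have h1 := YoungDiagram.mem_iff_lt_colLen.1 hm
    have h2 := YoungDiagram.mem_iff_lt_rowLen.1 hm
    omega
  · have h1 := mt YoungDiagram.mem_iff_lt_colLen.2 hm
    have h2 := mt YoungDiagram.mem_iff_lt_rowLen.2 hm
    omega

lemma exists_of_not_mem_GS (μ : YoungDiagram) (n : ℕ) (h : n ∉ GS μ) :
    ∃ i, n + i + 1 = μ.rowLen i + μ.colLen 0 := by
  have hex : ∃ j, n ≤ gfun μ j := ⟨n, (gfun_strictMono μ).le_apply⟩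
  classical
  obtain ⟨j, hj, hmin⟩ : ∃ j, n < gfun μ (j + 1) ∧ gfun μ j < n := by
    have hs := Nat.find_spec hex
    have hm := fun m => Nat.find_min hex (m := m)
    generalize Nat.find hex = j at hs hm
    have hne : ∀ j, gfun μ j ≠ n := fun j hj => h ⟨j, hj⟩
    rcases j with _ | j
    · rw [gfun_zero] at hs
      have := hne 0
      rw [gfun_zero] at this
      omega
    · exact ⟨j, lt_of_le_of_ne hs (hne _).symm, by have := hm j (by omega); omega⟩
  have h1 := gfun_add μ j
  have h2 := gfun_add μ (j + 1)
  refine ⟨μ.colLen 0 + j - n, ?_⟩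
  have m1 : (μ.colLen 0 + j - n, j) ∈ μ := YoungDiagram.mem_iff_lt_colLen.2 (by omega)
  have m2 : (μ.colLen 0 + j - n, j + 1) ∉ μ := by
    rw [YoungDiagram.mem_iff_lt_colLen]; omega
  rw [YoungDiagram.mem_iff_lt_rowLen] at m1 m2
  omega

lemma isCore_iff (μ : YoungDiagram) (a : ℕ) (ha : 0 < a) :
    μ.IsCore a ↔ ∀ n ∈ GS μ, n + a ∈ GS μ := by
  constructor
  · rintro h _ ⟨j, rfl⟩
    by_contra hn
    obtain ⟨i, hi⟩ := exists_of_not_mem_GS μ _ hn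
    have h3 := gfun_add μ j
    have hm : (i, j) ∈ μ := by
      by_contra hm
      have h1 := mt YoungDiagram.mem_iff_lt_colLen.2 hm
      have h2 := mt YoungDiagram.mem_iff_lt_rowLen.2 hm
      omega
    have := hook_eq μ i j hm
    have e : μ.hookLength i j = a := by omega
    exact h i j hm (by rw [e])
  · rintro h i j hm ⟨k, hk⟩
    have e := hook_eq μ i j hm
    rw [hk] at e
    refine not_mem_GS μ i _ e ?_
    clear e hk
    induction k with
    | zero => exact ⟨j, by simp⟩
    | succ k ih => have := h _ ih; rwa [mul_add, mul_one, ← add_assoc]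

lemma GS_surj (G : Set ℕ) (h0 : 0 ∈ G) (M : ℕ) (hM : ∀ n, M ≤ n → n ∈ G) : ∃ μ, GS μ = G := by
  classical
  have hinf : ({n | n ∈ G}).Infinite := by
    apply Set.infinite_of_forall_exists_gt
    intro n
    exact ⟨n + M + 1, hM _ (by omega), by omega⟩
  set g := Nat.nth (· ∈ G) with hg
  have gmono : StrictMono g := Nat.nth_strictMono hinf
  have grange : Set.range g = G := Nat.range_nth_of_infinite hinf
  let X : Finset ℕ := (Finset.range M).filter (· ∉ G)
  have hX : ∀ n, n ∈ X ↔ n ∉ G := by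
    intro n
    simp only [X, Finset.mem_filter, Finset.mem_range]
    constructor
    · exact fun h => h.2
    · intro h; exact ⟨by by_contra h'; exact h (hM n (by omega)), h⟩
  let c : ℕ → ℕ := fun j => (X.filter (fun x => g j < x)).card
  have canti : ∀ i j, i ≤ j → c j ≤ c i := by
    intro i j hij
    apply Finset.card_le_card
    intro x
    simp only [Finset.mem_filter]
    rintro ⟨h1, h2⟩
    exact ⟨h1, lt_of_le_of_lt (gmono.monotone hij) h2⟩
  have cle : ∀ j, c j ≤ X.card := fun j => Finset.card_le_card (Finset.filter_subset _ _)
  have czero : ∀ j, M ≤ j → c j = 0 := by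
    intro j hj
    rw [Finset.card_eq_zero, Finset.filter_eq_empty_iff]
    intro x hx
    have : x < M := by simp only [X, Finset.mem_filter, Finset.mem_range] at hx; exact hx.1
    have := gmono.le_apply (x := j)
    omega
  let μ : YoungDiagram :=
    { cells := ((Finset.range X.card) ×ˢ (Finset.range M)).filter (fun p => p.1 < c p.2)
      isLowerSet := by
        rintro ⟨i, j⟩ ⟨i', j'⟩ hle hm
        obtain ⟨hi, hj⟩ := Prod.mk_le_mk.1 hle
        simp only [Finset.coe_filter, Finset.mem_product, Finset.mem_range, Set.mem_ofPred_eq] at hm ⊢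
        have := canti _ _ hj
        omega }
  have hμ : ∀ i j, (i, j) ∈ μ ↔ i < c j := by
    intro i j
    rw [← YoungDiagram.mem_cells]
    simp only [μ, Finset.mem_filter, Finset.mem_product, Finset.mem_range]
    constructor
    · exact fun h => h.2
    · intro h
      have := cle j
      refine ⟨⟨by omega, ?_⟩, h⟩
      by_contra h'
      have := czero j (by omega)
      omega
  have hcol : ∀ j, μ.colLen j = c j := by
    intro j
    have h := fun i => (YoungDiagram.mem_iff_lt_colLen (μ := μ) (i := i) (j := j)).symm.trans (hμ i j)
    have h1 := h (μ.colLen j)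
    have h2 := h (c j)
    omega
  have g0 : g 0 = 0 := by
    obtain ⟨j, hj⟩ : 0 ∈ Set.range g := grange ▸ h0
    have := gmono.monotone (Nat.zero_le j)
    omega
  have c0 : c 0 = X.card := by
    simp only [c]
    rw [Finset.filter_true_of_mem]
    intro x hx
    rw [g0, Nat.pos_iff_ne_zero]
    rintro rfl
    exact (hX 0).1 hx h0
  refine ⟨μ, ?_⟩
  rw [← grange]
  unfold GS
  congr 1
  funext j
  have h1 := gfun_add μ j
  rw [hcol, hcol, c0] at h1
  -- X.card = c j + #{x ∈ X, x < g j}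
  have hgj : g j ∈ G := by rw [← grange]; exact ⟨j, rfl⟩
  have h2 : c j + (X.filter (fun x => ¬ g j < x)).card = X.card :=
    Finset.card_filter_add_card_filter_not _
  have h3 : X.filter (fun x => ¬ g j < x) = (Finset.range (g j)).filter (fun x => ¬ x ∈ G) := by
    ext x
    simp only [Finset.mem_filter, hX, Finset.mem_range]
    constructor
    · rintro ⟨h, h'⟩
      refine ⟨lt_of_le_of_ne (by omega) ?_, h⟩
      rintro rfl; exact h hgj
    · rintro ⟨h, h'⟩; exact ⟨h', by omega⟩
  have h4 : ((Finset.range (g j)).filter (fun x => x ∈ G)).card = j := by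
    rw [← Nat.count_eq_card_filter_range, hg, Nat.count_nth_of_infinite hinf]
  have h5 := Finset.card_filter_add_card_filter_not (s := Finset.range (g j)) (fun x => x ∈ G)
  rw [Finset.card_range] at h5
  rw [h3] at h2
  omega

def GT (a b : ℕ) : Set (Set ℕ) := {G | 0 ∈ G ∧ (∀ n ∈ G, n + a ∈ G) ∧ ∀ n ∈ G, n + b ∈ G}

def PP (a b : ℕ) (i : ZMod (a + b)) : Set (ZMod (a + b) → ℤ) :=
  {F | F i = 0 ∧ (∀ k, 0 ≤ F k) ∧ ∀ k, F (k + 1) = F k + a ∨ F (k + 1) = F k - b}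

lemma closed_mul {G : Set ℕ} {a : ℕ} (h : ∀ n ∈ G, n + a ∈ G) (k n : ℕ) (hn : n ∈ G) :
    n + k * a ∈ G := by
  induction k with
  | zero => simpa
  | succ k ih => have := h _ ih; rwa [add_mul, one_mul, ← add_assoc]

lemma closed_modEq {G : Set ℕ} {N : ℕ} (h : ∀ n ∈ G, n + N ∈ G) (m n : ℕ) (hm : m ∈ G)
    (hmn : m ≤ n) (he : (m : ZMod N) = n) : n ∈ G := by
  rw [ZMod.natCast_eq_natCast_iff] at he
  obtain ⟨k, hk⟩ := (Nat.modEq_iff_dvd' hmn).1 he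
  have := closed_mul h k m hm
  rwa [mul_comm, ← hk, Nat.add_sub_cancel' hmn] at this

lemma unit_a (a b : ℕ) (hab : Nat.Coprime a b) : IsUnit (a : ZMod (a + b)) := by
  rw [ZMod.isUnit_iff_coprime]
  simpa using hab

lemma cover (a b : ℕ) (hab : Nat.Coprime a b) (x : ZMod (a + b)) :
    ∃ k : ZMod (a + b), x = a * k := by
  obtain ⟨u, hu⟩ := unit_a a b hab
  exact ⟨↑u⁻¹ * x, by rw [← hu, ← mul_assoc, Units.mul_inv, one_mul]⟩

lemma GT_class_nonempty (a b : ℕ) [NeZero (a + b)] (G : Set ℕ) (hG : G ∈ GT a b) (k : ZMod (a + b)) :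
    ∃ n : ℕ, n ∈ G ∧ (n : ZMod (a + b)) = a * k := by
  refine ⟨0 + k.val * a, closed_mul hG.2.1 _ _ hG.1, ?_⟩
  simp [mul_comm]

lemma GT_N {a b : ℕ} {G : Set ℕ} (hG : G ∈ GT a b) : ∀ n ∈ G, n + (a + b) ∈ G := by
  intro n hn
  rw [← add_assoc]
  exact hG.2.2 _ (hG.2.1 _ hn)

lemma GT_cofinite (a b : ℕ) [NeZero (a + b)] (hab : Nat.Coprime a b) (G : Set ℕ) (hG : G ∈ GT a b) :
    ∃ M, ∀ n, M ≤ n → n ∈ G := by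
  refine ⟨(a + b) * a, fun n hn => ?_⟩
  obtain ⟨k, hk⟩ := cover a b hab n
  have h1 := closed_mul hG.2.1 k.val 0 hG.1
  refine closed_modEq (GT_N hG) _ _ h1 ?_ (by simp [hk, mul_comm])
  have := Nat.mul_le_mul_right a (ZMod.val_lt k).le
  omega

lemma card_step1 (a b : ℕ) (ha : 0 < a) (hb : 0 < b) (hab : Nat.Coprime a b) :
    Nat.card {μ : YoungDiagram | μ.IsCore a ∧ μ.IsCore b} = Nat.card (GT a b) := by
  have : NeZero (a + b) := ⟨by omega⟩
  have : GT a b = GS '' {μ : YoungDiagram | μ.IsCore a ∧ μ.IsCore b} := by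
    ext G
    constructor
    · intro hG
      obtain ⟨M, hM⟩ := GT_cofinite a b hab G hG
      obtain ⟨μ, rfl⟩ := GS_surj G hG.1 M hM
      exact ⟨μ, ⟨(isCore_iff μ a ha).2 hG.2.1, (isCore_iff μ b hb).2 hG.2.2⟩, rfl⟩
    · rintro ⟨μ, ⟨h1, h2⟩, rfl⟩
      exact ⟨zero_mem_GS μ, (isCore_iff μ a ha).1 h1, (isCore_iff μ b hb).1 h2⟩
  rw [this, Nat.card_image_of_injective GS_injective]

/-- Congruence of potentials. -/
lemma PP_cong {a b : ℕ} [NeZero (a + b)] {F : ZMod (a + b) → ℤ}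
    (hF : ∀ k, F (k + 1) = F k + a ∨ F (k + 1) = F k - b) (i k : ZMod (a + b)) :
    ((F (i + k) : ℤ) : ZMod (a + b)) = F i + a * k := by
  have key : ∀ n : ℕ, ((F (i + (n : ZMod (a + b))) : ℤ) : ZMod (a + b)) = F i + a * n := by
    intro n
    induction n with
    | zero => simp
    | succ n ih =>
      have hN : (a : ZMod (a + b)) + b = 0 := by
        have := ZMod.natCast_self (a + b); push_cast at this; exact this
      have hb' : (b : ZMod (a + b)) = - a := by linear_combination hN
      push_cast
      rw [← add_assoc]
      rcases hF (i + n) with h | h <;> rw [h] <;> push_cast <;> rw [ih]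
      · ring
      · rw [hb']; ring
  have := key k.val
  rwa [ZMod.natCast_zmod_val] at this

lemma int_eq_of_cong {N : ℕ} {x lo : ℤ} (h1 : lo ≤ x) (h2 : x ≤ lo + N)
    (h : (x : ZMod N) = lo) : x = lo + N ∨ x = lo := by
  rw [eq_comm, ZMod.intCast_eq_intCast_iff_dvd_sub] at h
  obtain ⟨c, hc⟩ := h
  rcases Nat.eq_zero_or_pos N with h0 | h0
  · subst h0; simp at hc; right; omega
  · have hN : (0 : ℤ) < N := by exact_mod_cast h0
    have c0 : 0 ≤ c := by by_contra hh; nlinarith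
    have c1 : c ≤ 1 := by by_contra hh; nlinarith
    have : c = 0 ∨ c = 1 := by omega
    rcases this with rfl | rfl
    · right; linarith
    · left; linarith

open Classical in
noncomputable def FG {a b : ℕ} [NeZero (a + b)] (G : GT a b) (k : ZMod (a + b)) : ℕ :=
  Nat.find (GT_class_nonempty a b G.1 G.2 k)

lemma FG_mem {a b : ℕ} [NeZero (a + b)] (G : GT a b) (k : ZMod (a + b)) : FG G k ∈ G.1 := by
  classical exact (Nat.find_spec (GT_class_nonempty a b G.1 G.2 k)).1

lemma FG_cong {a b : ℕ} [NeZero (a + b)] (G : GT a b) (k : ZMod (a + b)) :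
    (FG G k : ZMod (a + b)) = a * k := by
  classical exact (Nat.find_spec (GT_class_nonempty a b G.1 G.2 k)).2

lemma FG_le {a b : ℕ} [NeZero (a + b)] (G : GT a b) (k : ZMod (a + b)) (n : ℕ) (hn : n ∈ G.1)
    (h : (n : ZMod (a + b)) = a * k) : FG G k ≤ n := by
  classical exact Nat.find_min' (GT_class_nonempty a b G.1 G.2 k) ⟨hn, h⟩

lemma add_zero' (a b : ℕ) : (a : ZMod (a + b)) + b = 0 := by
  have := ZMod.natCast_self (a + b); push_cast at this; exact this

lemma FG_PP {a b : ℕ} [NeZero (a + b)] (G : GT a b) : (fun k => (FG G k : ℤ)) ∈ PP a b 0 := by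
  refine ⟨?_, fun k => by positivity, fun k => ?_⟩
  · have := FG_le G 0 0 G.2.1 (by simp)
    simp; omega
  · have h1 := FG_le G (k + 1) (FG G k + a) (G.2.2.1 _ (FG_mem G k))
      (by push_cast; rw [FG_cong]; ring)
    have h2 := FG_le G k (FG G (k + 1) + b) (G.2.2.2 _ (FG_mem G (k + 1)))
      (by push_cast; rw [FG_cong]; linear_combination add_zero' a b)
    have h3 := int_eq_of_cong (N := a + b) (x := (FG G (k + 1) : ℤ)) (lo := (FG G k : ℤ) - b)
      (by omega) (by push_cast; omega)
      (by push_cast; rw [FG_cong, FG_cong]; linear_combination add_zero' a b)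
    rcases h3 with h3 | h3
    · left; show (FG G (k + 1) : ℤ) = FG G k + a; rw [h3]; push_cast; ring
    · right; exact h3

lemma card_step2 (a b : ℕ) [NeZero (a + b)] (hab : Nat.Coprime a b) :
    Nat.card (GT a b) = Nat.card (PP a b 0) := by
  apply Nat.card_congr
  refine Equiv.ofBijective (fun G => (⟨_, FG_PP G⟩ : PP a b 0)) ⟨?_, ?_⟩
  · intro G H h
    have h' : ∀ k, FG G k = FG H k := by
      intro k
      have := congrFun (congrArg Subtype.val h) k
      simpa using this
    have key : ∀ (G H : GT a b), (∀ k, FG G k = FG H k) → ∀ n ∈ G.1, n ∈ H.1 := by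
      intro G H h n hn
      obtain ⟨k, hk⟩ := cover a b hab n
      have h1 := FG_le G k n hn hk
      exact closed_modEq (GT_N H.2) (FG H k) n (FG_mem H k) (h k ▸ h1) (by rw [FG_cong, hk])
    apply Subtype.ext
    exact Set.Subset.antisymm (key G H h') (key H G fun k => (h' k).symm)
  · rintro ⟨F, hF0, hFn, hF⟩
    have hc : ∀ k, ((F k : ℤ) : ZMod (a + b)) = a * k := by
      intro k
      have := PP_cong hF 0 k
      simpa [hF0] using this
    let G : Set ℕ := {n | ∀ k, (n : ZMod (a + b)) = a * k → F k ≤ n}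
    have hG : G ∈ GT a b := by
      refine ⟨?_, ?_, ?_⟩
      · intro k hk
        have : k = 0 := by
          have h := (unit_a a b hab).mul_right_eq_zero (b := k)
          exact h.1 (by rw [← hk]; simp)
        rw [this, hF0]; simp
      · intro n hn k hk
        have h1 := hn (k - 1) (by push_cast at hk; linear_combination hk)
        have h2 := hF (k - 1)
        rw [sub_add_cancel] at h2
        push_cast
        rcases h2 with h2 | h2 <;> omega
      · intro n hn k hk
        have h1 := hn (k + 1) (by push_cast at hk; linear_combination hk - add_zero' a b)
        have h2 := hF k
        push_cast
        rcases h2 with h2 | h2 <;> omega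
    refine ⟨⟨G, hG⟩, Subtype.ext (funext fun k => ?_)⟩
    apply le_antisymm
    · have hn : (((F k).toNat : ℕ) : ℤ) = F k := Int.toNat_of_nonneg (hFn k)
      have hz : (((F k).toNat : ℕ) : ZMod (a + b)) = a * k := by
        rw [← hc k, ← hn]; simp
      have := FG_le ⟨G, hG⟩ k (F k).toNat (by
        intro k' hk'
        have : k' = k := by
          apply (unit_a a b hab).mul_left_cancel
          rw [← hk', hz]
        rw [this, hn]) hz
      show ((FG ⟨G, hG⟩ k : ℕ) : ℤ) ≤ F k
      omega
    · exact FG_mem ⟨G, hG⟩ k k (FG_cong ⟨G, hG⟩ k)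

lemma exists_potential (N : ℕ) [NeZero N] (h : ZMod N → ℤ) (hs : ∑ k, h k = 0) :
    ∃ F : ZMod N → ℤ, ∀ k, F (k + 1) = F k + h k := by
  have hsum : ∑ j ∈ Finset.range N, h (j : ZMod N) = 0 := by
    rw [← hs]
    refine Finset.sum_bij' (fun j _ => (j : ZMod N)) (fun k _ => k.val) ?_ ?_ ?_ ?_ ?_
    · intros; exact Finset.mem_univ _
    · intro k _; exact Finset.mem_range.2 (ZMod.val_lt k)
    · intro j hj; exact ZMod.val_cast_of_lt (Finset.mem_range.1 hj)
    · intro k _; simp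
    · intros; rfl
  refine ⟨fun k => ∑ j ∈ Finset.range k.val, h (j : ZMod N), fun k => ?_⟩
  have e : ∑ j ∈ Finset.range k.val, h (j : ZMod N) + h k
      = ∑ j ∈ Finset.range (k.val + 1), h (j : ZMod N) := by
    rw [Finset.sum_range_succ]; simp
  show ∑ j ∈ Finset.range (k + 1).val, h (j : ZMod N)
    = ∑ j ∈ Finset.range k.val, h (j : ZMod N) + h k
  rw [e]
  have hk : k + 1 = ((k.val + 1 : ℕ) : ZMod N) := by simp
  have hlt := ZMod.val_lt k
  rcases Nat.lt_or_ge (k.val + 1) N with hl | hl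
  · rw [hk, ZMod.val_cast_of_lt hl]
  · have hN : k.val + 1 = N := by omega
    rw [hk, hN, hsum]; simp

lemma const_of_step {N : ℕ} [NeZero N] (D : ZMod N → ℤ) (h : ∀ k, D (k + 1) = D k) (k : ZMod N) :
    D k = D 0 := by
  have key : ∀ n : ℕ, D (n : ZMod N) = D 0 := by
    intro n
    induction n with
    | zero => simp
    | succ n ih => push_cast; rw [h, ih]
  simpa using key k.val

def upSet {a b : ℕ} [NeZero (a + b)] (F : ZMod (a + b) → ℤ) : Finset (ZMod (a + b)) :=
  Finset.univ.filter fun k => F (k + 1) = F k + a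

lemma upSet_step {a b : ℕ} [NeZero (a + b)] {F : ZMod (a + b) → ℤ}
    (hF : ∀ k, F (k + 1) = F k + a ∨ F (k + 1) = F k - b) (k : ZMod (a + b)) :
    F (k + 1) = F k + ((if k ∈ upSet F then ((a + b : ℕ) : ℤ) else 0) - b) := by
  by_cases h : F (k + 1) = F k + a
  · rw [if_pos (by simpa [upSet] using h), h]; push_cast; ring
  · rw [if_neg (by simpa [upSet] using h), (hF k).resolve_left h]; ring

lemma sum_ite {a b : ℕ} [NeZero (a + b)] (S : Finset (ZMod (a + b))) :
    ∑ k, ((if k ∈ S then ((a + b : ℕ) : ℤ) else 0) - b) = (a + b : ℕ) * ((S.card : ℤ) - b) := by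
  rw [Finset.sum_sub_distrib, Finset.sum_ite_mem]
  simp [ZMod.card]
  ring

lemma upSet_card {a b : ℕ} [NeZero (a + b)] {F : ZMod (a + b) → ℤ}
    (hF : ∀ k, F (k + 1) = F k + a ∨ F (k + 1) = F k - b) : (upSet F).card = b := by
  have h1 : ∑ k, F (k + 1) = ∑ k, F k := Equiv.sum_comp (Equiv.addRight (1 : ZMod (a + b))) F
  rw [Finset.sum_congr rfl (fun k _ => upSet_step hF k), Finset.sum_add_distrib, sum_ite] at h1
  have hN : ((a + b : ℕ) : ℤ) ≠ 0 := by exact_mod_cast NeZero.ne (a + b)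
  have h2 : ((a + b : ℕ) : ℤ) * (((upSet F).card : ℤ) - b) = 0 := by linarith
  have := (mul_eq_zero.1 h2).resolve_left hN
  omega

def equivPP (a b : ℕ) (i : ZMod (a + b)) : PP a b i ≃ PP a b 0 := by
  refine ⟨fun F => ⟨fun k => F.1 (k + i), ?_, ?_, ?_⟩, fun F => ⟨fun k => F.1 (k - i), ?_, ?_, ?_⟩, ?_, ?_⟩
  · simpa using F.2.1
  · exact fun k => F.2.2.1 _
  · intro k; have := F.2.2.2 (k + i); rwa [add_right_comm] at this
  · simpa using F.2.1
  · exact fun k => F.2.2.1 _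
  · intro k; have := F.2.2.2 (k - i); rwa [sub_add_eq_add_sub] at this
  · intro F; ext k; simp
  · intro F; ext k; simp

lemma card_step3 (a b : ℕ) [NeZero (a + b)] (ha : 0 < a) (hab : Nat.Coprime a b) :
    (a + b) * Nat.card (PP a b 0) = (a + b).choose b := by
  have e : Nat.card (Σ i : ZMod (a + b), PP a b i)
      = Nat.card {S : Finset (ZMod (a + b)) // S ∈ Finset.powersetCard b Finset.univ} := by
    apply Nat.card_congr
    refine Equiv.ofBijective (fun p => ⟨upSet p.2.1, Finset.mem_powersetCard.2
      ⟨Finset.subset_univ _, upSet_card p.2.2.2.2⟩⟩) ⟨?_, ?_⟩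
    · rintro ⟨i, F, hF⟩ ⟨j, F', hF'⟩ h
      have hS : upSet F = upSet F' := congrArg Subtype.val h
      have hD : ∀ k, F k - F' k = F 0 - F' 0 := by
        apply const_of_step (fun k => F k - F' k)
        intro k
        show F (k + 1) - F' (k + 1) = F k - F' k
        rw [upSet_step hF.2.2 k, upSet_step hF'.2.2 k, hS]; ring
      have h1 := hD i
      have h2 := hD j
      have := hF.1
      have := hF'.1
      have := hF.2.1 j
      have := hF'.2.1 i
      have hFF : F = F' := by funext k; have := hD k; omega
      have hj : F j = 0 := by omega
      have hij : i = j := by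
        have hc := PP_cong hF.2.2 i (j - i)
        rw [add_sub_cancel, hj, hF.1] at hc
        have : (a : ZMod (a + b)) * (j - i) = 0 := by simpa using hc.symm
        have := (unit_a a b hab).mul_right_eq_zero.1 this
        exact (sub_eq_zero.1 this).symm
      subst hij hFF
      rfl
    · rintro ⟨S, hS⟩
      have hcard : S.card = b := (Finset.mem_powersetCard.1 hS).2
      obtain ⟨F, hF⟩ := exists_potential (a + b)
        (fun k => (if k ∈ S then ((a + b : ℕ) : ℤ) else 0) - b) (by rw [sum_ite, hcard]; simp)
      obtain ⟨i, hi⟩ := Finite.exists_min F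
      refine ⟨⟨i, fun k => F k - F i, by simp, fun k => sub_nonneg.2 (hi k), fun k => ?_⟩, ?_⟩
      · show F (k + 1) - F i = F k - F i + a ∨ F (k + 1) - F i = F k - F i - b
        rw [hF k]
        by_cases h : k ∈ S
        · left; simp [h]; ring
        · right; simp [h]; ring
      · apply Subtype.ext
        ext k
        simp only [upSet, Finset.mem_filter, Finset.mem_univ, true_and]
        rw [hF k]
        by_cases h : k ∈ S
        · simp [h]; ring
        · simp [h]; omega
  rw [Nat.card_congr ((Equiv.sigmaCongrRight (equivPP a b)).trans (Equiv.sigmaEquivProd _ _)),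
    Nat.card_prod] at e
  simpa [ZMod.card] using e

end SimCores

/-- Anderson's theorem: the number of simultaneous `(a,b)`-cores is
`(1/(a+b)) * (a+b).choose b`. -/
theorem card_simultaneous_cores (a b : ℕ) (ha : 0 < a) (hb : 0 < b)
    (hab : Nat.Coprime a b) :
    Nat.card {μ : YoungDiagram | μ.IsCore a ∧ μ.IsCore b} = (a + b).choose b / (a + b) := by
  have : NeZero (a + b) := ⟨by omega⟩
  rw [SimCores.card_step1 a b ha hb hab, SimCores.card_step2 a b hab,
    ← SimCores.card_step3 a b ha hab, Nat.mul_div_cancel_left _ (by omega)]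
end

section
/- For coprime positive integers a and b, the maximum number of boxes among all simultaneous (a,b)-cores equals (a^2-1)(b^2-1)/24, and this value is a nonnegative integer. -/
open Finset

namespace SimCore

lemma sum_id (a : ℕ) : 2 * ∑ r ∈ range a, (r : ℤ) = a * (a - 1) := by
  induction a with
  | zero => simp
  | succ n ih => rw [sum_range_succ, mul_add, ih]; push_cast; ring

lemma sum_sq (a : ℕ) : 6 * ∑ r ∈ range a, (r : ℤ) ^ 2 = a * (a - 1) * (2 * a - 1) := by
  induction a with
  | zero => simp
  | succ n ih => rw [sum_range_succ, mul_add, ih]; push_cast; ring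

lemma sum_shift (a : ℕ) (g : ℕ → ℤ) (hg : ∀ j, g (j + a) = g j) (d : ℕ) :
    ∑ j ∈ range a, g (j + d) = ∑ j ∈ range a, g j := by
  induction d with
  | zero => simp
  | succ d ih =>
    rw [← ih]
    have h1 := sum_range_succ (fun j => g (j + d)) a
    have h2 := sum_range_succ' (fun j => g (j + d)) a
    have h3 : g (a + d) = g (0 + d) := by
      rw [← hg (0 + d)]; congr 1; omega
    have h4 : ∑ j ∈ range a, g (j + (d + 1)) = ∑ j ∈ range a, g (j + 1 + d) :=
      sum_congr rfl fun j _ => by congr 1; omega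
    rw [h4]; linarith

lemma var_bound (a : ℕ) (b : ℤ) (g : ℕ → ℤ) (hg : ∀ j, g (j + a) = g j)
    (hs : ∀ j, g (j + 1) ≤ g j + b) :
    6 * (2 * a * ∑ j ∈ range a, g j ^ 2 - 2 * (∑ j ∈ range a, g j) ^ 2)
      ≤ a ^ 2 * (a ^ 2 - 1) * b ^ 2 := by
  have hs' : ∀ d j, g (j + d) ≤ g j + d * b := by
    intro d
    induction d with
    | zero => intro j; simp
    | succ d ih =>
      intro j
      have h1 := ih j
      have h2 := hs (j + d)
      rw [← add_assoc]; push_cast; linarith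
  have key : ∀ d ∈ range a, ∑ j ∈ range a, (g (j + d) - g j) ^ 2
      ≤ a * (d * (a - d) * b ^ 2) := by
    intro d hd
    have hd' : d < a := mem_range.1 hd
    have h1 : ∀ j ∈ range a, (g (j + d) - g j) ^ 2
        ≤ (2 * d - a) * b * (g (j + d) - g j) + d * (a - d) * b ^ 2 := by
      intro j _
      have u := hs' d j
      have v := hs' (a - d) (j + d)
      rw [show j + d + (a - d) = j + a by omega, hg, Nat.cast_sub hd'.le] at v
      nlinarith [mul_nonneg (sub_nonneg.2 u) (sub_nonneg.2 v)]
    refine (sum_le_sum h1).trans (le_of_eq ?_)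
    rw [sum_add_distrib, ← mul_sum, sum_sub_distrib, sum_shift a g hg]
    simp
  have h2 : ∀ d ∈ range a, ∑ j ∈ range a, (g (j + d) - g j) ^ 2
      = 2 * ∑ j ∈ range a, g j ^ 2 - 2 * ∑ j ∈ range a, g j * g (j + d) := by
    intro d _
    have := sum_shift a (fun j => g j ^ 2) (fun j => by simp only [hg]) d
    calc _ = ∑ j ∈ range a, (g (j + d) ^ 2 + g j ^ 2 - 2 * (g j * g (j + d))) :=
          sum_congr rfl fun j _ => by ring
      _ = _ := by rw [sum_sub_distrib, sum_add_distrib, this, ← mul_sum]; ring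
  have h3 : ∑ d ∈ range a, ∑ j ∈ range a, g j * g (j + d) = (∑ j ∈ range a, g j) ^ 2 := by
    rw [sum_comm, sq, sum_mul]
    refine sum_congr rfl fun j _ => ?_
    rw [← mul_sum, ← sum_shift a g hg j]
    congr 1
    exact sum_congr rfl fun d _ => by rw [add_comm]
  have h4 := sum_le_sum key
  rw [sum_congr rfl h2, sum_sub_distrib, ← mul_sum, ← mul_sum, h3] at h4
  have h5 : ∑ d ∈ range a, (a : ℤ) * (d * (a - d) * b ^ 2)
      = a * b ^ 2 * (a * ∑ d ∈ range a, (d : ℤ) - ∑ d ∈ range a, (d : ℤ) ^ 2) := by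
    rw [mul_sum, ← sum_sub_distrib, mul_sum]
    exact sum_congr rfl fun d _ => by ring
  rw [h5] at h4
  simp only [sum_const, card_range, nsmul_eq_mul] at h4
  have e1 := sum_id a
  have e2 := sum_sq a
  have e3 : 6 * ((a : ℤ) * b ^ 2 * (a * ∑ d ∈ range a, (d : ℤ) - ∑ d ∈ range a, (d : ℤ) ^ 2))
      = a ^ 2 * (a ^ 2 - 1) * b ^ 2 := by
    linear_combination (3 * (a : ℤ) ^ 2 * b ^ 2) * e1 - (a : ℤ) * b ^ 2 * e2
  linarith

lemma sum_runner {a : ℕ} (ha : 0 < a) (n : ℕ → ℕ) (S : Finset ℕ)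
    (hS : ∀ x, x ∈ S ↔ x / a < n (x % a)) (φ : ℕ → ℤ) :
    ∑ x ∈ S, φ x = ∑ r ∈ range a, ∑ t ∈ range (n r), φ (r + a * t) := by
  rw [sum_sigma']
  symm
  refine sum_bij (fun p _ => p.1 + a * p.2) ?_ ?_ ?_ ?_
  · rintro ⟨r, t⟩ h
    simp only [mem_sigma, mem_range] at h
    rw [hS, Nat.add_mul_div_left _ _ ha, Nat.add_mul_mod_self_left, Nat.div_eq_of_lt h.1,
      Nat.mod_eq_of_lt h.1]
    simpa using h.2
  · rintro ⟨r, t⟩ h ⟨r', t'⟩ h' e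
    simp only [mem_sigma, mem_range] at h h' e
    have e1 := congrArg (· % a) e
    have e2 := congrArg (· / a) e
    simp only [Nat.add_mul_div_left _ _ ha, Nat.add_mul_mod_self_left, Nat.div_eq_of_lt h.1,
      Nat.mod_eq_of_lt h.1, Nat.div_eq_of_lt h'.1, Nat.mod_eq_of_lt h'.1, zero_add] at e1 e2
    subst e1; subst e2; rfl
  · intro x hx
    refine ⟨⟨x % a, x / a⟩, ?_, Nat.mod_add_div x a⟩
    simp only [mem_sigma, mem_range]
    exact ⟨Nat.mod_lt _ ha, (hS x).1 hx⟩
  · intros; rfl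

/-- twice the size of the partition with beta set `S` -/
def dsize (S : Finset ℕ) : ℤ := 2 * ∑ x ∈ S, (x : ℤ) - S.card * (S.card - 1)

lemma runner_card {a : ℕ} (ha : 0 < a) (n : ℕ → ℕ) (S : Finset ℕ)
    (hS : ∀ x, x ∈ S ↔ x / a < n (x % a)) :
    2 * ∑ r ∈ range a, ((r : ℤ) + a * n r) = a * (a - 1) + 2 * a * S.card := by
  have h := sum_runner ha n S hS (fun _ => 1)
  simp at h
  rw [sum_add_distrib, mul_add, sum_id, ← mul_sum, h]; ring

lemma runner_sum {a : ℕ} (ha : 0 < a) (n : ℕ → ℕ) (S : Finset ℕ)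
    (hS : ∀ x, x ∈ S ↔ x / a < n (x % a)) :
    2 * a * ∑ x ∈ S, (x : ℤ) = ∑ r ∈ range a, ((r : ℤ) + a * n r) ^ 2
      - ∑ r ∈ range a, (r : ℤ) ^ 2 - a ^ 2 * S.card := by
  have h := sum_runner ha n S hS (fun _ => 1)
  simp at h
  rw [sum_runner ha n S hS (fun x => (x : ℤ)), h, mul_sum, mul_sum, ← sum_sub_distrib,
    ← sum_sub_distrib]
  refine sum_congr rfl fun r _ => ?_
  push_cast
  rw [sum_add_distrib, ← mul_sum]
  simp only [sum_const, card_range, nsmul_eq_mul]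
  linear_combination (a : ℤ) ^ 2 * sum_id (n r)

lemma dsize_formula {a : ℕ} (ha : 0 < a) (n : ℕ → ℕ) (S : Finset ℕ)
    (hS : ∀ x, x ∈ S ↔ x / a < n (x % a)) :
    6 * (2 * a * ∑ r ∈ range a, ((r : ℤ) + a * n r) ^ 2
      - 2 * (∑ r ∈ range a, ((r : ℤ) + a * n r)) ^ 2)
      = 12 * a ^ 2 * dsize S + a ^ 2 * (a ^ 2 - 1) := by
  have h1 := runner_card ha n S hS
  have h2 := runner_sum ha n S hS
  have h3 := sum_sq a
  unfold dsize
  set F := ∑ r ∈ range a, ((r : ℤ) + a * n r)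
  set G := ∑ r ∈ range a, ((r : ℤ) + a * n r) ^ 2
  set Q := ∑ r ∈ range a, (r : ℤ) ^ 2
  set k : ℤ := (S.card : ℤ)
  set T := ∑ x ∈ S, (x : ℤ)
  linear_combination (-12 * (a : ℤ)) * h2 + 2 * (a : ℤ) * h3
    - 3 * (2 * F + (a * (a - 1) + 2 * a * k)) * h1

lemma sum_reindex {a b : ℕ} (ha : 0 < a) (hab : Nat.Coprime a b) (φ : ℕ → ℤ) :
    ∑ j ∈ range a, φ (j * b % a) = ∑ r ∈ range a, φ r := by
  have hinj : Set.InjOn (fun j => j * b % a) (range a : Set ℕ) := by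
    intro i hi j hj e
    simp only [coe_range, Set.mem_Iio] at hi hj
    have e' : i * b ≡ j * b [MOD a] := e
    have := Nat.ModEq.cancel_right_of_coprime hab e'
    exact Nat.ModEq.eq_of_lt_of_lt this hi hj
  have himg : (range a).image (fun j => j * b % a) = range a := by
    apply eq_of_subset_of_card_le
    · intro x hx
      obtain ⟨j, _, rfl⟩ := mem_image.1 hx
      exact mem_range.2 (Nat.mod_lt _ ha)
    · rw [card_image_of_injOn hinj]
  conv_rhs => rw [← himg]
  rw [sum_image hinj]

/-- closed under subtracting `a` -/
def Closed (S : Finset ℕ) (a : ℕ) : Prop := ∀ x, x + a ∈ S → x ∈ S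

lemma Closed.mul {S : Finset ℕ} {a : ℕ} (h : Closed S a) (m : ℕ) :
    ∀ x, x + a * m ∈ S → x ∈ S := by
  induction m with
  | zero => intro x hx; simpa using hx
  | succ m ih => intro x hx; exact ih x (h _ (by rwa [add_assoc, ← Nat.mul_succ]))

lemma exists_runner {a : ℕ} (ha : 0 < a) (S : Finset ℕ) (h : Closed S a) :
    ∃ n : ℕ → ℕ, ∀ x, x ∈ S ↔ x / a < n (x % a) := by
  have hex : ∀ r, ∃ t, r + a * t ∉ S := by
    intro r
    by_contra! hc
    have := (Set.infinite_of_injective_forall_mem (f := fun t => r + a * t)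
      (s := (S : Set ℕ)) (fun s t e => by
        simp only at e
        exact Nat.eq_of_mul_eq_mul_left ha (by omega)) hc)
    exact this S.finite_toSet
  classical
  refine ⟨fun r => Nat.find (hex r), fun x => ?_⟩
  constructor
  · intro hx
    by_contra! hlt
    have hn := Nat.find_spec (hex (x % a))
    obtain ⟨m, hm⟩ := Nat.exists_eq_add_of_le hlt
    apply hn
    apply h.mul m
    rwa [add_assoc, ← mul_add, ← hm, Nat.mod_add_div]
  · intro hx
    have := Nat.find_min (hex (x % a)) hx
    rwa [not_not, Nat.mod_add_div] at this

lemma dsize_le {a b : ℕ} (ha : 0 < a) (hab : Nat.Coprime a b) (S : Finset ℕ)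
    (hSa : Closed S a) (hSb : Closed S b) :
    12 * dsize S ≤ (a ^ 2 - 1) * (b ^ 2 - 1) := by
  obtain ⟨n, hn⟩ := exists_runner ha S hSa
  have h1 := dsize_formula ha n S hn
  rw [← sum_reindex ha hab (fun r => (r : ℤ) + a * n r),
    ← sum_reindex ha hab (fun r => ((r : ℤ) + a * n r) ^ 2)] at h1
  have h2 := var_bound a b (fun j => ((j * b % a : ℕ) : ℤ) + a * n (j * b % a)) (by
    intro j
    have : (j + a) * b % a = j * b % a := by rw [add_mul, Nat.add_mul_mod_self_left]
    simp only [this]) (by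
    intro j
    set r := j * b % a with hr
    have hx : r + a * n r ∉ S := by
      rw [hn, Nat.add_mul_div_left _ _ ha, Nat.add_mul_mod_self_left, hr, Nat.mod_mod]
      have := Nat.div_eq_of_lt (Nat.mod_lt (j * b) ha)
      rw [this]; simp
    have hy : r + a * n r + b ∉ S := fun hc => hx (hSb _ hc)
    have hm : (r + a * n r + b) % a = (j + 1) * b % a := by
      rw [add_mul, one_mul, hr, Nat.add_mod, Nat.add_mul_mod_self_left, Nat.mod_mod,
        ← Nat.add_mod]
    rw [hn, hm, not_lt] at hy
    have hd := Nat.mod_add_div (r + a * n r + b) a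
    rw [hm] at hd
    have := Nat.mul_le_mul_left a hy
    have : (j + 1) * b % a + a * n ((j + 1) * b % a) ≤ r + a * n r + b := by omega
    exact_mod_cast this)
  rw [h1] at h2
  have ha' : (0 : ℤ) < a ^ 2 := by positivity
  refine le_of_mul_le_mul_left ?_ ha'
  linarith

lemma exists_max {a b : ℕ} (ha : 0 < a) (hab : Nat.Coprime a b) :
    ∃ S : Finset ℕ, Closed S a ∧ Closed S b ∧ 12 * dsize S = (a ^ 2 - 1) * (b ^ 2 - 1) := by
  classical
  set S := (range (a * b)).filter (fun x => ¬ ∃ j < a, ∃ t, x = j * b + a * t) with hSdef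
  have surj : ∀ x, ∃ j < a, j * b % a = x % a := by
    intro x
    have := sum_reindex ha hab (fun r => if r = x % a then 1 else 0)
    rw [sum_ite_eq' (range a) (x % a), if_pos (mem_range.2 (Nat.mod_lt _ ha))] at this
    by_contra! hc
    rw [sum_eq_zero] at this
    · exact zero_ne_one this
    · intro j hj
      rw [if_neg (hc j (mem_range.1 hj))]
  have hS : ∀ x, x ∈ S ↔ ¬ ∃ j < a, ∃ t, x = j * b + a * t := by
    intro x
    rw [hSdef, mem_filter, mem_range]
    refine ⟨fun h => h.2, fun h => ⟨?_, h⟩⟩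
    by_contra! hx
    apply h
    obtain ⟨j, hj, e⟩ := surj x
    have hle : j * b ≤ x := (Nat.mul_le_mul_right b hj.le).trans hx
    obtain ⟨t, ht⟩ := (Nat.modEq_iff_dvd' hle).1 e
    exact ⟨j, hj, t, by omega⟩
  have hSa : Closed S a := by
    intro x hx
    rw [hS] at hx ⊢
    rintro ⟨j, hj, t, rfl⟩
    exact hx ⟨j, hj, t + 1, by ring⟩
  have hSb : Closed S b := by
    intro x hx
    rw [hS] at hx ⊢
    rintro ⟨j, hj, t, rfl⟩
    rcases Nat.lt_or_ge (j + 1) a with h | h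
    · exact hx ⟨j + 1, h, t, by ring⟩
    · have : j + 1 = a := by omega
      refine hx ⟨0, ha, t + b, ?_⟩
      rw [← this]; ring
  refine ⟨S, hSa, hSb, ?_⟩
  obtain ⟨n, hn⟩ := exists_runner ha S hSa
  have h1 := dsize_formula ha n S hn
  rw [← sum_reindex ha hab (fun r => (r : ℤ) + a * n r),
    ← sum_reindex ha hab (fun r => ((r : ℤ) + a * n r) ^ 2)] at h1
  have hval : ∀ j ∈ range a, ((j * b % a : ℕ) : ℤ) + a * n (j * b % a) = j * b := by
    intro j hj
    have hja := mem_range.1 hj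
    have h1 : j * b ∉ S := by rw [hS, not_not]; exact ⟨j, hja, 0, by ring⟩
    rw [hn, not_lt] at h1
    have h2 : ¬ (n (j * b % a) < j * b / a) := by
      intro hlt
      have hx : j * b % a + a * n (j * b % a) ∉ S := by
        rw [hn, Nat.add_mul_div_left _ _ ha, Nat.add_mul_mod_self_left, Nat.mod_mod,
          Nat.div_eq_of_lt (Nat.mod_lt (j * b) ha)]
        simp
      rw [hS, not_not] at hx
      obtain ⟨i, hi, t, e⟩ := hx
      have em := congrArg (· % a) e
      simp only [Nat.add_mul_mod_self_left, Nat.mod_mod] at em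
      have := Nat.ModEq.eq_of_lt_of_lt (Nat.ModEq.cancel_right_of_coprime hab em) hja hi
      subst this
      have := Nat.mod_add_div (j * b) a
      have := Nat.mul_lt_mul_of_pos_left hlt ha
      omega
    have h3 : n (j * b % a) = j * b / a := by omega
    rw [h3]
    exact_mod_cast Nat.mod_add_div (j * b) a
  have hval2 : ∀ j ∈ range a, (((j * b % a : ℕ) : ℤ) + a * n (j * b % a)) ^ 2
      = (j : ℤ) ^ 2 * (b : ℤ) ^ 2 := by
    intro j hj
    rw [hval j hj, mul_pow]
  rw [sum_congr rfl hval, sum_congr rfl hval2, ← sum_mul, ← sum_mul] at h1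
  have ha' : (a : ℤ) ^ 2 ≠ 0 := by positivity
  apply mul_left_cancel₀ ha'
  have e1 := sum_id a
  have e2 := sum_sq a
  set P := ∑ r ∈ range a, (r : ℤ)
  set Q := ∑ r ∈ range a, (r : ℤ) ^ 2
  linear_combination -h1 + 2 * (a : ℤ) * b ^ 2 * e2 - 3 * (b : ℤ) ^ 2 * (2 * P + a * (a - 1)) * e1

/-! ### Young diagrams -/

/-- the beta set with `k` elements -/
def beta (μ : YoungDiagram) (k : ℕ) : Finset ℕ :=
  (range k).image (fun i => μ.rowLen i + (k - 1 - i))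

lemma beta_inj (μ : YoungDiagram) (k : ℕ) :
    Set.InjOn (fun i => μ.rowLen i + (k - 1 - i)) (range k : Set ℕ) := by
  intro i hi j hj e
  simp only [coe_range, Set.mem_Iio] at hi hj e
  rcases lt_trichotomy i j with h | h | h
  · have := μ.rowLen_anti i j h.le; omega
  · exact h
  · have := μ.rowLen_anti j i h.le; omega

lemma card_eq (μ : YoungDiagram) (k : ℕ) (hk : ∀ i, k ≤ i → μ.rowLen i = 0) :
    μ.card = ∑ i ∈ range k, μ.rowLen i := by
  have := card_eq_sum_card_fiberwise (s := μ.cells) (t := range k) (f := Prod.fst) (by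
    rintro ⟨i, j⟩ h
    simp only [mem_coe, YoungDiagram.mem_cells, coe_range, Set.mem_Iio] at h ⊢
    by_contra! hc
    have := hk i hc
    have := YoungDiagram.mem_iff_lt_rowLen.1 h
    omega)
  rw [YoungDiagram.card, this]
  exact sum_congr rfl fun i _ => by rw [YoungDiagram.rowLen_eq_card]; rfl

lemma dsize_beta (μ : YoungDiagram) (k : ℕ) (hk : ∀ i, k ≤ i → μ.rowLen i = 0) :
    dsize (beta μ k) = 2 * μ.card := by
  have h1 : (beta μ k).card = k := by rw [beta, card_image_of_injOn (beta_inj μ k), card_range]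
  rw [dsize, h1, beta, sum_image (beta_inj μ k), card_eq μ k hk]
  push_cast
  rw [sum_add_distrib, sum_range_reflect (fun i => (i : ℤ)) k, mul_add, sum_id]
  ring

lemma core_iff (μ : YoungDiagram) (k : ℕ) (hk : ∀ i, k ≤ i → μ.rowLen i = 0) {a : ℕ}
    (ha : 0 < a) : μ.IsCore a ↔ Closed (beta μ k) a := by
  have hm : ∀ i j, j < μ.rowLen i ↔ i < μ.colLen j := fun i j => by
    rw [← YoungDiagram.mem_iff_lt_rowLen, YoungDiagram.mem_iff_lt_colLen]
  have hck : ∀ j, μ.colLen j ≤ k := by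
    intro j
    by_contra! hc
    have := (hm k j).2 hc
    have := hk k le_rfl
    omega
  constructor
  · intro hc y hy
    by_contra hny
    obtain ⟨i, hi, e⟩ := mem_image.1 hy
    rw [mem_range] at hi
    have hex : ∃ m, k ≤ m ∨ μ.rowLen m + (k - 1 - m) ≤ y := ⟨k, Or.inl le_rfl⟩
    classical
    obtain ⟨m, hm1, hm2⟩ : ∃ m, (k ≤ m ∨ μ.rowLen m + (k - 1 - m) ≤ y) ∧
        ∀ l < m, ¬ (k ≤ l ∨ μ.rowLen l + (k - 1 - l) ≤ y) :=
      ⟨Nat.find hex, Nat.find_spec hex, fun l hl => Nat.find_min hex hl⟩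
    have hmk : m ≤ k := by
      by_contra! h
      exact hm2 k h (Or.inl le_rfl)
    have hlt : m < k → μ.rowLen m + (k - 1 - m) < y := by
      intro h
      rcases hm1 with h' | h'
      · omega
      · refine lt_of_le_of_ne h' fun e => hny ?_
        exact mem_image.2 ⟨m, mem_range.2 h, e⟩
    obtain ⟨j, hj⟩ : ∃ j, y + m = j + k := by
      refine ⟨y + m - k, ?_⟩
      rcases Nat.lt_or_ge m k with h | h
      · have := hlt h; omega
      · omega
    have hcol : μ.colLen j = m := by
      apply le_antisymm
      · by_contra! h
        have h1 := (hm m j).2 h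
        rcases Nat.lt_or_ge m k with h | h
        · have := hlt h; omega
        · have := hk m h; omega
      · rcases Nat.eq_zero_or_pos m with h | h
        · omega
        · have h1 := hm2 (m - 1) (by omega)
          have h2 := (hm (m - 1) j).1 (by omega)
          omega
    have him : i < m := by
      by_contra! h
      have h1 := μ.rowLen_anti m i h
      have := hlt (by omega)
      omega
    have hmem : (i, j) ∈ μ := YoungDiagram.mem_iff_lt_colLen.2 (by omega)
    apply hc i j hmem
    have h3 := YoungDiagram.mem_iff_lt_rowLen.1 hmem
    have : μ.hookLength i j = a := by
      unfold YoungDiagram.hookLength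
      omega
    rw [this]
  · rintro hc i j hmem ⟨m, hd⟩
    have h1 := YoungDiagram.mem_iff_lt_rowLen.1 hmem
    have h2 := YoungDiagram.mem_iff_lt_colLen.1 hmem
    have h3 := hck j
    unfold YoungDiagram.hookLength at hd
    have h4 : (j + k - μ.colLen j) + a * m ∈ beta μ k := by
      refine mem_image.2 ⟨i, mem_range.2 (by omega), ?_⟩
      rw [← hd]; omega
    obtain ⟨l, hl, e⟩ := mem_image.1 (hc.mul m _ h4)
    rw [mem_range] at hl
    have := hm l j
    by_cases h : l < μ.colLen j
    · have := this.2 h; omega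
    · have : ¬ j < μ.rowLen l := fun h' => h (this.1 h')
      omega

lemma exists_diagram (S : Finset ℕ) :
    ∃ (μ : YoungDiagram) (k : ℕ), (∀ i, k ≤ i → μ.rowLen i = 0) ∧ beta μ k = S := by
  classical
  set k := S.card with hkdef
  have hfin : ({x | x ∈ S} : Set ℕ).Finite := S.finite_toSet
  have hcard : hfin.toFinset.card = k := by
    rw [hkdef]; congr 1; ext x; simp
  set ν : ℕ → ℕ := Nat.nth (· ∈ S) with hν
  have hmem : ∀ i < k, ν i ∈ S := fun i hi =>
    Nat.nth_mem_of_lt_card hfin (by rw [hcard]; exact hi)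
  have hmono : ∀ i j, i < j → j < k → ν i < ν j := fun i j h hj =>
    Nat.nth_lt_nth_of_lt_card hfin h (by rw [hcard]; exact hj)
  have hge : ∀ i < k, i ≤ ν i := by
    intro i
    induction i with
    | zero => intro _; exact Nat.zero_le _
    | succ i ih =>
      intro h
      have := hmono i (i + 1) (by omega) h
      have := ih (by omega)
      omega
  have hdiff : ∀ d i, i + d < k → ν i + d ≤ ν (i + d) := by
    intro d
    induction d with
    | zero => intro i _; simp
    | succ d ih =>
      intro i h
      have h1 := ih i (by omega)
      have h2 := hmono (i + d) (i + (d + 1)) (by omega) h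
      omega
  let ρ : ℕ → ℕ := fun i => if i < k then ν (k - 1 - i) - (k - 1 - i) else 0
  have hρ : ∀ i j, i ≤ j → ρ j ≤ ρ i := by
    intro i j hij
    simp only [ρ]
    split_ifs with h1 h2
    · have h3 := hdiff (j - i) (k - 1 - j) (by omega)
      rw [show k - 1 - j + (j - i) = k - 1 - i by omega] at h3
      omega
    · omega
    · omega
    · omega
  let μ : YoungDiagram :=
    { cells := (range k ×ˢ range (ρ 0)).filter (fun p => p.2 < ρ p.1)
      isLowerSet := by
        rintro ⟨i, j⟩ ⟨i', j'⟩ hle h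
        simp only [coe_filter, mem_product, mem_range, Set.mem_ofPred_eq] at h ⊢
        obtain ⟨h1, h2⟩ := Prod.mk_le_mk.1 hle
        have := hρ i' i h1
        omega }
  have hrow : ∀ i, μ.rowLen i = ρ i := by
    intro i
    have : ∀ j, j < μ.rowLen i ↔ j < ρ i := by
      intro j
      rw [← YoungDiagram.mem_iff_lt_rowLen, ← YoungDiagram.mem_cells]
      simp only [μ, mem_filter, mem_product, mem_range]
      refine ⟨fun h => h.2, fun h => ⟨⟨?_, lt_of_lt_of_le h (hρ 0 i (Nat.zero_le _))⟩, h⟩⟩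
      by_contra hc
      simp only [ρ, if_neg hc] at h
      omega
    have h1 := this (ρ i)
    have h2 := this (μ.rowLen i)
    omega
  have hk0 : ∀ i, k ≤ i → μ.rowLen i = 0 := by
    intro i hi
    rw [hrow]; simp only [ρ]; rw [if_neg (by omega)]
  refine ⟨μ, k, hk0, ?_⟩
  apply eq_of_subset_of_card_le
  · intro x hx
    obtain ⟨i, hi, rfl⟩ := mem_image.1 hx
    rw [mem_range] at hi
    have h1 := hge (k - 1 - i) (by omega)
    have h2 : μ.rowLen i + (k - 1 - i) = ν (k - 1 - i) := by
      rw [hrow]; simp only [ρ]; rw [if_pos hi]; omega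
    rw [h2]
    exact hmem _ (by omega)
  · rw [beta, card_image_of_injOn (beta_inj μ k), card_range]

end SimCore

/-- Olsson–Stanton: the maximum number of boxes of an `(a,b)`-core is
`(a^2-1)(b^2-1)/24`, which is a (nonnegative) integer. -/
theorem max_size_simultaneous_cores (a b : ℕ) (ha : 0 < a) (hb : 0 < b)
    (hab : Nat.Coprime a b) :
    IsGreatest (YoungDiagram.card '' {μ : YoungDiagram | μ.IsCore a ∧ μ.IsCore b})
      ((a ^ 2 - 1) * (b ^ 2 - 1) / 24) ∧ 24 ∣ (a ^ 2 - 1) * (b ^ 2 - 1) := by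
  have hcast : (((a ^ 2 - 1) * (b ^ 2 - 1) : ℕ) : ℤ) = ((a : ℤ) ^ 2 - 1) * ((b : ℤ) ^ 2 - 1) := by
    rw [Nat.cast_mul, Nat.cast_sub (Nat.one_le_pow _ _ ha), Nat.cast_sub (Nat.one_le_pow _ _ hb)]
    push_cast; ring
  obtain ⟨S, hSa, hSb, hS⟩ := SimCore.exists_max ha hab
  obtain ⟨μ, k, hk, rfl⟩ := SimCore.exists_diagram S
  rw [SimCore.dsize_beta μ k hk, ← hcast] at hS
  have hμ : (a ^ 2 - 1) * (b ^ 2 - 1) = 24 * μ.card := by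
    omega
  refine ⟨⟨⟨μ, ⟨(SimCore.core_iff μ k hk ha).2 hSa, (SimCore.core_iff μ k hk hb).2 hSb⟩, ?_⟩, ?_⟩,
    ⟨_, hμ⟩⟩
  · rw [hμ]; omega
  · rintro _ ⟨lam, ⟨h1, h2⟩, rfl⟩
    have hk' : ∀ i, lam.colLen 0 ≤ i → lam.rowLen i = 0 := by
      intro i hi
      by_contra hc
      have := YoungDiagram.mem_iff_lt_colLen.1
        (YoungDiagram.mem_iff_lt_rowLen.2 (Nat.pos_of_ne_zero hc))
      omega
    have := SimCore.dsize_le ha hab _ ((SimCore.core_iff lam _ hk' ha).1 h1)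
      ((SimCore.core_iff lam _ hk' hb).1 h2)
    rw [SimCore.dsize_beta lam _ hk', ← hcast] at this
    omega
end

section
/- For coprime positive integers a and b, the average number of boxes over all simultaneous (a,b)-cores equals (a-1)(b-1)(a+b+1)/24; equivalently, the sum of the sizes of all (a,b)-cores equals (1/(a+b)) * binomial(a+b,b) * (a-1)(b-1)(a+b+1)/24. -/
namespace ECore
open Finset

lemma polya {ι : Type*} [Fintype ι] [DecidableEq ι] (b : ℕ) (φ : (ι → ℕ) → ℚ) :
    ((b : ℚ) + 1) * ∑ w ∈ piAntidiag (univ : Finset ι) (b + 1), φ w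
      = ∑ z ∈ piAntidiag (univ : Finset ι) b, ∑ j, ((z j : ℚ) + 1) * φ (z + Pi.single j 1) := by
  have h1 : ((b : ℚ) + 1) * ∑ w ∈ piAntidiag (univ : Finset ι) (b + 1), φ w
      = ∑ w ∈ piAntidiag (univ : Finset ι) (b + 1), ∑ j, (w j : ℚ) * φ w := by
    rw [mul_sum]
    refine sum_congr rfl fun w hw => ?_
    rw [← sum_mul]
    have : ∑ j, w j = b + 1 := (mem_piAntidiag.1 hw).1
    have h2 : ∑ j, (w j : ℚ) = (b : ℚ) + 1 := by exact_mod_cast this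
    rw [h2]
  rw [h1, sum_comm, sum_comm (s := piAntidiag univ b)]
  refine sum_congr rfl fun j _ => ?_
  symm
  have h3 : ∑ w ∈ piAntidiag (univ : Finset ι) (b + 1), (w j : ℚ) * φ w
      = ∑ w ∈ (piAntidiag (univ : Finset ι) (b + 1)).filter (fun w => w j ≠ 0), (w j : ℚ) * φ w := by
    rw [sum_filter]
    refine sum_congr rfl fun w _ => ?_
    by_cases h : w j = 0 <;> simp [h]
  rw [h3]
  refine sum_bij (fun z _ => z + Pi.single j 1) ?_ ?_ ?_ ?_
  · intro z hz
    have : ∑ j, z j = b := (mem_piAntidiag.1 hz).1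
    simp [mem_piAntidiag, sum_add_distrib, this]
  · intro z _ z' _ h
    exact add_right_cancel h
  · intro w hw
    rw [mem_filter, mem_piAntidiag] at hw
    obtain ⟨⟨hw, -⟩, hj⟩ := hw
    have hle : w - Pi.single j 1 + Pi.single j 1 = w := by
      ext k
      by_cases hk : k = j
      · subst hk; simp; omega
      · simp [hk]
    refine ⟨w - Pi.single j 1, ?_, hle⟩
    rw [mem_piAntidiag]
    refine ⟨?_, by simp⟩
    rw [← hle] at hw
    simp [sum_add_distrib] at hw
    simpa using hw
  · intro z _
    simp

/-- the number of weak compositions -/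
def T0 (ι : Type*) [Fintype ι] [DecidableEq ι] (b : ℕ) : ℚ := ((piAntidiag (univ : Finset ι) b).card : ℚ)

lemma zsum {ι : Type*} [Fintype ι] [DecidableEq ι] {b : ℕ} {z : ι → ℕ}
    (hz : z ∈ piAntidiag (univ : Finset ι) b) : ∑ j, (z j : ℚ) = b := by
  have : ∑ j, z j = b := (mem_piAntidiag.1 hz).1
  exact_mod_cast this

lemma T0_succ (ι : Type*) [Fintype ι] [DecidableEq ι] (b : ℕ) :
    ((b : ℚ) + 1) * T0 ι (b + 1) = (b + Fintype.card ι) * T0 ι b := by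
  have h := polya (ι := ι) b (fun _ => 1)
  simp only [sum_const, nsmul_eq_mul, mul_one] at h
  rw [T0, h, sum_congr rfl (g := fun _ => (b : ℚ) + Fintype.card ι)]
  · simp [T0]; ring
  · intro z hz
    rw [sum_add_distrib, zsum hz]; simp

lemma M1 (ι : Type*) [Fintype ι] [DecidableEq ι] [Nonempty ι] (b : ℕ) (i : ι) :
    ∑ z ∈ piAntidiag (univ : Finset ι) b, (z i : ℚ) = b / Fintype.card ι * T0 ι b := by
  have hc : (0 : ℚ) < Fintype.card ι := by exact_mod_cast Fintype.card_pos
  induction b with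
  | zero => simp [T0]
  | succ b ih =>
    have h := polya (ι := ι) b (fun w => (w i : ℚ))
    have h2 : ∀ z ∈ piAntidiag (univ : Finset ι) b,
        ∑ j, ((z j : ℚ) + 1) * (((z + Pi.single j 1 : ι → ℕ) i : ℕ) : ℚ)
        = (b + Fintype.card ι + 1) * z i + 1 := by
      intro z hz
      have : ∀ j, ((z j : ℚ) + 1) * (((z + Pi.single j 1 : ι → ℕ) i : ℕ) : ℚ)
          = z j * z i + z i + (if i = j then (z j + 1 : ℚ) else 0) := by
        intro j
        by_cases hj : i = j
        · subst hj; simp; ring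
        · simp [hj]; ring
      simp_rw [this, sum_add_distrib, ← sum_mul, zsum hz]
      simp; ring
    rw [sum_congr rfl h2, sum_add_distrib, ← mul_sum, ih] at h
    have h3 := T0_succ ι b
    have hb : ((b : ℚ) + 1) ≠ 0 := by positivity
    apply mul_left_cancel₀ hb
    rw [h]
    have h4 : T0 ι (b + 1) = (b + Fintype.card ι) * T0 ι b / (b + 1) := by
      field_simp; linarith
    rw [h4]
    simp only [sum_const, nsmul_eq_mul, mul_one]
    rw [← T0]
    push_cast
    field_simp
    ring

lemma M2 (ι : Type*) [Fintype ι] [DecidableEq ι] [Nonempty ι] (b : ℕ) (i l : ι) :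
    ∑ z ∈ piAntidiag (univ : Finset ι) b, (z i : ℚ) * z l =
      (b * (b - 1) / (Fintype.card ι * (Fintype.card ι + 1)) +
        if i = l then
        (b * (b - 1) / (Fintype.card ι * (Fintype.card ι + 1)) + b / Fintype.card ι : ℚ) else 0)
       * T0 ι b := by
  have hc : (0 : ℚ) < Fintype.card ι := by exact_mod_cast Fintype.card_pos
  induction b with
  | zero => simp [T0]
  | succ b ih =>
    have h := polya (ι := ι) b (fun w => (w i : ℚ) * w l)
    have h2 : ∀ z ∈ piAntidiag (univ : Finset ι) b,
        ∑ j, ((z j : ℚ) + 1) * ((((z + Pi.single j 1 : ι → ℕ) i : ℕ) : ℚ) * (((z + Pi.single j 1 : ι → ℕ) l : ℕ) : ℚ))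
        = (b + Fintype.card ι + 2) * (z i * z l) + z i + z l + if i = l then (z i + 1 : ℚ) else 0 := by
      intro z hz
      have : ∀ j, ((z j : ℚ) + 1) * ((((z + Pi.single j 1 : ι → ℕ) i : ℕ) : ℚ) * (((z + Pi.single j 1 : ι → ℕ) l : ℕ) : ℚ))
          = z j * (z i * z l) + z i * z l + (if i = j then (z i + 1 : ℚ) * z l else 0)
            + (if l = j then (z l + 1 : ℚ) * z i else 0)
            + (if i = j then (if i = l then (z i + 1 : ℚ) else 0) else 0) := by
        intro j
        by_cases hj : i = j
        · subst hj
          by_cases hl : l = i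
          · subst hl; simp; ring
          · simp [hl, Ne.symm hl]; ring
        · by_cases hl : l = j
          · subst hl; simp [hj]; ring
          · simp [hj, hl]; ring
      simp_rw [this, sum_add_distrib, ← sum_mul, zsum hz]
      simp; ring
    rw [sum_congr rfl h2, sum_add_distrib, sum_add_distrib, sum_add_distrib, ← mul_sum, ih, M1, M1] at h
    have h3 := T0_succ ι b
    have hb : ((b : ℚ) + 1) ≠ 0 := by positivity
    apply mul_left_cancel₀ hb
    rw [h]
    have h4 : T0 ι (b + 1) = (b + Fintype.card ι) * T0 ι b / (b + 1) := by
      field_simp; linarith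
    rw [h4]
    split_ifs with hil
    · rw [sum_add_distrib, M1]
      simp only [sum_const, nsmul_eq_mul, mul_one]
      rw [← T0]
      push_cast
      field_simp
      ring
    · simp only [sum_const, nsmul_eq_mul, mul_zero]
      push_cast
      field_simp
      ring

lemma T0_eq (ι : Type*) [Fintype ι] [DecidableEq ι] [Nonempty ι] (b : ℕ) :
    T0 ι b = Fintype.card ι / ((Fintype.card ι : ℚ) + b) * ((Fintype.card ι + b).choose b) := by
  have hc : (0 : ℚ) < Fintype.card ι := by exact_mod_cast Fintype.card_pos
  induction b with
  | zero => simp [T0]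
  | succ b ih =>
    have h := T0_succ ι b
    rw [ih] at h
    have hb : ((b : ℚ) + 1) ≠ 0 := by positivity
    apply mul_left_cancel₀ hb
    rw [h]
    have := Nat.add_one_mul_choose_eq (Fintype.card ι + b) b
    have h2 : ((Fintype.card ι : ℚ) + b + 1) * ((Fintype.card ι + b).choose b) = ((Fintype.card ι + (b+1)).choose (b+1)) * (b + 1) := by
      exact_mod_cast this
    push_cast
    have h3 : (((Fintype.card ι + (b+1)).choose (b+1) : ℕ) : ℚ) = ((Fintype.card ι : ℚ) + b + 1) * ((Fintype.card ι + b).choose b) / (b + 1) := by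
      field_simp; linarith
    rw [h3]
    field_simp
    ring
end ECore
namespace ECore
open Finset

/-- entry of the beta set (increasing in `k`) -/
def ent (μ : YoungDiagram) (k : ℕ) : ℕ := μ.rowLen (μ.colLen 0 - 1 - k) + k

/-- beta set of a Young diagram (first column hook lengths) -/
def bset (μ : YoungDiagram) : Finset ℕ := (range (μ.colLen 0)).image (ent μ)

lemma ent_lt (μ : YoungDiagram) {k l : ℕ} (h : k < l) : ent μ k < ent μ l := by
  unfold ent
  have := μ.rowLen_anti (μ.colLen 0 - 1 - l) (μ.colLen 0 - 1 - k) (by omega)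
  omega

lemma ent_mono (μ : YoungDiagram) : StrictMono (ent μ) := fun _ _ h => ent_lt μ h

lemma card_bset (μ : YoungDiagram) : (bset μ).card = μ.colLen 0 := by
  rw [bset, card_image_of_injective _ (ent_mono μ).injective, card_range]

lemma mem_bset (μ : YoungDiagram) (x : ℕ) :
    x ∈ bset μ ↔ ∃ i, i < μ.colLen 0 ∧ μ.rowLen i + μ.colLen 0 = x + i + 1 := by
  simp only [bset, mem_image, mem_range, ent]
  constructor
  · rintro ⟨k, hk, rfl⟩
    exact ⟨μ.colLen 0 - 1 - k, by omega, by omega⟩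
  · rintro ⟨i, hi, h⟩
    refine ⟨μ.colLen 0 - 1 - i, by omega, ?_⟩
    have : μ.colLen 0 - 1 - (μ.colLen 0 - 1 - i) = i := by omega
    rw [this]; omega

lemma lt_iff (μ : YoungDiagram) (i j : ℕ) : i < μ.colLen j ↔ j < μ.rowLen i := by
  rw [← YoungDiagram.mem_iff_lt_colLen, YoungDiagram.mem_iff_lt_rowLen]

lemma zero_notMem_bset (μ : YoungDiagram) : 0 ∉ bset μ := by
  rw [mem_bset]
  rintro ⟨i, hi, h⟩
  have := (lt_iff μ i 0).1 hi
  omega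

lemma compl_bset (μ : YoungDiagram) (y : ℕ) (hy : y ∉ bset μ) :
    ∃ j, y + μ.colLen j = j + μ.colLen 0 := by
  classical
  have hex : ∃ i, μ.rowLen i + μ.colLen 0 ≤ y + i := by
    refine ⟨μ.colLen 0, ?_⟩
    have := (lt_iff μ (μ.colLen 0) 0).not.1 (by omega)
    omega
  set i := Nat.find hex with hi
  have h1 := Nat.find_spec hex
  rw [← hi] at h1
  have h2 : ∀ i' < i, y + i' < μ.rowLen i' + μ.colLen 0 := fun i' h => by
    have := Nat.find_min hex h; omega
  have hin : i ≤ μ.colLen 0 := by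
    apply Nat.find_min'
    have := (lt_iff μ (μ.colLen 0) 0).not.1 (by omega)
    omega
  have hle : μ.colLen 0 ≤ y + i := by omega
  refine ⟨y + i - μ.colLen 0, ?_⟩
  have hc : μ.colLen (y + i - μ.colLen 0) = i := by
    apply le_antisymm
    · by_contra h
      push Not at h
      rw [lt_iff] at h
      omega
    · by_contra h
      push Not at h
      have h3 := h2 (i - 1) (by omega)
      have h4 : ¬ (i - 1 < μ.colLen (y + i - μ.colLen 0)) := by omega
      rw [lt_iff] at h4
      apply hy
      rw [mem_bset]
      exact ⟨i - 1, by omega, by omega⟩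
  rw [hc]; omega

lemma hook_eq (μ : YoungDiagram) (i j : ℕ) (h : (i, j) ∈ μ) :
    μ.hookLength i j + i + j + 1 = μ.rowLen i + μ.colLen j := by
  have h1 := YoungDiagram.mem_iff_lt_rowLen.1 h
  have h2 := YoungDiagram.mem_iff_lt_colLen.1 h
  unfold YoungDiagram.hookLength
  omega

lemma descend {X : Finset ℕ} {a : ℕ} (hX : ∀ x ∈ X, a ≤ x → x - a ∈ X) (k x : ℕ)
    (h : x + a * k ∈ X) : x ∈ X := by
  induction k with
  | zero => simpa using h
  | succ k ih =>
    apply ih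
    have := hX _ h (by rw [mul_add]; omega)
    have e : x + a * (k + 1) - a = x + a * k := by rw [mul_add]; omega
    rwa [e] at this

lemma core_iff (μ : YoungDiagram) (a : ℕ) (ha : 0 < a) :
    μ.IsCore a ↔ ∀ x ∈ bset μ, a ≤ x → x - a ∈ bset μ := by
  constructor
  · intro h x hx hax
    by_contra hn
    obtain ⟨j, hj⟩ := compl_bset μ _ hn
    obtain ⟨i, hi, hx⟩ := (mem_bset μ x).1 hx
    have hm : (i, j) ∈ μ := by
      by_contra hm
      have h1 := YoungDiagram.mem_iff_lt_rowLen.not.1 hm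
      have h2 := YoungDiagram.mem_iff_lt_colLen.not.1 hm
      omega
    refine h i j hm ?_
    have := hook_eq μ i j hm
    have : μ.hookLength i j = a := by omega
    rw [this]
  · intro h i j hm hd
    obtain ⟨k, hk⟩ := hd
    have h0 := hook_eq μ i j hm
    have h1 := YoungDiagram.mem_iff_lt_rowLen.1 hm
    have h2 := YoungDiagram.mem_iff_lt_colLen.1 hm
    have h3 : μ.colLen j ≤ μ.colLen 0 := μ.colLen_anti 0 j (by omega)
    have : j + μ.colLen 0 - μ.colLen j ∈ bset μ := by
      apply descend h k
      rw [mem_bset]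
      exact ⟨i, by omega, by omega⟩
    rw [mem_bset] at this
    obtain ⟨i', hi', e⟩ := this
    have := lt_iff μ i' j
    omega

lemma card_eq (μ : YoungDiagram) : μ.card = ∑ i ∈ range (μ.colLen 0), μ.rowLen i := by
  rw [YoungDiagram.card, card_eq_sum_card_fiberwise (f := Prod.fst) (t := range (μ.colLen 0))]
  · refine sum_congr rfl fun i _ => ?_
    rw [YoungDiagram.rowLen_eq_card]
    rfl
  · rintro ⟨i, j⟩ h
    have h : (i, j) ∈ μ := h
    have h2 := YoungDiagram.mem_iff_lt_colLen.1 h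
    have h3 : μ.colLen j ≤ μ.colLen 0 := μ.colLen_anti 0 j (by omega)
    simp; omega

/-- size of the partition with beta set `X` -/
def sz (X : Finset ℕ) : ℚ := ∑ x ∈ X, (x : ℚ) - (X.card : ℚ) * (X.card - 1) / 2

lemma sz_bset (μ : YoungDiagram) : (μ.card : ℚ) = sz (bset μ) := by
  rw [sz, card_bset, bset, sum_image (fun _ _ _ _ h => (ent_mono μ).injective h), card_eq]
  simp only [ent]
  push_cast
  rw [sum_add_distrib]
  have h1 := sum_range_reflect (fun i => (μ.rowLen i : ℚ)) (μ.colLen 0)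
  rw [h1]
  have h2 : ∀ n : ℕ, ∑ k ∈ range n, (k : ℚ) = (n : ℚ) * (n - 1) / 2 := by
    intro n
    induction n with
    | zero => simp
    | succ n ih => rw [sum_range_succ, ih]; push_cast; ring
  rw [h2]; ring

lemma bset_inj : Function.Injective bset := by
  intro μ ν h
  have hn : μ.colLen 0 = ν.colLen 0 := by rw [← card_bset, ← card_bset, h]
  have e1 := orderEmbOfFin_unique (s := bset μ) (card_bset μ) (f := fun k => ent μ k)
    (fun k => mem_image_of_mem _ (mem_range.2 k.2)) (fun _ _ h => ent_lt μ h)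
  have e2 := orderEmbOfFin_unique (s := bset μ) (card_bset μ) (f := fun k => ent ν k)
    (fun k => by rw [h]; exact mem_image_of_mem _ (mem_range.2 (hn ▸ k.2))) (fun _ _ h => ent_lt ν h)
  have hr : ∀ i, i < μ.colLen 0 → μ.rowLen i = ν.rowLen i := by
    intro i hi
    have := congrFun (e1.trans e2.symm) ⟨μ.colLen 0 - 1 - i, by omega⟩
    simp only [ent, ← hn] at this
    have e : μ.colLen 0 - 1 - (μ.colLen 0 - 1 - i) = i := by omega
    rw [e] at this
    omega
  ext ⟨i, j⟩
  change (i, j) ∈ μ ↔ (i, j) ∈ ν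
  rw [YoungDiagram.mem_iff_lt_rowLen, YoungDiagram.mem_iff_lt_rowLen]
  by_cases hi : i < μ.colLen 0
  · rw [hr i hi]
  · have h1 := lt_iff μ i 0
    have h2 := lt_iff ν i 0
    omega

lemma bset_surj (X : Finset ℕ) (h0 : 0 ∉ X) : ∃ μ, bset μ = X := by
  classical
  set n := X.card with hn
  set e := X.orderEmbOfFin hn.symm with he
  set E : ℕ → ℕ := fun k => if h : k < n then e ⟨k, h⟩ else X.sup id + k with hE
  have hem : ∀ k, k < n → E k ∈ X := by
    intro k hk
    simp only [hE, hk, dif_pos]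
    exact orderEmbOfFin_mem _ _ _
  have hstep : ∀ k l, k < l → l < n → E k < E l := by
    intro k l hkl hl
    simp only [hE, hl, hkl.trans hl, dif_pos]
    exact e.strictMono hkl
  have hgap : ∀ d k, k + d < n → E k + d ≤ E (k + d) := by
    intro d
    induction d with
    | zero => intro k _; simp
    | succ d ih =>
      intro k hk
      have h1 := ih k (by omega)
      have h2 := hstep (k + d) (k + (d + 1)) (by omega) hk
      omega
  have hpos : ∀ k, k < n → k < E k := by
    intro k hk
    have h1 := hgap k 0 (by omega)
    have h2 : E 0 ≠ 0 := fun h => h0 (h ▸ hem 0 (by omega))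
    simp only [Nat.zero_add] at h1
    omega
  have hsup : ∀ k, k < n → E k ≤ X.sup id := fun k hk => le_sup (f := id) (hem k hk)
  let μ : YoungDiagram :=
    { cells := ((range n) ×ˢ (range (X.sup id))).filter
        (fun p => p.2 + (n - 1 - p.1) < E (n - 1 - p.1))
      isLowerSet := by
        rintro ⟨i, j⟩ ⟨i', j'⟩ hle hm
        obtain ⟨h1, h2⟩ := Prod.mk_le_mk.1 hle
        simp only [coe_filter, mem_product, mem_range, Set.mem_ofPred_eq] at hm ⊢
        have h3 := hgap (i - i') (n - 1 - i) (by omega)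
        have h4 : n - 1 - i + (i - i') = n - 1 - i' := by omega
        rw [h4] at h3
        omega }
  have hmem : ∀ i j, (i, j) ∈ μ ↔ i < n ∧ j + (n - 1 - i) < E (n - 1 - i) := by
    intro i j
    change (i, j) ∈ (((range n) ×ˢ (range (X.sup id))).filter
        (fun p => p.2 + (n - 1 - p.1) < E (n - 1 - p.1))) ↔ _
    simp only [mem_filter, mem_product, mem_range]
    constructor
    · rintro ⟨⟨h1, h2⟩, h3⟩; exact ⟨h1, h3⟩
    · rintro ⟨h1, h3⟩
      have := hsup (n - 1 - i) (by omega)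
      exact ⟨⟨h1, by omega⟩, h3⟩
  have hcol : μ.colLen 0 = n := by
    have : ∀ i, i < μ.colLen 0 ↔ i < n := by
      intro i
      rw [← YoungDiagram.mem_iff_lt_colLen, hmem]
      constructor
      · exact fun h => h.1
      · intro h
        have := hpos (n - 1 - i) (by omega)
        exact ⟨h, by omega⟩
    have h1 := this n
    have h2 := this (μ.colLen 0)
    omega
  have hrow : ∀ k, k < n → ent μ k = E k := by
    intro k hk
    rw [ent, hcol]
    have : ∀ j, j < μ.rowLen (n - 1 - k) ↔ j + k < E k := by
      intro j
      have e : n - 1 - (n - 1 - k) = k := by omega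
      rw [← YoungDiagram.mem_iff_lt_rowLen, hmem, e]
      constructor
      · exact fun h => h.2
      · exact fun h => ⟨by omega, h⟩
    have h1 := this (μ.rowLen (n - 1 - k))
    have h2 := this (E k - k)
    have := hpos k hk
    omega
  refine ⟨μ, ?_⟩
  apply eq_of_subset_of_card_le
  · intro x hx
    rw [bset, mem_image] at hx
    obtain ⟨k, hk, rfl⟩ := hx
    rw [mem_range, hcol] at hk
    rw [hrow k hk]; exact hem k hk
  · rw [card_bset, hcol]

/-- beta sets of simultaneous cores -/
def SS (a b : ℕ) : Set (Finset ℕ) := {X | 0 ∉ X ∧ (∀ x ∈ X, a ≤ x → x - a ∈ X) ∧ (∀ x ∈ X, b ≤ x → x - b ∈ X)}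

lemma finsum_cores (a b : ℕ) (ha : 0 < a) (hb : 0 < b) :
    ∑ᶠ μ ∈ {μ : YoungDiagram | μ.IsCore a ∧ μ.IsCore b}, (μ.card : ℚ) = ∑ᶠ X ∈ SS a b, sz X := by
  refine finsum_mem_eq_of_bijOn bset ⟨?_, bset_inj.injOn, ?_⟩ (fun μ _ => sz_bset μ)
  · rintro μ ⟨h1, h2⟩
    exact ⟨zero_notMem_bset μ, (core_iff μ a ha).1 h1, (core_iff μ b hb).1 h2⟩
  · rintro X ⟨h0, h1, h2⟩
    obtain ⟨μ, rfl⟩ := bset_surj X h0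
    exact ⟨μ, ⟨(core_iff μ a ha).2 h1, (core_iff μ b hb).2 h2⟩, rfl⟩
end ECore
namespace ECore
open Finset

/-- first-gap functions of simultaneous cores -/
def FF (a b : ℕ) : Set (ZMod a → ℕ) :=
  {f | f 0 = 0 ∧ (∀ i, (f i : ZMod a) = i) ∧ ∀ i, f (i + (b : ZMod a)) ≤ f i + b}

/-- the beta set of a first-gap function -/
def XX {a : ℕ} [NeZero a] (f : ZMod a → ℕ) : Finset ℕ :=
  (range (∑ i, f i)).filter (fun x => x < f (x : ZMod a))

lemma mem_XX {a : ℕ} [NeZero a] (f : ZMod a → ℕ) (x : ℕ) : x ∈ XX f ↔ x < f (x : ZMod a) := by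
  simp only [XX, mem_filter, mem_range, and_iff_right_iff_imp]
  intro h
  exact h.trans_le (single_le_sum (f := f) (fun _ _ => Nat.zero_le _) (mem_univ _))

lemma bijXX (a b : ℕ) [NeZero a] : Set.BijOn XX (FF a b) (SS a b) := by
  classical
  have ha : 0 < a := Nat.pos_of_ne_zero (NeZero.ne a)
  refine ⟨?_, ?_, ?_⟩
  · rintro f ⟨h0, h1, h2⟩
    refine ⟨?_, ?_, ?_⟩
    · rw [mem_XX]; simp [h0]
    · intro x hx hax
      rw [mem_XX] at hx ⊢
      rw [Nat.cast_sub hax]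
      simp only [CharP.cast_eq_zero, sub_zero]
      omega
    · intro x hx hbx
      rw [mem_XX] at hx ⊢
      have := h2 ((x - b : ℕ) : ZMod a)
      rw [← Nat.cast_add, Nat.sub_add_cancel hbx] at this
      omega
  · rintro f ⟨-, hf, -⟩ g ⟨-, hg, -⟩ h
    have key : ∀ f g : ZMod a → ℕ, (∀ i, (f i : ZMod a) = i) → XX f = XX g → ∀ i, g i ≤ f i := by
      intro f g hf h i
      have h1 := mem_XX f (f i)
      rw [h, mem_XX, hf] at h1
      omega
    funext i
    exact le_antisymm (key g f hg h.symm i) (key f g hf h i)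
  · rintro X ⟨h0, h1, h2⟩
    have hex : ∀ i : ZMod a, ∃ n : ℕ, (n : ZMod a) = i ∧ n ∉ X := by
      intro i
      refine ⟨i.val + a * (X.sup id + 1), by simp, ?_⟩
      intro h
      have := le_sup (f := id) h
      simp only [id] at this
      nlinarith
    let f : ZMod a → ℕ := fun i => Nat.find (hex i)
    have f1 : ∀ i, (f i : ZMod a) = i := fun i => (Nat.find_spec (hex i)).1
    have f2 : ∀ i, f i ∉ X := fun i => (Nat.find_spec (hex i)).2
    have f3 : ∀ (i : ZMod a) (n : ℕ), (n : ZMod a) = i → n ∉ X → f i ≤ n := fun i n h h' => Nat.find_min' (hex i) ⟨h, h'⟩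
    refine ⟨f, ⟨?_, f1, ?_⟩, ?_⟩
    · have := f3 0 0 (by simp) h0
      omega
    · intro i
      apply f3
      · simp [f1]
      · intro h
        have := h2 _ h (by omega)
        rw [Nat.add_sub_cancel] at this
        exact f2 i this
    · ext x
      rw [mem_XX]
      constructor
      · intro h
        by_contra hx
        have := f3 _ x rfl hx
        omega
      · intro hx
        by_contra h
        push Not at h
        have hm := f1 (x : ZMod a)
        rw [ZMod.natCast_eq_natCast_iff] at hm
        obtain ⟨k, hk⟩ := (Nat.modEq_iff_dvd' h).1 hm
        apply f2 x
        apply descend h1 k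
        rw [← hk]
        rwa [Nat.add_sub_cancel' h]

lemma sum_val {a : ℕ} [NeZero a] (ψ : ℕ → ℚ) : ∑ i : ZMod a, ψ i.val = ∑ k ∈ range a, ψ k := by
  obtain ⟨n, rfl⟩ := Nat.exists_eq_succ_of_ne_zero (NeZero.ne a)
  exact Fin.sum_univ_eq_sum_range ψ (n + 1)

lemma sum_XX {a : ℕ} [NeZero a] (f : ZMod a → ℕ) (hf : ∀ i, (f i : ZMod a) = i) (φ : ℕ → ℚ) :
    ∑ x ∈ XX f, φ x = ∑ i, ∑ t ∈ range (f i / a), φ (i.val + a * t) := by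
  have ha : 0 < a := Nat.pos_of_ne_zero (NeZero.ne a)
  rw [← sum_fiberwise (XX f) (fun x : ℕ => (x : ZMod a))]
  refine sum_congr rfl fun i _ => ?_
  have hfi : f i % a = i.val := by
    have := congrArg ZMod.val (hf i)
    rwa [ZMod.val_natCast] at this
  have hd := Nat.mod_add_div (f i) a
  have : (XX f).filter (fun x : ℕ => (x : ZMod a) = i) = (range (f i / a)).image (fun t => i.val + a * t) := by
    ext x
    simp only [mem_filter, mem_XX, mem_image, mem_range]
    constructor
    · rintro ⟨h1, rfl⟩
      refine ⟨x / a, ?_, ?_⟩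
      · rw [ZMod.val_natCast] at hfi
        have := Nat.mod_add_div x a
        by_contra h
        push Not at h
        have := Nat.mul_le_mul_left a h
        omega
      · rw [ZMod.val_natCast]; exact Nat.mod_add_div x a
    · rintro ⟨t, ht, rfl⟩
      have e : ((i.val + a * t : ℕ) : ZMod a) = i := by simp
      refine ⟨?_, e⟩
      rw [e, ← hd, hfi]
      have := Nat.mul_lt_mul_of_pos_left ht ha
      omega
  rw [this, sum_image]
  intro t _ s _ h
  simp only at h
  exact Nat.eq_of_mul_eq_mul_left ha (by omega)

lemma sz_XX {a : ℕ} [NeZero a] (f : ZMod a → ℕ) (hf : ∀ i, (f i : ZMod a) = i) :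
    sz (XX f) = (∑ i, (f i : ℚ) ^ 2) / (2 * a) - (∑ i, (f i : ℚ)) ^ 2 / (2 * a ^ 2) - ((a : ℚ) ^ 2 - 1) / 24 := by
  have ha : (0 : ℚ) < a := by exact_mod_cast Nat.pos_of_ne_zero (NeZero.ne a)
  have hm : ∀ i, ((f i / a : ℕ) : ℚ) = (f i - i.val) / a := by
    intro i
    have hfi : f i % a = i.val := by
      have := congrArg ZMod.val (hf i)
      rwa [ZMod.val_natCast] at this
    have hd := Nat.mod_add_div (f i) a
    rw [hfi] at hd
    have : (i.val : ℚ) + a * (f i / a : ℕ) = f i := by exact_mod_cast hd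
    field_simp; linarith
  have g1 : ∀ n : ℕ, ∑ k ∈ range n, (k : ℚ) = (n : ℚ) * (n - 1) / 2 := by
    intro n
    induction n with
    | zero => simp
    | succ n ih => rw [sum_range_succ, ih]; push_cast; ring
  have g2 : ∀ n : ℕ, ∑ k ∈ range n, (k : ℚ) ^ 2 = (n : ℚ) * (n - 1) * (2 * n - 1) / 6 := by
    intro n
    induction n with
    | zero => simp
    | succ n ih => rw [sum_range_succ, ih]; push_cast; ring
  have v1 : ∑ i : ZMod a, (i.val : ℚ) = (a : ℚ) * (a - 1) / 2 := by
    rw [sum_val (fun k => (k : ℚ)), g1]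
  have v2 : ∑ i : ZMod a, (i.val : ℚ) ^ 2 = (a : ℚ) * (a - 1) * (2 * a - 1) / 6 := by
    rw [sum_val (fun k => (k : ℚ) ^ 2), g2]
  have hcard : ((XX f).card : ℚ) = (∑ i, (f i : ℚ)) / a - ((a : ℚ) - 1) / 2 := by
    have := sum_XX f hf (fun _ => 1)
    simp only [sum_const, nsmul_eq_mul, mul_one, card_range] at this
    rw [this]
    simp_rw [hm]
    rw [← sum_div, sum_sub_distrib, v1]
    field_simp
  have hs : ∑ x ∈ XX f, (x : ℚ) = (∑ i, (f i : ℚ) ^ 2) / (2 * a) - (∑ i, (f i : ℚ)) / 2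
      - ((a : ℚ) - 1) * (2 * a - 1) / 12 + (a : ℚ) * (a - 1) / 4 := by
    rw [sum_XX f hf (fun x => (x : ℚ))]
    have : ∀ i : ZMod a, ∑ t ∈ range (f i / a), ((i.val + a * t : ℕ) : ℚ)
        = (f i : ℚ) ^ 2 / (2 * a) - (f i : ℚ) / 2 - (i.val : ℚ) ^ 2 / (2 * a) + (i.val : ℚ) / 2 := by
      intro i
      push_cast
      rw [sum_add_distrib, ← mul_sum, g1, sum_const, nsmul_eq_mul, card_range, hm]
      field_simp
      ring
    simp_rw [this]
    rw [sum_add_distrib, sum_sub_distrib, sum_sub_distrib, ← sum_div, ← sum_div, ← sum_div, ← sum_div, v1, v2]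
    field_simp
    ring
  rw [sz, hcard, hs]
  field_simp
  ring

lemma finsum_SS (a b : ℕ) [NeZero a] : ∑ᶠ X ∈ SS a b, sz X = ∑ᶠ f ∈ FF a b, sz (XX f) :=
  (finsum_mem_eq_of_bijOn XX (bijXX a b) (fun _ _ => rfl)).symm
end ECore
namespace ECore
open Finset

lemma gen {a b : ℕ} [NeZero a] (hab : Nat.Coprime a b) (i : ZMod a) : ∃ k : ℕ, k < a ∧ (k : ZMod a) * b = i := by
  have hu : (b : ZMod a) * (b : ZMod a)⁻¹ = 1 := ZMod.coe_mul_inv_eq_one b hab.symm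
  refine ⟨(i * (b : ZMod a)⁻¹).val, ZMod.val_lt _, ?_⟩
  rw [ZMod.natCast_zmod_val, mul_assoc, mul_comm (_⁻¹), hu, mul_one]

lemma gen_inj {a b : ℕ} [NeZero a] (hab : Nat.Coprime a b) {k l : ℕ} (hk : k < a) (hl : l < a)
    (h : (k : ZMod a) * b = (l : ZMod a) * b) : k = l := by
  have hu : (b : ZMod a) * (b : ZMod a)⁻¹ = 1 := ZMod.coe_mul_inv_eq_one b hab.symm
  have h2 : (k : ZMod a) = l := by
    have := congrArg (· * (b : ZMod a)⁻¹) h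
    simpa only [mul_assoc, hu, mul_one] using this
  rw [ZMod.natCast_eq_natCast_iff] at h2
  exact Nat.ModEq.eq_of_lt_of_lt h2 hk hl

lemma sum_gen {a b : ℕ} [NeZero a] (hab : Nat.Coprime a b) (φ : ZMod a → ℚ) (i : ZMod a) :
    ∑ m ∈ range a, φ (i + (m : ZMod a) * b) = ∑ j, φ j := by
  refine sum_bij (fun (m : ℕ) _ => i + (m : ZMod a) * b) (fun _ _ => mem_univ _) ?_ ?_ (fun _ _ => rfl)
  · intro k hk l hl h
    exact gen_inj hab (mem_range.1 hk) (mem_range.1 hl) (add_left_cancel h)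
  · intro j _
    obtain ⟨k, hk, e⟩ := gen hab (j - i)
    exact ⟨k, mem_range.2 hk, by rw [e]; ring⟩

/-- composition attached to a first-gap function and rotation -/
def comp {a : ℕ} (b : ℕ) (f : ZMod a → ℕ) (r : ZMod a) : ZMod a → ℕ :=
  fun i => (f (i + r) + b - f (i + r + (b : ZMod a))) / a

lemma comp_spec {a b : ℕ} [NeZero a] {f : ZMod a → ℕ} (hf : f ∈ FF a b) (r i : ZMod a) :
    (f (i + r + (b : ZMod a)) : ℤ) = f (i + r) + b - a * comp b f r i := by
  obtain ⟨h0, h1, h2⟩ := hf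
  have h3 := h2 (i + r)
  have hd : a ∣ f (i + r) + b - f (i + r + (b : ZMod a)) := by
    rw [← ZMod.natCast_eq_zero_iff, Nat.cast_sub h3]
    push_cast
    rw [h1, h1]; ring
  have h4 := Nat.mul_div_cancel' hd
  rw [← show comp b f r i = (f (i + r) + b - f (i + r + (b : ZMod a))) / a from rfl] at h4
  zify [h3] at h4
  linarith

lemma comp_path {a b : ℕ} [NeZero a] {f : ZMod a → ℕ} (hf : f ∈ FF a b) (r i : ZMod a) (m : ℕ) :
    (f (i + r + (m : ZMod a) * b) : ℤ) = f (i + r) + m * b - a * ∑ k ∈ range m, (comp b f r (i + (k : ZMod a) * b) : ℤ) := by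
  induction m with
  | zero => simp
  | succ m ih =>
    have h := comp_spec hf r (i + (m : ZMod a) * b)
    have e : i + (m : ZMod a) * b + r = i + r + (m : ZMod a) * b := by ring
    have e2 : i + r + ((m + 1 : ℕ) : ZMod a) * b = i + r + (m : ZMod a) * b + b := by push_cast; ring
    rw [e] at h
    rw [e2, h, ih, sum_range_succ]
    push_cast
    ring

lemma comp_mem {a b : ℕ} [NeZero a] {f : ZMod a → ℕ} (hf : f ∈ FF a b) (r : ZMod a) :
    comp b f r ∈ piAntidiag (univ : Finset (ZMod a)) b := by
  have ha : (0 : ℤ) < a := by exact_mod_cast Nat.pos_of_ne_zero (NeZero.ne a)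
  rw [mem_piAntidiag]
  refine ⟨?_, fun _ _ => mem_univ _⟩
  have h := sum_congr (rfl : (univ : Finset (ZMod a)) = univ) (fun i _ => comp_spec hf r i)
  rw [sum_sub_distrib, sum_add_distrib, ← mul_sum] at h
  have e1 : ∑ i : ZMod a, (f (i + r + (b : ZMod a)) : ℤ) = ∑ i, (f i : ℤ) := by
    simp_rw [add_assoc]
    exact Equiv.sum_comp (Equiv.addRight (r + (b : ZMod a))) (fun i => (f i : ℤ))
  have e2 : ∑ i : ZMod a, (f (i + r) : ℤ) = ∑ i, (f i : ℤ) :=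
    Equiv.sum_comp (Equiv.addRight r) (fun i => (f i : ℤ))
  rw [e1, e2] at h
  simp only [sum_const, card_univ, ZMod.card, nsmul_eq_mul] at h
  have h3 : (a : ℤ) * ∑ i, (comp b f r i : ℤ) = a * b := by linarith
  have h4 := mul_left_cancel₀ ha.ne' h3
  exact_mod_cast h4

lemma comp_inj {a b : ℕ} [NeZero a] (hab : Nat.Coprime a b) {f g : ZMod a → ℕ} (hf : f ∈ FF a b)
    (hg : g ∈ FF a b) (r s : ZMod a) (h : comp b f r = comp b g s) : f = g ∧ r = s := by
  have key : ∀ i : ZMod a, (f (i + r) : ℤ) - f r = g (i + s) - g s := by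
    intro i
    obtain ⟨k, -, rfl⟩ := gen hab i
    have h1 := comp_path hf r 0 k
    have h2 := comp_path hg s 0 k
    rw [h] at h1
    simp only [zero_add] at h1 h2
    rw [add_comm _ r, add_comm _ s, h1, h2]
    ring
  have k1 := key (-r)
  have k2 := key (-s)
  simp only [neg_add_cancel, hf.1, hg.1] at k1 k2
  have heq : (f r : ℤ) = g s := by
    have := Int.natCast_nonneg (f (-s + r))
    have := Int.natCast_nonneg (g (-r + s))
    omega
  have hrs : r = s := by
    have : f r = g s := by exact_mod_cast heq
    have := congrArg (Nat.cast : ℕ → ZMod a) this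
    rwa [hf.2.1, hg.2.1] at this
  subst hrs
  refine ⟨?_, rfl⟩
  funext i
  have := key (i - r)
  rw [sub_add_cancel] at this
  omega

lemma comp_surj {a b : ℕ} [NeZero a] (hab : Nat.Coprime a b) (z : ZMod a → ℕ) (hz : ∑ i, z i = b) :
    ∃ f ∈ FF a b, ∃ r, comp b f r = z := by
  have ha : 0 < a := Nat.pos_of_ne_zero (NeZero.ne a)
  choose κ hκ hκb using gen (a := a) (b := b) hab
  let H : ℕ → ℤ := fun m => m * b - a * ∑ k ∈ range m, (z ((k : ZMod a) * b) : ℤ)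
  let h : ZMod a → ℤ := fun i => H (κ i)
  have hκ' : ∀ m, m < a → κ ((m : ZMod a) * b) = m := fun m hm => gen_inj hab (hκ _) hm (hκb _)
  have hHa : H a = 0 := by
    have hs := sum_gen hab (fun j => (z j : ℚ)) 0
    simp only [zero_add] at hs
    have hs2 : ∑ k ∈ range a, z ((k : ZMod a) * b) = b := by
      refine Eq.trans ?_ hz
      exact_mod_cast hs
    have hs3 : ∑ k ∈ range a, (z ((k : ZMod a) * b) : ℤ) = b := by exact_mod_cast hs2
    simp only [H]
    rw [hs3]; ring
  have hstep : ∀ i, h (i + (b : ZMod a)) = h i + b - a * z i := by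
    intro i
    have hH : H (κ i + 1) = h i + b - a * z i := by
      simp only [H, h]
      rw [sum_range_succ, hκb]
      push_cast; ring
    rw [← hH]
    by_cases hlt : κ i + 1 < a
    · have := hκ' _ hlt
      push_cast at this
      rw [add_mul, hκb, one_mul] at this
      simp only [h, this]
    · have e : κ i + 1 = a := by have := hκ i; omega
      have e2 : i + (b : ZMod a) = ((0 : ℕ) : ZMod a) * b := by
        have : ((κ i + 1 : ℕ) : ZMod a) * b = i + b := by push_cast; rw [add_mul, hκb, one_mul]
        rw [← this, e]; simp
      rw [e, hHa, e2]
      simp only [h]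
      rw [hκ' 0 ha]
      simp [H]
  have hmod : ∀ i, ((h i : ℤ) : ZMod a) = i := by
    intro i
    simp only [h, H]
    push_cast
    rw [hκb]; simp
  obtain ⟨i0, -, hmin⟩ := exists_min_image (univ : Finset (ZMod a)) h univ_nonempty
  let f : ZMod a → ℕ := fun i => (h (i + i0) - h i0).toNat
  have hf : ∀ i, (f i : ℤ) = h (i + i0) - h i0 := fun i =>
    Int.toNat_of_nonneg (by have := hmin (i + i0) (mem_univ _); omega)
  have hF : f ∈ FF a b := by
    refine ⟨?_, ?_, ?_⟩
    · simp [f]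
    · intro i
      have : ((f i : ℤ) : ZMod a) = i := by
        rw [hf]; push_cast; rw [hmod, hmod]; ring
      simpa using this
    · intro i
      zify
      rw [hf, hf, add_right_comm, hstep]
      have : (0 : ℤ) ≤ a * z (i + i0) := by positivity
      linarith
  refine ⟨f, hF, -i0, ?_⟩
  funext i
  have h1 := comp_spec hF (-i0) i
  rw [hf, hf] at h1
  have e1 : i + -i0 + (b : ZMod a) + i0 = i + b := by ring
  have e2 : i + -i0 + i0 = i := by ring
  rw [e1, e2, hstep] at h1
  have h2 : (a : ℤ) * z i = a * comp b f (-i0) i := by linarith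
  have h3 := mul_left_cancel₀ (by exact_mod_cast ha.ne') h2
  exact_mod_cast h3.symm

/-- the rotation-invariant quadratic form in terms of the composition -/
def QZ {a : ℕ} [NeZero a] (b : ℕ) (z : ZMod a → ℕ) : ℚ :=
  (∑ i : ZMod a, ∑ m ∈ range a, ((m : ℚ) * b - a * ∑ k ∈ range m, (z (i + (k : ZMod a) * b) : ℚ)) ^ 2) / (4 * a ^ 2)
    - ((a : ℚ) ^ 2 - 1) / 24

lemma sz_eq_QZ {a b : ℕ} [NeZero a] (hab : Nat.Coprime a b) {f : ZMod a → ℕ} (hf : f ∈ FF a b) (r : ZMod a) :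
    sz (XX f) = QZ b (comp b f r) := by
  have ha : (0 : ℚ) < a := by exact_mod_cast Nat.pos_of_ne_zero (NeZero.ne a)
  rw [sz_XX f hf.2.1, QZ]
  have h1 : ∀ (i : ZMod a) (m : ℕ), (m : ℚ) * b - a * ∑ k ∈ range m, (comp b f r (i + (k : ZMod a) * b) : ℚ)
      = (f (i + r + (m : ZMod a) * b) : ℚ) - f (i + r) := by
    intro i m
    have := comp_path hf r i m
    have h2 : (f (i + r + (m : ZMod a) * b) : ℚ) = f (i + r) + m * b - a * ∑ k ∈ range m, (comp b f r (i + (k : ZMod a) * b) : ℚ) := by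
      exact_mod_cast this
    rw [h2]; ring
  simp_rw [h1]
  have h2 : ∀ i : ZMod a, ∑ m ∈ range a, ((f (i + r + (m : ZMod a) * b) : ℚ) - f (i + r)) ^ 2
      = ∑ j, ((f j : ℚ) - f (i + r)) ^ 2 := fun i =>
    sum_gen hab (fun j => ((f j : ℚ) - f (i + r)) ^ 2) (i + r)
  simp_rw [h2]
  have h4 : ∑ i, ∑ j, ((f j : ℚ) - f (i + r)) ^ 2 = ∑ i, ∑ j, ((f j : ℚ) - f i) ^ 2 :=
    Equiv.sum_comp (Equiv.addRight r) (fun i => ∑ j, ((f j : ℚ) - f i) ^ 2)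
  rw [h4]
  have h3 : ∑ i, ∑ j, ((f j : ℚ) - f i) ^ 2 = 2 * a * ∑ i, (f i : ℚ) ^ 2 - 2 * (∑ i, (f i : ℚ)) ^ 2 := by
    simp_rw [sub_sq, sum_add_distrib, sum_sub_distrib, ← sum_mul, ← mul_sum]
    simp only [sum_const, card_univ, ZMod.card, nsmul_eq_mul]
    rw [← mul_sum]
    ring
  rw [h3]
  field_simp
  ring

lemma finite_FF (a b : ℕ) [NeZero a] (hab : Nat.Coprime a b) : (FF a b).Finite := by
  refine Set.Finite.of_finite_image (f := fun f => comp b f 0) ?_ ?_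
  · refine (piAntidiag (univ : Finset (ZMod a)) b).finite_toSet.subset ?_
    rintro _ ⟨f, hf, rfl⟩
    exact comp_mem hf 0
  · intro f hf g hg h
    exact (comp_inj hab hf hg 0 0 h).1

lemma finsum_FF (a b : ℕ) [NeZero a] (hab : Nat.Coprime a b) :
    (a : ℚ) * ∑ᶠ f ∈ FF a b, sz (XX f) = ∑ z ∈ piAntidiag (univ : Finset (ZMod a)) b, QZ b z := by
  rw [finsum_mem_eq_finite_toFinset_sum _ (finite_FF a b hab)]
  have : (a : ℚ) * ∑ f ∈ (finite_FF a b hab).toFinset, sz (XX f)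
      = ∑ p ∈ (finite_FF a b hab).toFinset ×ˢ (univ : Finset (ZMod a)), sz (XX p.1) := by
    rw [sum_product, mul_sum]
    simp [ZMod.card]
  rw [this]
  refine sum_bij (fun p _ => comp b p.1 p.2) ?_ ?_ ?_ ?_
  · rintro ⟨f, r⟩ h
    simp only [mem_product, Set.Finite.mem_toFinset] at h
    exact comp_mem h.1 r
  · rintro ⟨f, r⟩ h ⟨g, s⟩ h' e
    simp only [mem_product, Set.Finite.mem_toFinset] at h h'
    obtain ⟨e1, e2⟩ := comp_inj hab h.1 h'.1 r s e
    rw [e1, e2]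
  · intro z hz
    obtain ⟨f, hf, r, e⟩ := comp_surj hab z (mem_piAntidiag.1 hz).1
    exact ⟨(f, r), by simp [hf], e⟩
  · rintro ⟨f, r⟩ h
    simp only [mem_product, Set.Finite.mem_toFinset] at h
    exact sz_eq_QZ hab h.1 r

lemma sum_sq {a b : ℕ} [NeZero a] (hab : Nat.Coprime a b) (i : ZMod a) (m : ℕ) (hm : m < a) :
    ∑ z ∈ piAntidiag (univ : Finset (ZMod a)) b,
      ((m : ℚ) * b - a * ∑ k ∈ range m, (z (i + (k : ZMod a) * b) : ℚ)) ^ 2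
    = (m * (a - m) * b * (a + b) / (a + 1) : ℚ) * T0 (ZMod a) b := by
  have ha : (0 : ℚ) < a := by exact_mod_cast Nat.pos_of_ne_zero (NeZero.ne a)
  have e1 : ∑ z ∈ piAntidiag (univ : Finset (ZMod a)) b, ∑ k ∈ range m, (z (i + (k : ZMod a) * b) : ℚ)
      = m * (b / a) * T0 (ZMod a) b := by
    rw [sum_comm]
    simp_rw [M1]
    simp [ZMod.card]; ring
  have e2 : ∑ z ∈ piAntidiag (univ : Finset (ZMod a)) b, (∑ k ∈ range m, (z (i + (k : ZMod a) * b) : ℚ)) ^ 2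
      = (m ^ 2 * (b * (b - 1) / (a * (a + 1))) + m * (b * (b - 1) / (a * (a + 1)) + b / a) : ℚ) * T0 (ZMod a) b := by
    simp_rw [sq (∑ k ∈ range m, _), sum_mul_sum]
    rw [sum_comm]
    have : ∀ k ∈ range m, ∑ z ∈ piAntidiag (univ : Finset (ZMod a)) b, ∑ l ∈ range m,
        (z (i + (k : ZMod a) * b) : ℚ) * z (i + (l : ZMod a) * b)
        = (m * (b * (b - 1) / (a * (a + 1))) + (b * (b - 1) / (a * (a + 1)) + b / a) : ℚ) * T0 (ZMod a) b := by
      intro k hk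
      rw [sum_comm]
      simp_rw [M2, ZMod.card]
      rw [← sum_mul, sum_add_distrib]
      have h2 : ∀ l ∈ range m, (if i + (k : ZMod a) * b = i + (l : ZMod a) * b then
          (b * (b - 1) / (a * (a + 1)) + b / a : ℚ) else 0) =
          if k = l then (b * (b - 1) / (a * (a + 1)) + b / a : ℚ) else 0 := by
        intro l hl
        rw [mem_range] at hk hl
        congr 1
        apply propext
        constructor
        · exact fun h => gen_inj hab (hk.trans hm) (hl.trans hm) (add_left_cancel h)
        · rintro rfl; rfl
      rw [sum_congr rfl h2, sum_ite_eq, if_pos hk]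
      simp
    rw [sum_congr rfl this]
    simp; ring
  have e3 : ∀ z : ZMod a → ℕ, ((m : ℚ) * b - a * ∑ k ∈ range m, (z (i + (k : ZMod a) * b) : ℚ)) ^ 2
      = ((m : ℚ) * b) ^ 2 - (2 * m * b * a : ℚ) * (∑ k ∈ range m, (z (i + (k : ZMod a) * b) : ℚ))
        + (a : ℚ) ^ 2 * (∑ k ∈ range m, (z (i + (k : ZMod a) * b) : ℚ)) ^ 2 := fun z => by ring
  simp_rw [e3]
  rw [sum_add_distrib, sum_sub_distrib, ← mul_sum, ← mul_sum, e2, e1]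
  simp only [sum_const, nsmul_eq_mul]
  rw [← T0]
  field_simp
  ring

lemma sum_QZ (a b : ℕ) [NeZero a] (hab : Nat.Coprime a b) :
    ∑ z ∈ piAntidiag (univ : Finset (ZMod a)) b, QZ b z
      = (((a : ℚ) - 1) * ((b : ℚ) - 1) * ((a : ℚ) + b + 1) / 24) * T0 (ZMod a) b := by
  have ha : (0 : ℚ) < a := by exact_mod_cast Nat.pos_of_ne_zero (NeZero.ne a)
  simp only [QZ]
  rw [sum_sub_distrib, ← sum_div, sum_comm]
  have h1 : ∀ i : ZMod a, ∑ z ∈ piAntidiag (univ : Finset (ZMod a)) b, ∑ m ∈ range a,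
      ((m : ℚ) * b - a * ∑ k ∈ range m, (z (i + (k : ZMod a) * b) : ℚ)) ^ 2
      = (a * (a ^ 2 - 1) / 6 * (b * (a + b) / (a + 1)) : ℚ) * T0 (ZMod a) b := by
    intro i
    rw [sum_comm, sum_congr rfl (fun m hm => sum_sq hab i m (mem_range.1 hm)), ← sum_mul]
    congr 1
    have g : ∀ n : ℕ, ∑ m ∈ range n, ((m : ℚ) * (a - m) * b * (a + b) / (a + 1))
        = (a * (n * (n - 1) / 2) - n * (n - 1) * (2 * n - 1) / 6 : ℚ) * (b * (a + b) / (a + 1)) := by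
      intro n
      induction n with
      | zero => simp
      | succ n ih => rw [sum_range_succ, ih]; push_cast; ring
    rw [g]; ring
  rw [sum_congr rfl (fun i _ => h1 i)]
  simp only [sum_const, nsmul_eq_mul, card_univ, ZMod.card]
  rw [← T0]
  field_simp
  ring
end ECore

/-- Armstrong's conjecture (Johnson's theorem): the sum of sizes of all `(a,b)`-cores equals
the number of `(a,b)`-cores times `(a-1)(b-1)(a+b+1)/24`. -/
theorem expected_size_simultaneous_cores (a b : ℕ) (ha : 0 < a) (hb : 0 < b)
    (hab : Nat.Coprime a b) :
    ∑ᶠ μ ∈ {μ : YoungDiagram | μ.IsCore a ∧ μ.IsCore b}, (μ.card : ℚ)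
      = (1 / ((a : ℚ) + b)) * ((a + b).choose b : ℚ) *
        (((a : ℚ) - 1) * ((b : ℚ) - 1) * ((a : ℚ) + b + 1) / 24) := by
  have : NeZero a := ⟨ha.ne'⟩
  have ha' : (0 : ℚ) < a := by exact_mod_cast ha
  rw [ECore.finsum_cores a b ha hb, ECore.finsum_SS]
  apply mul_left_cancel₀ ha'.ne'
  rw [ECore.finsum_FF a b hab, ECore.sum_QZ a b hab, ECore.T0_eq, ZMod.card]
  field_simp
end

section
/- For coprime positive integers a and b, the variance of the number of boxes over the uniform distribution on simultaneous (a,b)-cores equals ab(a-1)(b-1)(a+b)(a+b+1)/1440. -/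
open Finset in
theorem vsc_prod_step {ι : Type*} [Fintype ι] [DecidableEq ι] (g : ι → ℕ → ℕ) (h : ι → ℕ → ℕ)
    (hg : ∀ i n, g i (n+1) = h i n * g i n) (k : ι → ℕ) (j : ι) :
    ∏ i, g i ((k + Pi.single j 1 : ι → ℕ) i) = h j (k j) * ∏ i, g i (k i) := by
  rw [← Finset.mul_prod_erase univ _ (mem_univ j), ← Finset.mul_prod_erase univ (fun i => g i (k i)) (mem_univ j)]
  have : ∏ x ∈ univ.erase j, g x ((k + Pi.single j 1 : ι → ℕ) x) = ∏ x ∈ univ.erase j, g x (k x) := by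
    apply Finset.prod_congr rfl
    intro x hx
    have : x ≠ j := (Finset.mem_erase.mp hx).1
    simp [this]
  rw [this]
  simp [hg, mul_assoc]

/-- Binomial moments. -/
def vscP (a b K : ℕ) : ℕ := (a - 1 + K + b).choose (a - 1 + K)

open Finset PowerSeries in
theorem vsc_moment {ι : Type*} [Fintype ι] [DecidableEq ι] [Nonempty ι] (b : ℕ) (k : ι → ℕ) :
    ∑ x ∈ piAntidiag (univ : Finset ι) b, ∏ i, (x i + 1).ascFactorial (k i)
      = (∏ i, (k i).factorial) * vscP (Fintype.card ι) b (∑ i, k i) := by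
  have h1 := PowerSeries.coeff_prod (fun i : ι => (PowerSeries.mk 1 : ℤ⟦X⟧) ^ (k i + 1)) b univ
  have hc : 0 < Fintype.card ι := Fintype.card_pos
  rw [Finset.prod_pow_eq_pow_sum, Finset.sum_add_distrib] at h1
  simp only [sum_const, card_univ, smul_eq_mul, mul_one] at h1
  have e : ∑ i, k i + Fintype.card ι = (Fintype.card ι - 1 + ∑ i, k i) + 1 := by omega
  rw [e, PowerSeries.mk_one_pow_eq_mk_choose_add] at h1
  simp only [PowerSeries.mk_one_pow_eq_mk_choose_add, coeff_mk] at h1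
  have h2 : ∑ l ∈ finsuppAntidiag (univ : Finset ι) b, ∏ i, (((k i + l i).choose (k i) : ℕ) : ℤ)
    = ∑ x ∈ piAntidiag (univ : Finset ι) b, ∏ i, (((k i + x i).choose (k i) : ℕ) : ℤ) := by
    refine Finset.sum_bij (fun l _ => l) ?_ ?_ ?_ ?_
    · intro l hl
      simpa using hl
    · intro l _ l' _ h
      exact DFunLike.coe_injective h
    · intro x hx
      exact ⟨Finsupp.equivFunOnFinite.symm x, by simpa using hx, by simp⟩
    · intros; rfl
  rw [h2] at h1
  unfold vscP
  have h3 : ((Fintype.card ι - 1 + ∑ i, k i) + b).choose (Fintype.card ι - 1 + ∑ i, k i)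
    = ∑ x ∈ piAntidiag (univ : Finset ι) b, ∏ i, ((k i + x i).choose (k i)) := by
    exact_mod_cast h1
  rw [h3, Finset.mul_sum]
  apply Finset.sum_congr rfl
  intro x _
  rw [← Finset.prod_mul_distrib]
  apply Finset.prod_congr rfl
  intro i _
  rw [Nat.ascFactorial_eq_factorial_mul_choose, add_comm]

open Finset in
theorem vsc_asc_step {ι : Type*} [Fintype ι] [DecidableEq ι] (x k : ι → ℕ) (j : ι) :
    ∏ i, (x i + 1).ascFactorial ((k + Pi.single j 1 : ι → ℕ) i)
      = (x j + 1 + k j) * ∏ i, (x i + 1).ascFactorial (k i) :=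
  vsc_prod_step (fun i n => (x i + 1).ascFactorial n) (fun i n => x i + 1 + n)
    (fun _ _ => Nat.ascFactorial_succ) k j

open Finset in
theorem vsc_fac_step {ι : Type*} [Fintype ι] [DecidableEq ι] (k : ι → ℕ) (j : ι) :
    ∏ i, ((k + Pi.single j 1 : ι → ℕ) i).factorial
      = (k j + 1) * ∏ i, (k i).factorial :=
  vsc_prod_step (fun _ n => n.factorial) (fun _ n => n + 1)
    (fun _ _ => Nat.factorial_succ _) k j

open Finset in
theorem vsc_mom1 {ι : Type*} [Fintype ι] [DecidableEq ι] [Nonempty ι] (b : ℕ) (i : ι) :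
    ∑ x ∈ piAntidiag (univ : Finset ι) b, ((x i : ℚ) + 1) = vscP (Fintype.card ι) b 1 := by
  have := vsc_moment b (0 + Pi.single i 1 : ι → ℕ)
  simp only [vsc_asc_step, vsc_fac_step] at this
  simp [Finset.sum_add_distrib] at this
  rw [← this]; push_cast; simp [Finset.sum_add_distrib]

open Finset in
theorem vsc_mom2 {ι : Type*} [Fintype ι] [DecidableEq ι] [Nonempty ι] (b : ℕ) (i j : ι) :
    ∑ x ∈ piAntidiag (univ : Finset ι) b, ((x i : ℚ) + 1) * (x j + 1)
      = vscP (Fintype.card ι) b 2 + (if i = j then 1 else 0) *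
        ((vscP (Fintype.card ι) b 2 : ℚ) - vscP (Fintype.card ι) b 1) := by
  have := vsc_moment b (0 + Pi.single i 1 + Pi.single j 1: ι → ℕ)
  simp only [vsc_asc_step, vsc_fac_step] at this
  have h1 := vsc_mom1 b i
  simp only [Pi.add_apply, Finset.sum_add_distrib, Pi.zero_apply, Pi.single_apply, Finset.sum_ite_eq', Finset.mem_univ, if_true, Finset.sum_const_zero, Nat.ascFactorial_zero, Finset.prod_const_one, Nat.factorial_zero] at this
  qify at this
  by_cases hij : i = j
  · subst hij
    simp at this
    simp only [if_true]
    have e : ∀ x : ι → ℕ, ((x i : ℚ) + 1) * (x i + 1) = (x i + 1 + 1) * (x i + 1) - (x i + 1) := by intro x; ring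
    simp only [e, Finset.sum_sub_distrib]
    rw [this, h1]; ring
  · have hji : ¬ (j = i) := fun h => hij h.symm
    simp [hij, hji] at this ⊢
    rw [← this]
    exact Finset.sum_congr rfl (fun _ _ => by ring)


/-- Kronecker delta. -/
def vscd {ι : Type*} [DecidableEq ι] (i j : ι) : ℚ := if i = j then 1 else 0

open Finset in
theorem vsc_raw2 {ι : Type*} [Fintype ι] [DecidableEq ι] [Nonempty ι] (b : ℕ) (i j : ι) :
    ∑ x ∈ piAntidiag (univ : Finset ι) b, ((x i : ℚ) + 1) * (x j + 1)
      = (1 + vscd i j) * vscP (Fintype.card ι) b 2 - vscd i j * vscP (Fintype.card ι) b 1 := by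
  rw [vsc_mom2]; unfold vscd; ring

open Finset in
theorem vsc_raw3 {ι : Type*} [Fintype ι] [DecidableEq ι] [Nonempty ι] (b : ℕ) (i j k : ι) :
    ∑ x ∈ piAntidiag (univ : Finset ι) b, ((x i : ℚ) + 1) * (x j + 1 + vscd i j) * (x k + 1 + (vscd i k + vscd j k))
      = (1 + vscd i j) * (1 + (vscd i k + vscd j k)) * vscP (Fintype.card ι) b 3 := by
  have := vsc_moment b (0 + Pi.single i 1 + Pi.single j 1 + Pi.single k 1 : ι → ℕ)
  simp only [vsc_asc_step, vsc_fac_step] at this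
  simp only [Pi.add_apply, Finset.sum_add_distrib, Pi.zero_apply, Pi.single_apply, Finset.sum_ite_eq', Finset.mem_univ, if_true, Finset.sum_const_zero, Nat.ascFactorial_zero, Finset.prod_const_one, Nat.factorial_zero] at this
  qify at this
  simp only [vscd, eq_comm (a := i), eq_comm (a := j) (b := k)]
  norm_num at this ⊢
  convert this using 2 <;> ring

open Finset in
theorem vsc_raw4 {ι : Type*} [Fintype ι] [DecidableEq ι] [Nonempty ι] (b : ℕ) (i j k l : ι) :
    ∑ x ∈ piAntidiag (univ : Finset ι) b, ((x i : ℚ) + 1) * (x j + 1 + vscd i j) *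
        (x k + 1 + (vscd i k + vscd j k)) * (x l + 1 + (vscd i l + vscd j l + vscd k l))
      = (1 + vscd i j) * (1 + (vscd i k + vscd j k)) * (1 + (vscd i l + vscd j l + vscd k l))
        * vscP (Fintype.card ι) b 4 := by
  have := vsc_moment b (0 + Pi.single i 1 + Pi.single j 1 + Pi.single k 1 + Pi.single l 1 : ι → ℕ)
  simp only [vsc_asc_step, vsc_fac_step] at this
  simp only [Pi.add_apply, Finset.sum_add_distrib, Pi.zero_apply, Pi.single_apply, Finset.sum_ite_eq', Finset.mem_univ, if_true, Finset.sum_const_zero, Nat.ascFactorial_zero, Finset.prod_const_one, Nat.factorial_zero] at this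
  qify at this
  simp only [vscd, eq_comm (a := i), eq_comm (a := j) (b := k), eq_comm (a := j) (b := l), eq_comm (a := k) (b := l)]
  norm_num at this ⊢
  convert this using 2 <;> ring

open Finset in
theorem vsc_mom3 {ι : Type*} [Fintype ι] [DecidableEq ι] [Nonempty ι] (b : ℕ) (i j k : ι) :
    ∑ x ∈ piAntidiag (univ : Finset ι) b, ((x i : ℚ) + 1) * (x j + 1) * (x k + 1)
      = (1 + vscd i j) * (1 + (vscd i k + vscd j k)) * vscP (Fintype.card ι) b 3
        - (vscd i k + vscd j k) * ((1 + vscd i j) * vscP (Fintype.card ι) b 2)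
        - vscd i j * ((1 + vscd i k) * vscP (Fintype.card ι) b 2
            - vscd i k * vscP (Fintype.card ι) b 1) := by
  have h3 := vsc_raw3 b i j k
  have h2 := vsc_raw2 b i j
  have h2' := vsc_raw2 b i k
  have h1 := vsc_mom1 b i
  have e : ∀ x : ι → ℕ, ((x i : ℚ) + 1) * (x j + 1) * (x k + 1) =
    ((x i : ℚ) + 1) * (x j + 1 + vscd i j) * (x k + 1 + (vscd i k + vscd j k))
     - (vscd i k + vscd j k) * (((x i : ℚ) + 1) * (x j + 1))
     - (vscd i k + vscd j k) * vscd i j * ((x i : ℚ) + 1)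
     - vscd i j * (((x i : ℚ) + 1) * (x k + 1)) := by intro x; ring
  simp only [e, Finset.sum_sub_distrib]
  simp only [← Finset.mul_sum]
  rw [h3, h2, h2', h1]
  ring

open Finset in
theorem vsc_mom4 {ι : Type*} [Fintype ι] [DecidableEq ι] [Nonempty ι] (b : ℕ) (i j k l : ι)
    (P1 P2 P3 P4 : ℚ) (hP1 : P1 = vscP (Fintype.card ι) b 1) (hP2 : P2 = vscP (Fintype.card ι) b 2)
    (hP3 : P3 = vscP (Fintype.card ι) b 3) (hP4 : P4 = vscP (Fintype.card ι) b 4) :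
    ∑ x ∈ piAntidiag (univ : Finset ι) b, ((x i : ℚ) + 1) * (x j + 1) * ((x k + 1) * (x l + 1))
      = (6*P4 - 12*P3 + 7*P2 - P1) * (vscd i j * vscd i k * vscd i l)
        + (P4 - 2*P3 + P2) * (vscd i j * vscd k l + vscd i k * vscd j l + vscd i l * vscd j k)
        + (2*P4 - 3*P3 + P2) * (vscd i j * vscd i k + vscd i j * vscd i l
            + vscd i k * vscd k l + vscd j k * vscd k l)
        + (P4 - P3) * (vscd i j + vscd i k + vscd i l + vscd j k + vscd j l + vscd k l) + P4 := by
  have h4 := vsc_raw4 b i j k l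
  have h3 := vsc_raw3 b i j k
  have h3a := vsc_mom3 b i j l
  have h3b := vsc_mom3 b i k l
  have h2 := vsc_raw2 b i l
  have e : ∀ x : ι → ℕ, ((x i : ℚ) + 1) * (x j + 1) * ((x k + 1) * (x l + 1)) =
    ((x i : ℚ) + 1) * (x j + 1 + vscd i j) *
        (x k + 1 + (vscd i k + vscd j k)) * (x l + 1 + (vscd i l + vscd j l + vscd k l))
     - (vscd i l + vscd j l + vscd k l) * (((x i : ℚ) + 1) * (x j + 1 + vscd i j) * (x k + 1 + (vscd i k + vscd j k)))
     - (vscd i k + vscd j k) * (((x i : ℚ) + 1) * (x j + 1) * (x l + 1))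
     - vscd i j * (((x i : ℚ) + 1) * (x k + 1) * (x l + 1))
     - (vscd i k + vscd j k) * vscd i j * (((x i : ℚ) + 1) * (x l + 1)) := by intro x; ring
  simp only [e, Finset.sum_sub_distrib]
  simp only [← Finset.mul_sum]
  rw [h4, h3, h3a, h3b, h2, ← hP1, ← hP2, ← hP3, ← hP4]
  clear h4 h3 h3a h3b h2 e hP1 hP2 hP3 hP4
  have key : ∀ i j : ι, (i = j ∧ vscd i j = 1) ∨ (i ≠ j ∧ vscd i j = 0) := by
    intro i j; unfold vscd; by_cases h : i = j <;> simp [h]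
  rcases key i j with ⟨h1, e1⟩ | ⟨h1, e1⟩ <;> rcases key i k with ⟨h2, e2⟩ | ⟨h2, e2⟩ <;>
  rcases key i l with ⟨h3, e3⟩ | ⟨h3, e3⟩ <;> rcases key j k with ⟨h4, e4⟩ | ⟨h4, e4⟩ <;>
  rcases key j l with ⟨h5, e5⟩ | ⟨h5, e5⟩ <;> rcases key k l with ⟨h6, e6⟩ | ⟨h6, e6⟩ <;>
  first
  | (exfalso; grind)
  | (rw [e1, e2, e3, e4, e5, e6]; ring)

open Finset in
theorem vsc_contract {ι : Type*} [Fintype ι] [DecidableEq ι] (K : ι → ι → ℚ)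
    (hs : ∀ i j, K i j = K j i) (hr : ∀ i, ∑ j, K i j = 0) (A B C D F : ℚ) :
    ∑ i, ∑ j, K i j * ∑ k, ∑ l, K k l * (A * (vscd i j * vscd i k * vscd i l)
        + B * (vscd i j * vscd k l + vscd i k * vscd j l + vscd i l * vscd j k)
        + C * (vscd i j * vscd i k + vscd i j * vscd i l
            + vscd i k * vscd k l + vscd j k * vscd k l)
        + D * (vscd i j + vscd i k + vscd i l + vscd j k + vscd j l + vscd k l) + F)
     = A * ∑ i, K i i ^ 2 + B * ((∑ i, K i i) ^ 2 + 2 * ∑ i, ∑ j, K i j ^ 2) := by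
  have hr' : ∀ j, ∑ i, K i j = 0 := fun j => by rw [← hr j]; exact sum_congr rfl fun i _ => hs _ _
  have inner : ∀ i j, ∑ k, ∑ l, K k l * (A * (vscd i j * vscd i k * vscd i l)
        + B * (vscd i j * vscd k l + vscd i k * vscd j l + vscd i l * vscd j k)
        + C * (vscd i j * vscd i k + vscd i j * vscd i l
            + vscd i k * vscd k l + vscd j k * vscd k l)
        + D * (vscd i j + vscd i k + vscd i l + vscd j k + vscd j l + vscd k l) + F)
      = A * vscd i j * K i i + B * (vscd i j * ∑ k, K k k + 2 * K i j)
        + C * (K i i + K j j) + D * ∑ k, K k k := by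
    intro i j
    have c1 : ∀ p q : ι, ∑ k, ∑ l, K k l * (vscd p k * vscd q l) = K p q := by
      intro p q; simp [vscd]
    have c2 : ∑ k, ∑ l, K k l * vscd k l = ∑ k, K k k := by simp [vscd]
    have c3 : ∀ p, ∑ k, ∑ l, K k l * (vscd p k * vscd k l) = K p p := by
      intro p; simp [vscd]
    have c4 : ∀ p, ∑ k, ∑ l, K k l * vscd p k = 0 := by
      intro p; simp [← sum_mul, hr]
    have c5 : ∀ p, ∑ k, ∑ l, K k l * vscd p l = 0 := by
      intro p; rw [sum_comm]; simp [← sum_mul, hr']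
    have c6 : ∑ k, ∑ l, K k l = 0 := by simp [hr]
    have e : ∀ k l, K k l * (A * (vscd i j * vscd i k * vscd i l)
        + B * (vscd i j * vscd k l + vscd i k * vscd j l + vscd i l * vscd j k)
        + C * (vscd i j * vscd i k + vscd i j * vscd i l
            + vscd i k * vscd k l + vscd j k * vscd k l)
        + D * (vscd i j + vscd i k + vscd i l + vscd j k + vscd j l + vscd k l) + F)
       = A * vscd i j * (K k l * (vscd i k * vscd i l)) + (B * vscd i j + D) * (K k l * vscd k l)
        + B * (K k l * (vscd i k * vscd j l)) + B * (K k l * (vscd j k * vscd i l))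
        + (C * vscd i j + D) * (K k l * vscd i k) + (C * vscd i j + D) * (K k l * vscd i l)
        + C * (K k l * (vscd i k * vscd k l)) + C * (K k l * (vscd j k * vscd k l))
        + D * (K k l * vscd j k) + D * (K k l * vscd j l) + (D * vscd i j + F) * K k l := by
      intro k l; ring
    simp only [e, sum_add_distrib, ← mul_sum, c1, c2, c3, c4, c5, c6]
    rw [hs j i]
    ring
  simp only [inner]
  have e : ∀ i j, K i j * (A * vscd i j * K i i + B * (vscd i j * ∑ k, K k k + 2 * K i j)
        + C * (K i i + K j j) + D * ∑ k, K k k)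
     = A * (K i j * (vscd i j * K i i)) + B * (∑ k, K k k) * (K i j * vscd i j) + B * 2 * K i j ^ 2
      + C * (K i i * K i j) + C * (K i j * K j j) + (D * ∑ k, K k k) * K i j := by
    intro i j; ring
  have d1 : ∑ i, ∑ j, K i j * (vscd i j * K i i) = ∑ i, K i i ^ 2 := by simp [vscd, sq]
  have d2 : ∑ i, ∑ j, K i j * vscd i j = ∑ i, K i i := by simp [vscd]
  have d3 : ∑ i, ∑ j, K i i * K i j = 0 := by simp [← mul_sum, hr]
  have d4 : ∑ i, ∑ j, K i j * K j j = 0 := by rw [sum_comm]; simp [← sum_mul, hr']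
  have d5 : ∑ k, ∑ l, K k l = 0 := by simp [hr]
  simp only [e, sum_add_distrib, ← mul_sum, d1, d2, d4, d5]
  simp only [mul_sum, d3]
  rw [← mul_sum, ← mul_sum]
  simp only [← mul_sum]
  simp
  ring

open Finset in
theorem vsc_EQ2 {ι : Type*} [Fintype ι] [DecidableEq ι] [Nonempty ι] (b : ℕ) (K : ι → ι → ℚ)
    (hs : ∀ i j, K i j = K j i) (hr : ∀ i, ∑ j, K i j = 0)
    (P1 P2 P3 P4 : ℚ) (hP1 : P1 = vscP (Fintype.card ι) b 1) (hP2 : P2 = vscP (Fintype.card ι) b 2)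
    (hP3 : P3 = vscP (Fintype.card ι) b 3) (hP4 : P4 = vscP (Fintype.card ι) b 4) :
    ∑ x ∈ piAntidiag (univ : Finset ι) b, (∑ i, ∑ j, K i j * (((x i : ℚ) + 1) * (x j + 1))) ^ 2
     = (6*P4 - 12*P3 + 7*P2 - P1) * ∑ i, K i i ^ 2
      + (P4 - 2*P3 + P2) * ((∑ i, K i i) ^ 2 + 2 * ∑ i, ∑ j, K i j ^ 2) := by
  rw [← vsc_contract K hs hr _ _ (2*P4 - 3*P3 + P2) (P4 - P3) P4]
  simp only [← vsc_mom4 b _ _ _ _ P1 P2 P3 P4 hP1 hP2 hP3 hP4]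
  have e : ∀ x : ι → ℕ, (∑ i, ∑ j, K i j * (((x i : ℚ) + 1) * (x j + 1))) ^ 2
      = ∑ i, ∑ j, K i j * ∑ k, ∑ l, K k l *
        (((x i : ℚ) + 1) * (x j + 1) * ((x k + 1) * (x l + 1))) := by
    intro x
    rw [sq, sum_mul]
    refine sum_congr rfl fun i _ => ?_
    rw [sum_mul]
    refine sum_congr rfl fun j _ => ?_
    rw [mul_assoc]
    congr 1
    rw [mul_sum]
    refine sum_congr rfl fun k _ => ?_
    rw [mul_sum]
    refine sum_congr rfl fun l _ => ?_
    ring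
  simp only [e]
  rw [sum_comm]
  refine sum_congr rfl fun i _ => ?_
  rw [sum_comm]
  refine sum_congr rfl fun j _ => ?_
  rw [← mul_sum]
  congr 1
  rw [sum_comm]
  refine sum_congr rfl fun k _ => ?_
  rw [sum_comm]
  refine sum_congr rfl fun l _ => ?_
  rw [← mul_sum]

open Finset in
theorem vsc_EQ1 {ι : Type*} [Fintype ι] [DecidableEq ι] [Nonempty ι] (b : ℕ) (K : ι → ι → ℚ)
    (hr : ∀ i, ∑ j, K i j = 0)
    (P1 P2 : ℚ) (hP1 : P1 = vscP (Fintype.card ι) b 1) (hP2 : P2 = vscP (Fintype.card ι) b 2) :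
    ∑ x ∈ piAntidiag (univ : Finset ι) b, (∑ i, ∑ j, K i j * (((x i : ℚ) + 1) * (x j + 1)))
     = (P2 - P1) * ∑ i, K i i := by
  rw [sum_comm]
  simp only [sum_comm (s := piAntidiag (univ : Finset ι) b), ← mul_sum, vsc_raw2, ← hP1, ← hP2]
  have e : ∀ i j, K i j * ((1 + vscd i j) * P2 - vscd i j * P1) = P2 * K i j + (P2 - P1) * (K i j * vscd i j) := by
    intros; ring
  simp only [e, sum_add_distrib, ← mul_sum, hr]
  simp [vscd]


/-- Green function of the cycle. -/
def vscG (a : ℕ) (d : ZMod a) : ℚ :=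
  ((a : ℚ) ^ 2 - 1) / (12 * a) - (d.val : ℚ) * (a - d.val) / (2 * a)

theorem vscG_neg (a : ℕ) [NeZero a] (d : ZMod a) : vscG a (-d) = vscG a d := by
  unfold vscG
  rw [ZMod.neg_val]
  split_ifs with h
  · simp [h]
  · rw [Nat.cast_sub (ZMod.val_lt d).le]; ring

theorem vsc_sum_val (a : ℕ) [NeZero a] (f : ℕ → ℚ) :
    ∑ d : ZMod a, f d.val = ∑ v ∈ Finset.range a, f v := by
  obtain ⟨n, rfl⟩ : ∃ n, a = n + 1 := ⟨a - 1, by have := NeZero.pos a; omega⟩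
  exact Fin.sum_univ_eq_sum_range f (n+1)

theorem vsc_pow_sums (n : ℕ) :
    (∑ v ∈ Finset.range n, (v : ℚ) = n * (n - 1) / 2) ∧
    (∑ v ∈ Finset.range n, (v : ℚ) ^ 2 = n * (n - 1) * (2 * n - 1) / 6) ∧
    (∑ v ∈ Finset.range n, (v : ℚ) ^ 3 = (n * (n - 1) / 2) ^ 2) ∧
    (∑ v ∈ Finset.range n, (v : ℚ) ^ 4 =
      n * (n - 1) * (2 * n - 1) * (3 * n ^ 2 - 3 * n - 1) / 30) := by
  induction n with
  | zero => simp
  | succ n ih =>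
    obtain ⟨h1, h2, h3, h4⟩ := ih
    refine ⟨?_, ?_, ?_, ?_⟩ <;> rw [Finset.sum_range_succ]
    · rw [h1]; push_cast; ring
    · rw [h2]; push_cast; ring
    · rw [h3]; push_cast; ring
    · rw [h4]; push_cast; ring

theorem vscG_sum (a : ℕ) [NeZero a] : ∑ d : ZMod a, vscG a d = 0 := by
  unfold vscG
  rw [vsc_sum_val a (fun v => ((a : ℚ) ^ 2 - 1) / (12 * a) - (v : ℚ) * (a - v) / (2 * a))]
  obtain ⟨h1, h2, h3, h4⟩ := vsc_pow_sums a
  have ha : (a : ℚ) ≠ 0 := Nat.cast_ne_zero.mpr (NeZero.ne a)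
  have e : ∀ v : ℕ, ((a : ℚ) ^ 2 - 1) / (12 * a) - (v : ℚ) * (a - v) / (2 * a)
    = ((a : ℚ) ^ 2 - 1) / (12 * a) - 1 / 2 * v + 1 / (2 * a) * (v : ℚ) ^ 2 := by
    intro v; field_simp; ring
  simp only [e, Finset.sum_add_distrib, Finset.sum_sub_distrib, ← Finset.mul_sum, h1, h2]
  simp
  field_simp
  ring

theorem vscG_sum_sq (a : ℕ) [NeZero a] :
    ∑ d : ZMod a, vscG a d ^ 2 = ((a : ℚ) ^ 2 - 1) * (a ^ 2 + 11) / (720 * a) := by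
  unfold vscG
  rw [vsc_sum_val a (fun v => (((a : ℚ) ^ 2 - 1) / (12 * a) - (v : ℚ) * (a - v) / (2 * a)) ^ 2)]
  obtain ⟨h1, h2, h3, h4⟩ := vsc_pow_sums a
  have ha : (a : ℚ) ≠ 0 := Nat.cast_ne_zero.mpr (NeZero.ne a)
  have e : ∀ v : ℕ, (((a : ℚ) ^ 2 - 1) / (12 * a) - (v : ℚ) * (a - v) / (2 * a)) ^ 2
    = (((a : ℚ) ^ 2 - 1) / (12 * a)) ^ 2 - ((a : ℚ) ^ 2 - 1) / (12 * a) * v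
      + (((a : ℚ) ^ 2 - 1) / (12 * a ^ 2) + 1 / 4) * (v : ℚ) ^ 2
      - 1 / (2 * a) * (v : ℚ) ^ 3 + 1 / (4 * a ^ 2) * (v : ℚ) ^ 4 := by
    intro v; field_simp; ring
  simp only [e, Finset.sum_add_distrib, Finset.sum_sub_distrib, ← Finset.mul_sum, h1, h2, h3, h4]
  simp
  field_simp
  ring

theorem vsc_val_succ (a : ℕ) [NeZero a] (d : ZMod a) :
    ((d + 1).val = d.val + 1 ∧ d.val + 1 < a) ∨ (d + 1 = 0 ∧ d.val + 1 = a) := by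
  have h : ((d.val + 1 : ℕ) : ZMod a) = d + 1 := by simp
  have hl := ZMod.val_lt d
  rcases Nat.lt_or_ge (d.val + 1) a with h1 | h1
  · left
    refine ⟨?_, h1⟩
    rw [← h, ZMod.val_natCast_of_lt h1]
  · right
    have : d.val + 1 = a := by omega
    refine ⟨?_, this⟩
    rw [← h, this]; simp

theorem vscG_lap (a : ℕ) [NeZero a] (d : ZMod a) :
    2 * vscG a d - vscG a (d - 1) - vscG a (d + 1) = vscd d 0 - 1 / a := by
  have ha : (a : ℚ) ≠ 0 := Nat.cast_ne_zero.mpr (NeZero.ne a)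
  obtain ⟨e, rfl⟩ : ∃ e, d = e + 1 := ⟨d - 1, by ring⟩
  rw [add_sub_cancel_right]
  have key : ∀ d : ZMod a, vscG a (d + 1) =
      ((a : ℚ) ^ 2 - 1) / (12 * a) - ((d.val : ℚ) + 1) * (a - (d.val + 1)) / (2 * a) := by
    intro d
    unfold vscG
    rcases vsc_val_succ a d with ⟨h, _⟩ | ⟨h, h'⟩
    · rw [h]; push_cast; ring
    · rw [h]
      have : (d.val : ℚ) + 1 = a := by exact_mod_cast h'
      rw [this]; simp
  rw [key (e + 1), key e]
  rcases vsc_val_succ a e with ⟨h, _⟩ | ⟨h, h'⟩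
  · rw [h]
    have : e + 1 ≠ 0 := by
      intro h0; rw [h0] at h; simp at h
    simp only [vscd, this, if_false, vscG]
    push_cast
    field_simp
    ring
  · rw [h]
    have h' : (e.val : ℚ) = a - 1 := by
      have : (e.val : ℚ) + 1 = a := by exact_mod_cast h'
      linarith
    simp only [vscd, if_true, vscG, h', ZMod.val_zero]
    push_cast
    field_simp
    ring

/-- The circulant kernel. -/
def vscK (a b : ℕ) (i j : ZMod a) : ℚ := vscG a ((i - j) * (b : ZMod a)⁻¹)

theorem vscK_symm (a b : ℕ) [NeZero a] (i j : ZMod a) : vscK a b i j = vscK a b j i := by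
  unfold vscK
  rw [← vscG_neg]; congr 1; ring

theorem vsc_sum_unit (a b : ℕ) [NeZero a] (hab : Nat.Coprime b a) (f : ZMod a → ℚ) (i : ZMod a) :
    ∑ j, f ((i - j) * (b : ZMod a)⁻¹) = ∑ j, f j := by
  have h1 := ZMod.coe_mul_inv_eq_one b hab
  refine Finset.sum_bijective (fun j => (i - j) * (b : ZMod a)⁻¹) ?_ (by simp) (by simp)
  refine (Finite.injective_iff_bijective).mp ?_
  intro x y hxy
  have := congrArg (· * (b : ZMod a)) hxy
  simp only [mul_comm _ (b : ZMod a)] at this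
  have h2 : ((b : ZMod a) * (b : ZMod a)⁻¹) * (i - x) = ((b : ZMod a) * (b : ZMod a)⁻¹) * (i - y) := by
    linear_combination this
  rw [h1] at h2
  linear_combination -h2

theorem vscK_row (a b : ℕ) [NeZero a] (hab : Nat.Coprime b a) (i : ZMod a) :
    ∑ j, vscK a b i j = 0 := by
  unfold vscK
  rw [vsc_sum_unit a b hab (vscG a) i, vscG_sum]

theorem vscK_sq (a b : ℕ) [NeZero a] (hab : Nat.Coprime b a) :
    ∑ i, ∑ j, vscK a b i j ^ 2 = ((a : ℚ) ^ 2 - 1) * (a ^ 2 + 11) / 720 := by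
  unfold vscK
  have ha : (a : ℚ) ≠ 0 := Nat.cast_ne_zero.mpr (NeZero.ne a)
  simp only [vsc_sum_unit a b hab (fun d => vscG a d ^ 2), vscG_sum_sq]
  simp [ZMod.card]
  field_simp

theorem vscK_diag (a b : ℕ) [NeZero a] (i : ZMod a) :
    vscK a b i i = ((a : ℚ) ^ 2 - 1) / (12 * a) := by
  unfold vscK vscG; simp

open Finset in
theorem vscK_form (a b : ℕ) [NeZero a] (hab : Nat.Coprime b a) (T u : ZMod a → ℚ) (c : ℚ)
    (hu : ∀ r, a * u r = T r - T (r + b) + c) :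
    (a : ℚ) ^ 2 * ∑ i, ∑ j, vscK a b i j * (u i * u j) = ∑ r, T r ^ 2 - (∑ r, T r) ^ 2 / a := by
  have ha : (a : ℚ) ≠ 0 := Nat.cast_ne_zero.mpr (NeZero.ne a)
  have h1 := ZMod.coe_mul_inv_eq_one b hab
  have hr := vscK_row a b hab
  have hr' : ∀ j, ∑ i, vscK a b i j = 0 := fun j => by
    rw [← hr j]; exact sum_congr rfl fun i _ => vscK_symm a b _ _
  have e1 : (a : ℚ) ^ 2 * ∑ i, ∑ j, vscK a b i j * (u i * u j)
      = ∑ i, ∑ j, vscK a b i j * ((T i - T (i + b)) * (T j - T (j + b))) := by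
    have : ∀ i j, (a : ℚ) ^ 2 * (vscK a b i j * (u i * u j)) =
       vscK a b i j * ((T i - T (i + b)) * (T j - T (j + b)))
        + c * ((T i - T (i + b)) * vscK a b i j) + c * (vscK a b i j * (T j - T (j + b)))
        + c ^ 2 * vscK a b i j := by
      intro i j
      linear_combination (vscK a b i j) * (a * u j) * hu i + vscK a b i j * (T i - T (i + b) + c) * hu j
    simp only [mul_sum]
    simp only [this, sum_add_distrib]
    have z1 : ∑ i, ∑ j, c * ((T i - T (i + b)) * vscK a b i j) = 0 := by
      simp only [← mul_sum, hr]; simp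
    have z2 : ∑ i, ∑ j, c * (vscK a b i j * (T j - T (j + b))) = 0 := by
      rw [sum_comm]
      simp only [← mul_sum, ← sum_mul, hr']; simp
    have z3 : ∑ i, ∑ j, c ^ 2 * vscK a b i j = 0 := by
      simp only [← mul_sum, hr]; simp
    rw [z1, z2, z3]; ring
  rw [e1]
  have e2 : ∀ i j, vscK a b i j * ((T i - T (i + b)) * (T j - T (j + b)))
     = vscK a b i j * T i * T j - vscK a b i j * T (i + b) * T j - vscK a b i j * T i * T (j + b)
      + vscK a b i j * T (i + b) * T (j + b) := by intros; ring
  simp only [e2, sum_add_distrib, sum_sub_distrib]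
  have s1 : ∑ i, ∑ j, vscK a b i j * T (i + b) * T j
      = ∑ i, ∑ j, vscG a ((i - j) * (b : ZMod a)⁻¹ - 1) * T i * T j := by
    rw [← Equiv.sum_comp (Equiv.addRight (b : ZMod a))
      (fun i => ∑ j, vscG a ((i - j) * (b : ZMod a)⁻¹ - 1) * T i * T j)]
    refine sum_congr rfl fun i _ => sum_congr rfl fun j _ => ?_
    simp only [Equiv.coe_addRight, vscK]
    congr 3
    linear_combination -h1
  have s2 : ∑ i, ∑ j, vscK a b i j * T i * T (j + b)
      = ∑ i, ∑ j, vscG a ((i - j) * (b : ZMod a)⁻¹ + 1) * T i * T j := by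
    refine sum_congr rfl fun i _ => ?_
    rw [← Equiv.sum_comp (Equiv.addRight (b : ZMod a))
      (fun j => vscG a ((i - j) * (b : ZMod a)⁻¹ + 1) * T i * T j)]
    refine sum_congr rfl fun j _ => ?_
    simp only [Equiv.coe_addRight, vscK]
    congr 3
    linear_combination h1
  have s3 : ∑ i, ∑ j, vscK a b i j * T (i + b) * T (j + b)
      = ∑ i, ∑ j, vscK a b i j * T i * T j := by
    rw [← Equiv.sum_comp (Equiv.addRight (b : ZMod a))
      (fun i => ∑ j, vscK a b i j * T i * T j)]
    refine sum_congr rfl fun i _ => ?_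
    rw [← Equiv.sum_comp (Equiv.addRight (b : ZMod a))
      (fun j => vscK a b _ j * T _ * T j)]
    refine sum_congr rfl fun j _ => ?_
    simp only [Equiv.coe_addRight, vscK]
    congr 3
    ring
  rw [s1, s2, s3]
  have s4 : ∀ i j : ZMod a, vscd ((i - j) * (b : ZMod a)⁻¹) 0 = vscd i j := by
    intro i j
    unfold vscd
    have : (i - j) * (b : ZMod a)⁻¹ = 0 ↔ i = j := by
      constructor
      · intro h
        linear_combination (b : ZMod a) * h - (i - j) * h1
      · rintro rfl; ring
    simp only [this]
  have s5 : ∀ i j, vscK a b i j * T i * T j - vscG a ((i - j) * (b : ZMod a)⁻¹ - 1) * T i * T j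
      - vscG a ((i - j) * (b : ZMod a)⁻¹ + 1) * T i * T j + vscK a b i j * T i * T j
      = vscd i j * (T i * T j) - T i * T j / a := by
    intro i j
    have := vscG_lap a ((i - j) * (b : ZMod a)⁻¹)
    rw [s4] at this
    unfold vscK
    linear_combination T i * T j * this
  simp only [← sum_add_distrib, ← sum_sub_distrib, s5]
  simp only [sum_sub_distrib, ← sum_div, ← mul_sum, ← sum_mul]
  simp [vscd, sq]


/-- Normalised first-gap functions of simultaneous cores. -/
def vscT (a b : ℕ) : Set (ZMod a → ℤ) :=
  {T | (∀ r, ((T r : ℤ) : ZMod a) = r) ∧ T 0 = 0 ∧ (∀ r, 0 ≤ T r) ∧ ∀ r, T (r + b) ≤ T r + b}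

/-- Composition attached to a gap function and a rotation. -/
def vscX (a b : ℕ) (p : (ZMod a → ℤ) × ZMod a) (s : ZMod a) : ℕ :=
  ((p.1 (s + p.2) + b - p.1 (s + p.2 + b)) / (a : ℤ)).toNat

theorem vscX_spec (a b : ℕ) [NeZero a] (T : ZMod a → ℤ) (hT : T ∈ vscT a b) (r s : ZMod a) :
    (a : ℤ) * vscX a b (T, r) s = T (s + r) + b - T (s + r + b) := by
  obtain ⟨h1, h2, h3, h4⟩ := hT
  have ha : (0 : ℤ) < a := by exact_mod_cast NeZero.pos a
  have hd : (a : ℤ) ∣ T (s + r) + b - T (s + r + b) := by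
    rw [← ZMod.intCast_zmod_eq_zero_iff_dvd]
    push_cast
    rw [h1, h1]; ring
  obtain ⟨m, hm⟩ := hd
  have hm0 : 0 ≤ m := by
    have := h4 (s + r)
    by_contra hneg
    have : (a : ℤ) * m < 0 := mul_neg_of_pos_of_neg ha (by omega)
    omega
  unfold vscX
  simp only
  rw [hm, Int.mul_ediv_cancel_left _ ha.ne', Int.toNat_of_nonneg hm0]

open Finset in
theorem vscX_mem (a b : ℕ) [NeZero a] (T : ZMod a → ℤ) (hT : T ∈ vscT a b) (r : ZMod a) :
    vscX a b (T, r) ∈ piAntidiag (univ : Finset (ZMod a)) b := by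
  have ha : (0 : ℤ) < a := by exact_mod_cast NeZero.pos a
  simp only [mem_piAntidiag, mem_univ, implies_true, and_true]
  have h := fun s => vscX_spec a b T hT r s
  have h2 : (a : ℤ) * ∑ s, (vscX a b (T, r) s : ℤ) = a * b := by
    rw [mul_sum]
    simp only [h, sum_sub_distrib, sum_add_distrib]
    have : ∑ s, T (s + r + b) = ∑ s, T (s + r) := by
      rw [← Equiv.sum_comp (Equiv.addRight (b : ZMod a)) (fun s => T (s + r))]
      refine sum_congr rfl fun s _ => ?_
      simp only [Equiv.coe_addRight]
      congr 1; ring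
    rw [this]
    simp [ZMod.card]
  have h3 := mul_left_cancel₀ ha.ne' h2
  exact_mod_cast h3

theorem vsc_const (a b : ℕ) [NeZero a] (hab : Nat.Coprime b a) (D : ZMod a → ℤ)
    (h : ∀ s, D (s + b) = D s) (s : ZMod a) : D s = D 0 := by
  have h1 := ZMod.coe_mul_inv_eq_one b hab
  have key : ∀ n : ℕ, D (n * b) = D 0 := by
    intro n
    induction n with
    | zero => simp
    | succ n ih => rw [← ih, ← h (n * b)]; congr 1; push_cast; ring
  have := key (s * (b : ZMod a)⁻¹).val
  rw [← this]
  congr 1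
  rw [ZMod.natCast_zmod_val]
  linear_combination -s * h1

theorem vscX_inj (a b : ℕ) [NeZero a] (hab : Nat.Coprime b a) :
    Set.InjOn (vscX a b) (vscT a b ×ˢ Set.univ) := by
  rintro ⟨T, r⟩ ⟨hT, _⟩ ⟨T', r'⟩ ⟨hT', _⟩ hX
  simp only at hT hT'
  have hD := vsc_const a b hab (fun s => T (s + r) - T' (s + r')) (by
    intro s
    have e1 := vscX_spec a b T hT r s
    have e2 := vscX_spec a b T' hT' r' s
    rw [hX] at e1
    have e3 : s + b + r = s + r + b := by ring
    have e4 : s + b + r' = s + r' + b := by ring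
    simp only [e3, e4]
    omega)
  obtain ⟨h1, h2, h3, h4⟩ := hT
  obtain ⟨h1', h2', h3', h4'⟩ := hT'
  have q1 := hD (-r)
  have q2 := hD (-r')
  simp only [neg_add_cancel, h2, h2'] at q1 q2
  have p1 := h3 (-r' + r)
  have p2 := h3' (-r + r')
  have p3 : T' (-r + r') = 0 := by omega
  have p4 := h1' (-r + r')
  rw [p3] at p4
  have hr : r = r' := by
    push_cast at p4
    linear_combination p4
  subst hr
  have : T = T' := by
    funext s
    have := hD (s - r)
    simp only [sub_add_cancel] at this
    omega
  rw [this]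

open Finset in
theorem vscX_surj (a b : ℕ) [NeZero a] (hab : Nat.Coprime b a) (x : ZMod a → ℕ)
    (hx : x ∈ piAntidiag (univ : Finset (ZMod a)) b) :
    ∃ T ∈ vscT a b, ∃ r, vscX a b (T, r) = x := by
  have ha : (0 : ℤ) < a := by exact_mod_cast NeZero.pos a
  have h1 := ZMod.coe_mul_inv_eq_one b hab
  simp only [mem_piAntidiag, mem_univ, implies_true, and_true] at hx
  let h : ℕ → ℤ := fun n => n * b - a * ∑ i ∈ range n, (x (i * b) : ℤ)
  let T : ZMod a → ℤ := fun r => h (r * (b : ZMod a)⁻¹).val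
  have hwrap : h a = 0 := by
    have e1 : ∑ i ∈ range a, (x (i * b) : ℚ) = ∑ d : ZMod a, (x (d * b) : ℚ) := by
      rw [← vsc_sum_val a (fun i => (x (i * b) : ℚ))]
      simp
    have e2 : ∑ d : ZMod a, (x (d * b) : ℚ) = ∑ d : ZMod a, (x d : ℚ) := by
      rw [← vsc_sum_unit a b hab (fun d => (x (d * b) : ℚ)) 0]
      rw [← Equiv.sum_comp (Equiv.neg (ZMod a)) (fun d => (x d : ℚ))]
      refine sum_congr rfl fun d _ => ?_
      simp only [Equiv.neg_apply]
      congr 2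
      linear_combination -d * h1
    have e3 : ∑ d : ZMod a, (x d : ℚ) = b := by exact_mod_cast hx
    have e4 : ∑ i ∈ range a, (x (i * b) : ℤ) = b := by
      have := e1.trans (e2.trans e3)
      exact_mod_cast this
    simp only [h, e4]; ring
  have hstep : ∀ n, h (n + 1) = h n + b - a * x (n * b) := by
    intro n
    simp only [h, sum_range_succ]; push_cast; ring
  have h0 : h 0 = 0 := by simp [h]
  have hTs : ∀ r, T (r + b) = T r + b - a * x r := by
    intro r
    simp only [T]
    have e : (r + b) * (b : ZMod a)⁻¹ = r * (b : ZMod a)⁻¹ + 1 := by linear_combination h1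
    have e2 : (((r * (b : ZMod a)⁻¹).val : ℕ) : ZMod a) * b = r := by
      rw [ZMod.natCast_zmod_val]
      linear_combination r * h1
    have e3 := hstep (r * (b : ZMod a)⁻¹).val
    rw [e2] at e3
    rw [← e3, e]
    rcases vsc_val_succ a (r * (b : ZMod a)⁻¹) with ⟨h, _⟩ | ⟨h, h'⟩
    · rw [h]
    · rw [h, h', hwrap, ZMod.val_zero, h0]
  have hTc : ∀ r, ((T r : ℤ) : ZMod a) = r := by
    intro r
    simp only [T, h]
    push_cast
    rw [ZMod.natCast_zmod_val]
    simp
    linear_combination r * h1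
  obtain ⟨r0, hr0⟩ := Finite.exists_min T
  have hmem : (fun s => T (s + r0) - T r0) ∈ vscT a b := by
    refine ⟨?_, by simp, fun r => by have := hr0 (r + r0); simp only; omega, ?_⟩
    · intro r; push_cast; rw [hTc, hTc]; ring
    · intro r
      have e : r + b + r0 = r + r0 + b := by ring
      have := hTs (r + r0)
      simp only [e, this]
      have : (0 : ℤ) ≤ a * x (r + r0) := by positivity
      omega
  refine ⟨_, hmem, -r0, ?_⟩
  funext s
  have e := vscX_spec a b _ hmem (-r0) s
  have e1 : s + -r0 + r0 = s := by ring
  have e2 : s + -r0 + b + r0 = s + b := by ring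
  rw [e1, e2, hTs s] at e
  have : (a : ℤ) * vscX a b (fun s => T (s + r0) - T r0, -r0) s = a * x s := by
    rw [e]; ring
  exact_mod_cast mul_left_cancel₀ ha.ne' this

open Finset in
theorem vscX_form (a b : ℕ) [NeZero a] (hab : Nat.Coprime b a) (T : ZMod a → ℤ)
    (hT : T ∈ vscT a b) (r : ZMod a) :
    (a : ℚ) ^ 2 * ∑ i, ∑ j, vscK a b i j *
      (((vscX a b (T, r) i : ℚ) + 1) * ((vscX a b (T, r) j : ℚ) + 1))
    = ∑ s, (T s : ℚ) ^ 2 - (∑ s, (T s : ℚ)) ^ 2 / a := by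
  rw [vscK_form a b hab (fun s => (T (s + r) : ℚ)) (fun s => (vscX a b (T, r) s : ℚ) + 1) (b + a)]
  · have e1 := Equiv.sum_comp (Equiv.addRight r) (fun s => (T s : ℚ))
    have e2 := Equiv.sum_comp (Equiv.addRight r) (fun s => (T s : ℚ) ^ 2)
    simp only [Equiv.coe_addRight] at e1 e2
    rw [e1, e2]
  · intro s
    have := vscX_spec a b T hT r s
    have e : s + b + r = s + r + b := by ring
    simp only [e]
    qify at this
    linear_combination this


/-- The beta set (first column hook lengths). -/
def vscB (μ : YoungDiagram) : Finset ℕ :=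
  (Finset.range (μ.colLen 0)).image (fun k => μ.rowLen (μ.colLen 0 - 1 - k) + k)

theorem vsc_row_iff (μ : YoungDiagram) (i j : ℕ) : j < μ.rowLen i ↔ i < μ.colLen j := by
  rw [← YoungDiagram.mem_iff_lt_rowLen, YoungDiagram.mem_iff_lt_colLen]

theorem vscB_mono (μ : YoungDiagram) (N : ℕ) : StrictMono (fun k => μ.rowLen (N - 1 - k) + k) := by
  intro k k' h
  have := μ.rowLen_anti (N - 1 - k') (N - 1 - k) (by omega)
  simp only
  omega

theorem vscB_mem (μ : YoungDiagram) (n : ℕ) :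
    n ∈ vscB μ ↔ ∃ i < μ.colLen 0, n + i + 1 = μ.rowLen i + μ.colLen 0 := by
  unfold vscB
  simp only [Finset.mem_image, Finset.mem_range]
  constructor
  · rintro ⟨k, hk, rfl⟩
    exact ⟨μ.colLen 0 - 1 - k, by omega, by omega⟩
  · rintro ⟨i, hi, h⟩
    refine ⟨μ.colLen 0 - 1 - i, by omega, ?_⟩
    have : μ.colLen 0 - 1 - (μ.colLen 0 - 1 - i) = i := by omega
    rw [this]; omega

theorem vscB_card (μ : YoungDiagram) : (vscB μ).card = μ.colLen 0 := by
  unfold vscB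
  rw [Finset.card_image_of_injective _ (vscB_mono μ _).injective, Finset.card_range]

theorem vscB_zero (μ : YoungDiagram) : 0 ∉ vscB μ := by
  rw [vscB_mem]
  rintro ⟨i, hi, h⟩
  have := (vsc_row_iff μ i 0).mpr hi
  omega

theorem vsc_card_rows (μ : YoungDiagram) : μ.card = ∑ i ∈ Finset.range (μ.colLen 0), μ.rowLen i := by
  have h : ∀ c ∈ μ.cells, c.1 ∈ Finset.range (μ.colLen 0) := by
    rintro ⟨i, j⟩ hc
    have : (i, j) ∈ μ := hc
    rw [YoungDiagram.mem_iff_lt_rowLen] at this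
    rw [Finset.mem_range]
    apply (vsc_row_iff μ i 0).mp
    omega
  change μ.cells.card = _
  rw [Finset.card_eq_sum_card_fiberwise h]
  refine Finset.sum_congr rfl fun i _ => ?_
  rw [YoungDiagram.rowLen_eq_card]; rfl

theorem vscB_sum (μ : YoungDiagram) :
    ∑ n ∈ vscB μ, (n : ℚ) = μ.card + (μ.colLen 0 : ℚ) * (μ.colLen 0 - 1) / 2 := by
  unfold vscB
  rw [Finset.sum_image (fun x _ y _ h => (vscB_mono μ _).injective h)]
  push_cast
  rw [Finset.sum_add_distrib, (vsc_pow_sums _).1, vsc_card_rows]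
  congr 1
  push_cast
  exact Finset.sum_range_reflect (fun i => (μ.rowLen i : ℚ)) _

theorem vscB_inj : Function.Injective vscB := by
  intro μ ν h
  have hN : μ.colLen 0 = ν.colLen 0 := by rw [← vscB_card, ← vscB_card, h]
  have e1 := Finset.orderEmbOfFin_unique (s := vscB μ) (vscB_card μ)
    (f := fun k : Fin (μ.colLen 0) => μ.rowLen (μ.colLen 0 - 1 - k) + k)
    (fun k => Finset.mem_image_of_mem _ (Finset.mem_range.mpr k.2))
    (fun k k' hk => vscB_mono μ _ hk)
  have e2 := Finset.orderEmbOfFin_unique (s := vscB μ) (vscB_card μ)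
    (f := fun k : Fin (μ.colLen 0) => ν.rowLen (μ.colLen 0 - 1 - k) + k)
    (fun k => by
      rw [h, vscB_mem]
      have hk := k.2
      exact ⟨μ.colLen 0 - 1 - k, by omega, by omega⟩)
    (fun k k' hk => vscB_mono ν _ hk)
  have e3 : ∀ i, μ.rowLen i = ν.rowLen i := by
    intro i
    by_cases hi : i < μ.colLen 0
    · have := congrFun (e1.trans e2.symm) ⟨μ.colLen 0 - 1 - i, by omega⟩
      simp only at this
      have e : μ.colLen 0 - 1 - (μ.colLen 0 - 1 - i) = i := by omega
      rw [e] at this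
      omega
    · have h1 := vsc_row_iff μ i 0
      have h2 := vsc_row_iff ν i 0
      omega
  ext ⟨i, j⟩
  simp only [YoungDiagram.mem_cells, YoungDiagram.mem_iff_lt_rowLen, e3]

theorem vsc_exists_diagram (F : ℕ → ℕ) (hF : Antitone F) (N : ℕ) (hN : ∀ i, N ≤ i → F i = 0) :
    ∃ μ : YoungDiagram, ∀ i, μ.rowLen i = F i := by
  let μ : YoungDiagram :=
    { cells := (Finset.range N ×ˢ Finset.range (F 0)).filter (fun c => c.2 < F c.1)
      isLowerSet := by
        rintro ⟨i, j⟩ ⟨i', j'⟩ hle h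
        obtain ⟨h1, h2⟩ := Prod.mk_le_mk.mp hle
        simp only [Finset.coe_filter, Finset.mem_product, Finset.mem_range, Set.mem_ofPred_eq] at h ⊢
        have := hF h1
        omega }
  refine ⟨μ, fun i => ?_⟩
  have key : ∀ j, j < μ.rowLen i ↔ j < F i := by
    intro j
    rw [← YoungDiagram.mem_iff_lt_rowLen]
    change (i, j) ∈ Finset.filter _ _ ↔ _
    simp only [Finset.mem_filter, Finset.mem_product, Finset.mem_range]
    constructor
    · exact fun h => h.2
    · intro h
      have h0 := hF (Nat.zero_le i)
      refine ⟨⟨?_, by omega⟩, h⟩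
      by_contra hc
      have := hN i (by omega)
      omega
  have k1 := key (F i)
  have k2 := key (μ.rowLen i)
  omega

theorem vscB_surj (B : Finset ℕ) (h0 : 0 ∉ B) : ∃ μ, vscB μ = B := by
  set N := B.card with hN
  let e := B.orderEmbOfFin hN.symm
  have hstep : ∀ k (hk : k + 1 < N), e ⟨k, by omega⟩ + 1 ≤ e ⟨k + 1, hk⟩ := by
    intro k hk
    exact e.strictMono (by simp [Fin.lt_def])
  have hpos : ∀ k (hk : k < N), k + 1 ≤ e ⟨k, hk⟩ := by
    intro k
    induction k with
    | zero =>
      intro hk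
      have h1 : e ⟨0, hk⟩ ∈ B := B.orderEmbOfFin_mem hN.symm _
      have : e ⟨0, hk⟩ ≠ 0 := fun h => h0 (h ▸ h1)
      omega
    | succ k ih =>
      intro hk
      have := ih (by omega)
      have := hstep k hk
      omega
  let F : ℕ → ℕ := fun i => if h : i < N then e ⟨N - 1 - i, by omega⟩ - (N - 1 - i) else 0
  have hF : Antitone F := by
    apply antitone_nat_of_succ_le
    intro i
    simp only [F]
    by_cases h1 : i + 1 < N
    · have h2 : i < N := by omega
      rw [dif_pos h1, dif_pos h2]
      have := hstep (N - 1 - (i + 1)) (by omega)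
      have e1 : N - 1 - (i + 1) + 1 = N - 1 - i := by omega
      simp only [e1] at this
      omega
    · rw [dif_neg h1]; omega
  obtain ⟨μ, hμ⟩ := vsc_exists_diagram F hF N (fun i hi => by simp only [F]; rw [dif_neg (by omega)])
  have hFpos : ∀ i, 0 < F i ↔ i < N := by
    intro i
    simp only [F]
    by_cases h1 : i < N
    · rw [dif_pos h1]
      have := hpos (N - 1 - i) (by omega)
      omega
    · rw [dif_neg h1]; omega
  have hcol : μ.colLen 0 = N := by
    have k : ∀ i, i < μ.colLen 0 ↔ i < N := fun i => by rw [← vsc_row_iff, hμ, hFpos]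
    have k1 := k N
    have k2 := k (μ.colLen 0)
    omega
  refine ⟨μ, ?_⟩
  apply Finset.eq_of_subset_of_card_le
  · intro n hn
    unfold vscB at hn
    rw [hcol] at hn
    simp only [Finset.mem_image, Finset.mem_range] at hn
    obtain ⟨k, hk, rfl⟩ := hn
    rw [hμ]
    simp only [F]
    rw [dif_pos (by omega)]
    have e1 : N - 1 - (N - 1 - k) = k := by omega
    simp only [e1]
    have := hpos k hk
    have e2 : e ⟨k, hk⟩ - k + k = e ⟨k, hk⟩ := by omega
    rw [e2]
    exact B.orderEmbOfFin_mem hN.symm _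
  · rw [vscB_card, hcol]

theorem vscB_not_mem (μ : YoungDiagram) (n : ℕ) :
    n ∉ vscB μ ↔ ∃ j, n + μ.colLen j = j + μ.colLen 0 := by
  rw [vscB_mem]
  constructor
  · intro hn
    push Not at hn
    have hz : μ.rowLen (μ.colLen 0) = 0 := by
      have := vsc_row_iff μ (μ.colLen 0) 0
      omega
    have hex : ∃ i, μ.rowLen i + μ.colLen 0 ≤ n + i + 1 := ⟨μ.colLen 0, by omega⟩
    classical
    let i := Nat.find hex
    have hi : μ.rowLen i + μ.colLen 0 ≤ n + i + 1 := Nat.find_spec hex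
    have hle : i ≤ μ.colLen 0 := Nat.find_min' hex (by omega)
    have hlt : μ.rowLen i + μ.colLen 0 ≤ n + i := by
      rcases Nat.lt_or_ge i (μ.colLen 0) with h | h
      · have := hn i h
        omega
      · have : i = μ.colLen 0 := by omega
        rw [this, hz]; omega
    refine ⟨n + i - μ.colLen 0, ?_⟩
    have h1 : ¬ (i < μ.colLen (n + i - μ.colLen 0)) := by
      rw [← vsc_row_iff]; omega
    rcases Nat.eq_zero_or_pos i with h0 | h0
    · omega
    · have h2 : i - 1 < μ.colLen (n + i - μ.colLen 0) := by
        rw [← vsc_row_iff]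
        have := Nat.find_min hex (m := i - 1) (by omega)
        omega
      omega
  · rintro ⟨j, hj⟩ ⟨i, hi, h⟩
    have := vsc_row_iff μ i j
    omega

theorem vsc_core_iff (μ : YoungDiagram) (a : ℕ) (ha : 0 < a) :
    μ.IsCore a ↔ ∀ s ∈ vscB μ, a ≤ s → s - a ∈ vscB μ := by
  constructor
  · intro h s hs has
    by_contra hn
    obtain ⟨j, hj⟩ := (vscB_not_mem μ _).mp hn
    obtain ⟨i, hi, hs⟩ := (vscB_mem μ _).mp hs
    have hij := vsc_row_iff μ i j
    refine h i j (YoungDiagram.mem_iff_lt_rowLen.mpr (by omega)) ?_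
    have : μ.hookLength i j = a := by
      unfold YoungDiagram.hookLength; omega
    rw [this]
  · rintro h i j hij ⟨k, hk⟩
    have h1 := YoungDiagram.mem_iff_lt_rowLen.mp hij
    have h2 := YoungDiagram.mem_iff_lt_colLen.mp hij
    have h3 := μ.colLen_anti 0 j (by omega)
    unfold YoungDiagram.hookLength at hk
    have hs : μ.rowLen i + μ.colLen 0 - i - 1 ∈ vscB μ :=
      (vscB_mem μ _).mpr ⟨i, by omega, by omega⟩
    have hit : ∀ m s, s ∈ vscB μ → a * m ≤ s → s - a * m ∈ vscB μ := by
      intro m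
      induction m with
      | zero => intro s hs _; simpa using hs
      | succ m ih =>
        intro s hs hle
        rw [Nat.mul_succ] at hle ⊢
        have := h _ (ih s hs (by omega)) (by omega)
        rwa [Nat.sub_sub] at this
    have h4 := hit k _ hs (by omega)
    exact (vscB_not_mem μ _).mpr ⟨j, by omega⟩ h4


theorem vsc_down (D : Finset ℕ) (h : ∀ m, m + 1 ∈ D → m ∈ D) : D = Finset.range D.card := by
  have h' : ∀ k m, m + k ∈ D → m ∈ D := by
    intro k
    induction k with
    | zero => intro m hm; exact hm
    | succ k ih => intro m hm; exact ih m (h _ hm)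
  apply Finset.eq_of_subset_of_card_le
  · intro m hm
    rw [Finset.mem_range]
    have : Finset.range (m + 1) ⊆ D := by
      intro i hi
      rw [Finset.mem_range] at hi
      apply h' (m - i)
      have : i + (m - i) = m := by omega
      rwa [this]
    have := Finset.card_le_card this
    rw [Finset.card_range] at this
    omega
  · simp

/-- Number of beads on a runner. -/
def vscc (a : ℕ) (B : Finset ℕ) (r : ZMod a) : ℕ :=
  (B.filter (fun n => ((n : ℕ) : ZMod a) = r)).card

/-- First gap on a runner. -/
def vscGap (a : ℕ) (B : Finset ℕ) (r : ZMod a) : ℤ := (r.val : ℤ) + a * vscc a B r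

theorem vsc_runner (a : ℕ) [NeZero a] (B : Finset ℕ) (hB : ∀ s ∈ B, a ≤ s → s - a ∈ B) (r : ZMod a) :
    B.filter (fun n => ((n : ℕ) : ZMod a) = r) =
      (Finset.range (vscc a B r)).image (fun m => r.val + a * m) := by
  have ha := NeZero.pos a
  have hinj : Function.Injective (fun m => r.val + a * m) := by
    intro m m' h
    simp only at h
    exact Nat.eq_of_mul_eq_mul_left ha (by omega)
  have hform : ∀ n : ℕ, ((n : ℕ) : ZMod a) = r → r.val + a * (n / a) = n := by
    intro n hn
    rw [← hn, ZMod.val_natCast]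
    exact Nat.mod_add_div n a
  let D := (B.filter (fun n => ((n : ℕ) : ZMod a) = r)).image (fun n => n / a)
  have hD : ∀ m, m ∈ D ↔ r.val + a * m ∈ B := by
    intro m
    simp only [D, Finset.mem_image, Finset.mem_filter]
    constructor
    · rintro ⟨n, ⟨hn, hr⟩, rfl⟩
      rwa [hform n hr]
    · intro h
      refine ⟨_, ⟨h, by simp⟩, ?_⟩
      rw [Nat.add_mul_div_left _ _ ha, Nat.div_eq_of_lt (ZMod.val_lt r)]
      simp
  have hDr := vsc_down D (by
    intro m hm
    rw [hD] at hm ⊢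
    have := hB _ hm (by rw [Nat.mul_succ]; omega)
    have e : r.val + a * (m + 1) - a = r.val + a * m := by rw [Nat.mul_succ]; omega
    rwa [e] at this)
  have hfil : B.filter (fun n => ((n : ℕ) : ZMod a) = r) = D.image (fun m => r.val + a * m) := by
    ext n
    simp only [Finset.mem_image, Finset.mem_filter]
    constructor
    · rintro ⟨hn, hr⟩
      exact ⟨n / a, (hD _).mpr (by rwa [hform n hr]), hform n hr⟩
    · rintro ⟨m, hm, rfl⟩
      exact ⟨(hD m).mp hm, by simp⟩
  have hcard : vscc a B r = D.card := by
    unfold vscc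
    rw [hfil, Finset.card_image_of_injective _ hinj]
  rw [hfil, hcard, ← hDr]

theorem vsc_mem_gap (a : ℕ) [NeZero a] (B : Finset ℕ) (hB : ∀ s ∈ B, a ≤ s → s - a ∈ B) (n : ℕ) :
    n ∈ B ↔ (n : ℤ) < vscGap a B n := by
  have ha := NeZero.pos a
  have h1 : n ∈ B ↔ n ∈ B.filter (fun m => ((m : ℕ) : ZMod a) = n) := by simp
  have h2 := Nat.mod_add_div n a
  rw [h1, vsc_runner a B hB]
  unfold vscGap
  rw [ZMod.val_natCast]
  simp only [Finset.mem_image, Finset.mem_range]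
  constructor
  · rintro ⟨m, hm, h⟩
    have h3 : a * m < a * vscc a B n := Nat.mul_lt_mul_of_pos_left hm ha
    have h4 : n < n % a + a * vscc a B n := by omega
    exact_mod_cast h4
  · intro h
    have h4 : n < n % a + a * vscc a B n := by exact_mod_cast h
    refine ⟨n / a, ?_, h2⟩
    by_contra hc
    have := Nat.mul_le_mul_left a (Nat.le_of_not_lt hc)
    omega

theorem vscGap_cast (a : ℕ) [NeZero a] (B : Finset ℕ) (r : ZMod a) :
    ((vscGap a B r : ℤ) : ZMod a) = r := by
  unfold vscGap; simp

theorem vscGap_nonneg (a : ℕ) (B : Finset ℕ) (r : ZMod a) : 0 ≤ vscGap a B r := by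
  unfold vscGap; positivity

/-- Admissible beta sets. -/
def vscBs (a b : ℕ) : Set (Finset ℕ) :=
  {B | 0 ∉ B ∧ (∀ s ∈ B, a ≤ s → s - a ∈ B) ∧ (∀ s ∈ B, b ≤ s → s - b ∈ B)}

theorem vscGap_mem (a b : ℕ) [NeZero a] (B : Finset ℕ) (h : B ∈ vscBs a b) :
    vscGap a B ∈ vscT a b := by
  obtain ⟨h0, hA, hB⟩ := h
  refine ⟨vscGap_cast a B, ?_, vscGap_nonneg a B, ?_⟩
  · have h1 := (vsc_mem_gap a B hA 0).not.mp h0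
    have h2 := vscGap_nonneg a B 0
    simp only [Nat.cast_zero] at h1
    omega
  · intro r
    by_contra hc
    obtain ⟨n, hn⟩ := Int.eq_ofNat_of_zero_le (vscGap_nonneg a B r)
    have hnr : ((n : ℕ) : ZMod a) = r := by
      have := vscGap_cast a B r
      rw [hn] at this
      simpa using this
    have h1 : n + b ∈ B := by
      rw [vsc_mem_gap a B hA]
      push_cast
      rw [hnr]; omega
    have h2 := hB _ h1 (by omega)
    rw [Nat.add_sub_cancel, vsc_mem_gap a B hA, hnr] at h2
    omega

theorem vscGap_bij (a b : ℕ) [NeZero a] : Set.BijOn (vscGap a) (vscBs a b) (vscT a b) := by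
  refine ⟨fun B hB => vscGap_mem a b B hB, ?_, ?_⟩
  · intro B hB B' hB' h
    ext n
    rw [vsc_mem_gap a B hB.2.1, vsc_mem_gap a B' hB'.2.1, h]
  · rintro T ⟨h1, h2, h3, h4⟩
    let M := ∑ r, (T r).toNat
    let B : Finset ℕ := (Finset.range M).filter (fun n : ℕ => (n : ℤ) < T (n : ZMod a))
    have hBm : ∀ n : ℕ, n ∈ B ↔ (n : ℤ) < T n := by
      intro n
      simp only [B, Finset.mem_filter, Finset.mem_range, and_iff_right_iff_imp]
      intro h
      have : (T n).toNat ≤ M :=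
        Finset.single_le_sum (f := fun r => (T r).toNat) (fun _ _ => Nat.zero_le _) (Finset.mem_univ _)
      omega
    have hmem : B ∈ vscBs a b := by
      refine ⟨?_, ?_, ?_⟩
      · rw [hBm]; simp [h2]
      · intro s hs has
        rw [hBm] at hs ⊢
        rw [Nat.cast_sub has, Nat.cast_sub has]
        simp only [CharP.cast_eq_zero, sub_zero]
        omega
      · intro s hs hbs
        rw [hBm] at hs ⊢
        have := h4 ((s - b : ℕ) : ZMod a)
        rw [Nat.cast_sub hbs, sub_add_cancel] at this
        rw [Nat.cast_sub hbs, Nat.cast_sub hbs]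
        omega
    refine ⟨B, hmem, ?_⟩
    have key : ∀ n : ℕ, (n : ℤ) < vscGap a B n ↔ (n : ℤ) < T n := fun n => by
      rw [← vsc_mem_gap a B hmem.2.1, hBm]
    have aux : ∀ (U V : ZMod a → ℤ), (∀ r, 0 ≤ U r) → (∀ r, ((U r : ℤ) : ZMod a) = r) →
        (∀ n : ℕ, (n : ℤ) < V n → (n : ℤ) < U n) → ∀ r, V r ≤ U r := by
      intro U V hU hUc hUV r
      by_contra hc
      obtain ⟨n, hn⟩ := Int.eq_ofNat_of_zero_le (hU r)
      have hnr : ((n : ℕ) : ZMod a) = r := by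
        have := hUc r
        rw [hn] at this
        simpa using this
      have := hUV n (by rw [hnr]; omega)
      rw [hnr] at this
      omega
    funext r
    apply le_antisymm
    · exact aux T (vscGap a B) h3 h1 (fun n => (key n).mp) r
    · exact aux (vscGap a B) T (vscGap_nonneg a B) (vscGap_cast a B) (fun n => (key n).mpr) r

theorem vscB_bij (a b : ℕ) (ha : 0 < a) (hb : 0 < b) :
    Set.BijOn vscB {μ : YoungDiagram | μ.IsCore a ∧ μ.IsCore b} (vscBs a b) := by
  refine ⟨?_, vscB_inj.injOn, ?_⟩
  · rintro μ ⟨h1, h2⟩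
    exact ⟨vscB_zero μ, (vsc_core_iff μ a ha).mp h1, (vsc_core_iff μ b hb).mp h2⟩
  · rintro B ⟨h0, h1, h2⟩
    obtain ⟨μ, rfl⟩ := vscB_surj B h0
    exact ⟨μ, ⟨(vsc_core_iff μ a ha).mpr h1, (vsc_core_iff μ b hb).mpr h2⟩, rfl⟩

open Finset in
theorem vsc_size (a : ℕ) [NeZero a] (μ : YoungDiagram) (h : μ.IsCore a) :
    (μ.card : ℚ) = (∑ r, (vscGap a (vscB μ) r : ℚ) ^ 2 - (∑ r, (vscGap a (vscB μ) r : ℚ)) ^ 2 / a)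
      / (2 * a) - ((a : ℚ) ^ 2 - 1) / 24 := by
  have ha : (a : ℚ) ≠ 0 := Nat.cast_ne_zero.mpr (NeZero.ne a)
  have hB := (vsc_core_iff μ a (NeZero.pos a)).mp h
  have hsum := vscB_sum μ
  have hfib : ∀ g : ℕ → ℚ, ∑ n ∈ vscB μ, g n
      = ∑ r : ZMod a, ∑ m ∈ range (vscc a (vscB μ) r), g (r.val + a * m) := by
    intro g
    rw [← Finset.sum_fiberwise (vscB μ) (fun n => ((n : ℕ) : ZMod a)) g]
    refine sum_congr rfl fun r _ => ?_
    rw [vsc_runner a (vscB μ) hB r, Finset.sum_image]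
    intro m _ m' _ hm
    simp only at hm
    exact Nat.eq_of_mul_eq_mul_left (NeZero.pos a) (by omega)
  set c := vscc a (vscB μ) with hc
  have hN : (μ.colLen 0 : ℚ) = ∑ r, (c r : ℚ) := by
    rw [← vscB_card]
    have := hfib (fun _ => 1)
    simpa using this
  have hS : ∑ n ∈ vscB μ, (n : ℚ) = ∑ r, (r.val : ℚ) * c r + a / 2 * ∑ r, (c r : ℚ) ^ 2
      - a / 2 * ∑ r, (c r : ℚ) := by
    rw [hfib (fun n => (n : ℚ)), mul_sum, mul_sum, ← sum_add_distrib, ← sum_sub_distrib]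
    refine sum_congr rfl fun r _ => ?_
    push_cast
    rw [sum_add_distrib, ← mul_sum, (vsc_pow_sums _).1]
    simp
    ring
  obtain ⟨p1, p2, -, -⟩ := vsc_pow_sums a
  rw [← vsc_sum_val a (fun v => (v : ℚ))] at p1
  rw [← vsc_sum_val a (fun v => (v : ℚ) ^ 2)] at p2
  have hT1 : ∑ r, (vscGap a (vscB μ) r : ℚ) = ∑ r : ZMod a, (r.val : ℚ) + a * ∑ r, (c r : ℚ) := by
    rw [mul_sum, ← sum_add_distrib]
    refine sum_congr rfl fun r _ => ?_
    unfold vscGap; push_cast; rw [hc]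
  have hT2 : ∑ r, (vscGap a (vscB μ) r : ℚ) ^ 2 = ∑ r : ZMod a, (r.val : ℚ) ^ 2
      + 2 * a * ∑ r, (r.val : ℚ) * c r + a ^ 2 * ∑ r, (c r : ℚ) ^ 2 := by
    rw [mul_sum, mul_sum, ← sum_add_distrib, ← sum_add_distrib]
    refine sum_congr rfl fun r _ => ?_
    unfold vscGap; push_cast; rw [hc]; ring
  rw [hT1, hT2, p1, p2]
  rw [hS, hN] at hsum
  generalize ∑ r, (c r : ℚ) = S1 at *
  generalize ∑ r, (c r : ℚ) ^ 2 = S2 at *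
  generalize ∑ r : ZMod a, (r.val : ℚ) * c r = S3 at *
  have : (μ.card : ℚ) = S3 + a / 2 * S2 - a / 2 * S1 - S1 * (S1 - 1) / 2 := by linarith
  rw [this]
  field_simp
  ring

/-- Size as a function of the composition. -/
def vscq (a b : ℕ) [NeZero a] (x : ZMod a → ℕ) : ℚ :=
  ((a : ℚ) ^ 2 * ∑ i, ∑ j, vscK a b i j * (((x i : ℚ) + 1) * ((x j : ℚ) + 1))) / (2 * a)
    - ((a : ℚ) ^ 2 - 1) / 24

open Finset in
theorem vsc_transfer (a b : ℕ) [NeZero a] (hb : 0 < b) (hab : Nat.Coprime b a) :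
    ({μ : YoungDiagram | μ.IsCore a ∧ μ.IsCore b}).Finite ∧
    ∀ (F : ℚ → ℚ), a * ∑ᶠ μ ∈ {μ : YoungDiagram | μ.IsCore a ∧ μ.IsCore b}, F μ.card
      = ∑ x ∈ piAntidiag (univ : Finset (ZMod a)) b, F (vscq a b x) := by
  have hbij := (vscGap_bij a b).comp (vscB_bij a b (NeZero.pos a) hb)
  set C := {μ : YoungDiagram | μ.IsCore a ∧ μ.IsCore b} with hC
  have hfin : C.Finite := by
    have hinj : Set.InjOn (fun μ => vscX a b (vscGap a (vscB μ), 0)) C := by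
      intro μ hμ ν hν h
      have := vscX_inj a b hab (x₁ := (vscGap a (vscB μ), 0)) (x₂ := (vscGap a (vscB ν), 0))
        ⟨hbij.mapsTo hμ, trivial⟩ ⟨hbij.mapsTo hν, trivial⟩ h
      exact hbij.injOn hμ hν (Prod.mk.inj this).1
    refine Set.Finite.of_injOn (t := (piAntidiag (univ : Finset (ZMod a)) b : Set (ZMod a → ℕ)))
      (fun μ hμ => ?_) hinj (Finset.finite_toSet _)
    exact vscX_mem a b _ (hbij.mapsTo hμ) 0
  refine ⟨hfin, fun F => ?_⟩
  rw [finsum_mem_eq_finite_toFinset_sum _ hfin]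
  have e1 : (a : ℚ) * ∑ μ ∈ hfin.toFinset, F μ.card
      = ∑ p ∈ hfin.toFinset ×ˢ (univ : Finset (ZMod a)), F p.1.card := by
    rw [sum_product, mul_sum]
    refine sum_congr rfl fun μ _ => ?_
    simp [ZMod.card]
  rw [e1]
  refine Finset.sum_bij (fun p _ => vscX a b (vscGap a (vscB p.1), p.2)) ?_ ?_ ?_ ?_
  · rintro ⟨μ, r⟩ hp
    have hμ : μ ∈ C := by simpa using hp
    exact vscX_mem a b _ (hbij.mapsTo hμ) r
  · rintro ⟨μ, r⟩ hp ⟨ν, r'⟩ hp' h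
    have hμ : μ ∈ C := by simpa using hp
    have hν : ν ∈ C := by simpa using hp'
    have := vscX_inj a b hab (x₁ := (vscGap a (vscB μ), r)) (x₂ := (vscGap a (vscB ν), r'))
        ⟨hbij.mapsTo hμ, trivial⟩ ⟨hbij.mapsTo hν, trivial⟩ h
    obtain ⟨h1, h2⟩ := Prod.mk.inj this
    rw [hbij.injOn hμ hν h1, h2]
  · intro x hx
    obtain ⟨T, hT, r, h⟩ := vscX_surj a b hab x hx
    obtain ⟨μ, hμ, rfl⟩ := hbij.surjOn hT
    exact ⟨(μ, r), by simpa using hμ, h⟩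
  · rintro ⟨μ, r⟩ hp
    have hμ : μ ∈ C := by simpa using hp
    have h1 := vscX_form a b hab _ (hbij.mapsTo hμ) r
    simp only [Function.comp] at h1
    unfold vscq
    rw [h1, vsc_size a μ hμ.1]

theorem vscP_succ (a b K : ℕ) (ha : 0 < a) :
    (vscP a b (K + 1) : ℚ) * (a + K) = vscP a b K * (a + b + K) := by
  unfold vscP
  obtain ⟨n, rfl⟩ : ∃ n, a = n + 1 := ⟨a - 1, by omega⟩
  have := Nat.add_one_mul_choose_eq (n + K + b) (n + K)
  have e : n + 1 - 1 + (K + 1) + b = n + K + b + 1 := by omega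
  have e' : n + 1 - 1 + (K + 1) = n + K + 1 := by omega
  have e'' : n + 1 - 1 + K = n + K := by omega
  rw [e, e', e'']
  qify at this
  push_cast
  linear_combination -this

theorem vsc_final (a b : ℕ) (ha : 0 < a) (hb : 0 < b) (hab : Nat.Coprime a b) :
    (∑ᶠ μ ∈ {μ : YoungDiagram | μ.IsCore a ∧ μ.IsCore b}, (μ.card : ℚ) ^ 2) /
        (Nat.card {μ : YoungDiagram | μ.IsCore a ∧ μ.IsCore b} : ℚ)
      - ((∑ᶠ μ ∈ {μ : YoungDiagram | μ.IsCore a ∧ μ.IsCore b}, (μ.card : ℚ)) /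
        (Nat.card {μ : YoungDiagram | μ.IsCore a ∧ μ.IsCore b} : ℚ)) ^ 2
      = (a : ℚ) * b * ((a : ℚ) - 1) * ((b : ℚ) - 1) * ((a : ℚ) + b) * ((a : ℚ) + b + 1)
          / 1440 := by
  have : NeZero a := ⟨ha.ne'⟩
  have ha' : (a : ℚ) ≠ 0 := Nat.cast_ne_zero.mpr ha.ne'
  obtain ⟨hfin, htr⟩ := vsc_transfer a b hb hab.symm
  have t0 := htr (fun _ => 1)
  have t1 := htr (fun q => q)
  have t2 := htr (fun q => q ^ 2)
  have hcard : ∑ᶠ μ ∈ {μ : YoungDiagram | μ.IsCore a ∧ μ.IsCore b}, (1 : ℚ)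
      = Nat.card {μ : YoungDiagram | μ.IsCore a ∧ μ.IsCore b} := by
    rw [finsum_mem_eq_finite_toFinset_sum _ hfin, Nat.card_coe_set_eq,
      Set.ncard_eq_toFinset_card _ hfin]
    simp
  rw [hcard] at t0
  generalize (Nat.card {μ : YoungDiagram | μ.IsCore a ∧ μ.IsCore b} : ℚ) = c0 at *
  generalize ∑ᶠ μ ∈ {μ : YoungDiagram | μ.IsCore a ∧ μ.IsCore b}, (μ.card : ℚ) = c1 at *
  generalize ∑ᶠ μ ∈ {μ : YoungDiagram | μ.IsCore a ∧ μ.IsCore b}, (μ.card : ℚ) ^ 2 = c2 at *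
  have hcd : Fintype.card (ZMod a) = a := ZMod.card a
  have m0 := vsc_moment (ι := ZMod a) b 0
  simp only [Pi.zero_apply, Nat.ascFactorial_zero, Finset.prod_const_one, Nat.factorial_zero,
    Finset.sum_const_zero, hcd, one_mul] at m0
  have m0' : ∑ x ∈ Finset.piAntidiag (Finset.univ : Finset (ZMod a)) b, (1 : ℚ) = vscP a b 0 := by
    exact_mod_cast m0
  have m1 := vsc_EQ1 b (vscK a b) (vscK_row a b hab.symm) _ _ rfl rfl
  have m2 := vsc_EQ2 b (vscK a b) (vscK_symm a b) (vscK_row a b hab.symm) _ _ _ _ rfl rfl rfl rfl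
  simp only [hcd, vscK_diag, vscK_sq a b hab.symm, Finset.sum_const, Finset.card_univ, nsmul_eq_mul] at m1 m2
  have s1 := vscP_succ a b 0 ha
  have s2 := vscP_succ a b 1 ha
  have s3 := vscP_succ a b 2 ha
  have s4 := vscP_succ a b 3 ha
  have hP0 : (vscP a b 0 : ℚ) ≠ 0 := by
    have : 0 < vscP a b 0 := Nat.choose_pos (by omega)
    exact_mod_cast this.ne'
  norm_num at s1 s2 s3 s4
  have q1 : ∀ x, vscq a b x = (a : ℚ) / 2 * (∑ i, ∑ j, vscK a b i j * (((x i : ℚ) + 1) * ((x j : ℚ) + 1)))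
    - ((a : ℚ) ^ 2 - 1) / 24 := by
    intro x; unfold vscq; field_simp
  have q2 : ∀ x, vscq a b x ^ 2 = (a : ℚ) ^ 2 / 4 * (∑ i, ∑ j, vscK a b i j * (((x i : ℚ) + 1) * ((x j : ℚ) + 1))) ^ 2
    - (a : ℚ) / 2 * ((a : ℚ) ^ 2 - 1) / 12 * (∑ i, ∑ j, vscK a b i j * (((x i : ℚ) + 1) * ((x j : ℚ) + 1)))
    + (((a : ℚ) ^ 2 - 1) / 24) ^ 2 * 1 := by
    intro x; rw [q1]; ring
  have q1' : ∀ x, vscq a b x = (a : ℚ) / 2 * (∑ i, ∑ j, vscK a b i j * (((x i : ℚ) + 1) * ((x j : ℚ) + 1)))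
    - ((a : ℚ) ^ 2 - 1) / 24 * 1 := by
    intro x; rw [q1]; ring
  rw [m0'] at t0
  simp only [q2, Finset.sum_add_distrib, Finset.sum_sub_distrib] at t2
  simp only [q1', Finset.sum_sub_distrib] at t1
  simp only [← Finset.mul_sum (s := Finset.piAntidiag (Finset.univ : Finset (ZMod a)) b)] at t1 t2
  rw [m0', m1] at t1
  rw [m0', m1, m2] at t2
  clear m0 m0' m1 m2 q1 q2 q1' htr hcard
  have hq : (0 : ℚ) < a := by exact_mod_cast ha
  generalize (vscP a b 0 : ℚ) = P0 at *
  generalize (vscP a b 1 : ℚ) = P1 at *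
  generalize (vscP a b 2 : ℚ) = P2 at *
  generalize (vscP a b 3 : ℚ) = P3 at *
  generalize (vscP a b 4 : ℚ) = P4 at *
  generalize (a : ℚ) = x at *
  generalize (b : ℚ) = y at *
  have n1 : x + 1 ≠ 0 := by positivity
  have n2 : x + 2 ≠ 0 := by positivity
  have n3 : x + 3 ≠ 0 := by positivity
  have r1 : P1 = P0 * (x + y) / x := by field_simp; linarith
  have r2 : P2 = P1 * (x + y + 1) / (x + 1) := by field_simp; linarith
  have r3 : P3 = P2 * (x + y + 2) / (x + 2) := by field_simp; linarith
  have r4 : P4 = P3 * (x + y + 3) / (x + 3) := by field_simp; linarith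
  have u0 : c0 = P0 / x := by field_simp; linarith
  have u1 : c1 / c0 = x * c1 / P0 := by rw [u0]; field_simp
  have u2 : c2 / c0 = x * c2 / P0 := by rw [u0]; field_simp
  rw [u1, u2, t1, t2, r4, r3, r2, r1]
  clear u1 u2 t1 t2 r4 r3 r2 r1 s1 s2 s3 s4 t0 u0
  field_simp
  ring

/-- The variance of size over the uniform distribution on `(a,b)`-cores is
`ab(a-1)(b-1)(a+b)(a+b+1)/1440`. -/
theorem variance_size_simultaneous_cores (a b : ℕ) (ha : 0 < a) (hb : 0 < b)
    (hab : Nat.Coprime a b) :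
    (∑ᶠ μ ∈ {μ : YoungDiagram | μ.IsCore a ∧ μ.IsCore b}, (μ.card : ℚ) ^ 2) /
        (Nat.card {μ : YoungDiagram | μ.IsCore a ∧ μ.IsCore b} : ℚ)
      - ((∑ᶠ μ ∈ {μ : YoungDiagram | μ.IsCore a ∧ μ.IsCore b}, (μ.card : ℚ)) /
        (Nat.card {μ : YoungDiagram | μ.IsCore a ∧ μ.IsCore b} : ℚ)) ^ 2
      = (a : ℚ) * b * ((a : ℚ) - 1) * ((b : ℚ) - 1) * ((a : ℚ) + b) * ((a : ℚ) + b + 1)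
          / 1440 := by
  exact vsc_final a b ha hb hab
end

section
/- For integers n >= 2 and b >= 1 with gcd(2n-2, b) = 1, the identity sum_{i=1}^{b-1} (b-i) * ( sum_{j=1}^{min(floor(i(2n-2)/b), n-2)} floor((j+1)/2) + sum_{j=n-2}^{floor(i(2n-2)/b)-1} ceil((j+3)/2) ) = n(b^2-1)(2n-1)/24 holds, where the second inner sum is empty when floor(i(2n-2)/b)-1 < n-2. -/
namespace FloorD

open Finset

/-- coefficient -/
def c (m k : ℕ) : ℚ := (((k + 1) / 2 : ℕ) : ℚ) + if m ≤ k then 1 else 0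

/-- residue -/
def r (m b k : ℕ) : ℕ := (k * b) % (2 * m)

/-- centred residue -/
def u (m b k : ℕ) : ℚ := 2 * (r m b k : ℚ) - 2 * m

lemma inner (p F : ℕ) :
    (∑ j ∈ Icc 1 (min F p), (((j + 1) / 2 : ℕ) : ℚ))
      + ∑ j ∈ Icc (p : ℤ) ((F : ℤ) - 1), (((j + 4) / 2 : ℤ) : ℚ)
    = ∑ k ∈ range (F + 1), c (p + 1) k := by
  induction F with
  | zero =>
    have : Icc (p : ℤ) (((0 : ℕ) : ℤ) - 1) = ∅ := by
      ext x; simp; omega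
    rw [this]; simp [c]
  | succ F ih =>
    rw [sum_range_succ, ← ih]
    by_cases hF : F + 1 ≤ p
    · have e1 : Icc (p : ℤ) (((F + 1 : ℕ) : ℤ) - 1) = ∅ := by
        ext x; simp; omega
      have e2 : Icc (p : ℤ) ((F : ℤ) - 1) = ∅ := by
        ext x; simp; omega
      rw [e1, e2, min_eq_left hF, min_eq_left (by omega : F ≤ p), sum_Icc_succ_top (by omega)]
      have : ¬ (p + 1 ≤ F + 1) := by omega
      simp [c, this]
    · have e1 : Icc (p : ℤ) (((F + 1 : ℕ) : ℤ) - 1) = insert (F : ℤ) (Icc (p : ℤ) ((F : ℤ) - 1)) := by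
        ext x; simp; omega
      rw [e1, sum_insert (by simp), min_eq_right (by omega), min_eq_right (by omega : p ≤ F)]
      have h1 : p + 1 ≤ F + 1 := by omega
      have h2 : (((F : ℤ) + 4) / 2 : ℤ) = (((F + 1 + 1) / 2 : ℕ) : ℤ) + 1 := by omega
      rw [h2]
      simp only [c, h1, if_true]
      rw [Int.cast_add, Int.cast_natCast, Int.cast_one]
      ring

lemma tri (q : ℕ) : ∑ t ∈ range (q + 1), (t : ℚ) = q * (q + 1) / 2 := by
  induction q with
  | zero => simp
  | succ q ih => rw [sum_range_succ, ih]; push_cast; ring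

lemma c_zero (m : ℕ) (hm : 1 ≤ m) : c m 0 = 0 := by
  have : m ≠ 0 := by omega
  simp [c, this]

lemma swap (m b : ℕ) (hm : 1 ≤ m) (hb : 1 ≤ b) :
    ∑ i ∈ Icc 1 (b - 1), ((b : ℚ) - i) * ∑ k ∈ range (i * (2 * m) / b + 1), c m k
    = ∑ k ∈ range (2 * m), c m (2 * m - k) *
        (((k * b / (2 * m) : ℕ) : ℚ) * (((k * b / (2 * m) : ℕ) : ℚ) + 1) / 2) := by
  have e1 : ∑ i ∈ Icc 1 (b - 1), ((b : ℚ) - i) * ∑ k ∈ range (i * (2 * m) / b + 1), c m k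
      = ∑ i ∈ range (b + 1), ∑ k ∈ range (2 * m + 1),
        if k * b ≤ i * (2 * m) then ((b : ℚ) - i) * c m k else 0 := by
    have e : ∀ i ∈ range (b + 1), (∑ k ∈ range (2 * m + 1),
        if k * b ≤ i * (2 * m) then ((b : ℚ) - i) * c m k else 0)
        = ((b : ℚ) - i) * ∑ k ∈ range (i * (2 * m) / b + 1), c m k := by
      intro i hi
      rw [← sum_filter, mul_sum]
      apply sum_congr _ (fun _ _ => rfl)
      ext k
      simp only [mem_filter, mem_range, Nat.lt_succ_iff] at hi ⊢
      rw [Nat.le_div_iff_mul_le (by omega)]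
      constructor
      · exact fun h => h.2
      · intro h
        refine ⟨?_, h⟩
        have : k * b ≤ (2 * m) * b := by nlinarith
        exact Nat.le_of_mul_le_mul_right this (by omega)
    rw [sum_congr rfl e]
    apply sum_subset
    · intro x; simp; omega
    · intro x hx hx2
      simp only [mem_range, mem_Icc] at hx hx2
      rcases (by omega : x = 0 ∨ x = b) with rfl | rfl
      · simp [c_zero m hm]
      · simp
  rw [e1, sum_comm, ← sum_range_reflect, sum_range_succ]
  have hz : (∑ x ∈ range (b + 1), if (2 * m + 1 - 1 - 2 * m) * b ≤ x * (2 * m) then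
      ((b : ℚ) - x) * c m (2 * m + 1 - 1 - 2 * m) else 0) = 0 := by
    apply sum_eq_zero
    intro x _
    have : 2 * m + 1 - 1 - 2 * m = 0 := by omega
    rw [this, c_zero m hm]; simp
  rw [hz, add_zero]
  apply sum_congr rfl
  intro k hk
  rw [mem_range] at hk
  rw [← tri, ← sum_range_reflect, mul_sum]
  symm
  have hq : k * b / (2 * m) ≤ b := by
    apply Nat.div_le_of_le_mul; nlinarith
  have : ∀ t ∈ range (b + 1), (if (2 * m + 1 - 1 - k) * b ≤ (b + 1 - 1 - t) * (2 * m) then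
      ((b : ℚ) - ((b + 1 - 1 - t : ℕ) : ℚ)) * c m (2 * m + 1 - 1 - k) else 0)
      = if t * (2 * m) ≤ k * b then c m (2 * m - k) * (t : ℚ) else 0 := by
    intro t ht
    rw [mem_range] at ht
    have ht' : t ≤ b := by omega
    have iff1 : (2 * m + 1 - 1 - k) * b ≤ (b + 1 - 1 - t) * (2 * m) ↔ t * (2 * m) ≤ k * b := by
      obtain ⟨a, rfl⟩ := Nat.exists_eq_add_of_le ht'
      obtain ⟨d, hd⟩ := Nat.exists_eq_add_of_le hk.le
      have h1 : 2 * m + 1 - 1 - k = d := by omega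
      have h2 : t + a + 1 - 1 - t = a := by omega
      rw [h1, h2, hd]
      constructor <;> intro h <;> nlinarith
    simp only [iff1]
    split_ifs
    · rw [show b + 1 - 1 - t = b - t by omega, show 2 * m + 1 - 1 - k = 2 * m - k by omega,
        Nat.cast_sub ht']
      ring
    · rfl
  rw [sum_congr rfl this, ← sum_filter]
  apply sum_congr _ (fun _ _ => rfl)
  ext t
  simp only [mem_filter, mem_range, Nat.lt_succ_iff]
  rw [Nat.le_div_iff_mul_le (by omega)]
  constructor
  · intro h
    exact ⟨le_trans ((Nat.le_div_iff_mul_le (by omega)).2 h) hq, h⟩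
  · exact fun h => h.2

/-- reversed coefficient -/
def d (m k : ℕ) : ℚ := m - k / 2 + ((k % 2 : ℕ) : ℚ) / 2 + if k ≤ m then 1 else 0

lemma c_eq_d (m k : ℕ) (hk : k ≤ 2 * m) : c m (2 * m - k) = d m k := by
  unfold c d
  have h1 : m ≤ 2 * m - k ↔ k ≤ m := by omega
  have h2 : (((2 * m - k + 1) / 2 : ℕ) : ℚ) * 2 + k = 2 * m + ((k % 2 : ℕ) : ℚ) := by
    have : (2 * m - k + 1) / 2 * 2 + k = 2 * m + k % 2 := by omega
    exact_mod_cast this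
  simp only [h1]
  linarith

lemma q_eq (m b k : ℕ) (hm : 1 ≤ m) :
    8 * (2 * (m : ℚ)) ^ 2 * (((k * b / (2 * m) : ℕ) : ℚ) * (((k * b / (2 * m) : ℕ) : ℚ) + 1) / 2)
    = 4 * k ^ 2 * b ^ 2 - 4 * b * (k * u m b k) + 4 * (r m b k * ((r m b k : ℚ) - 2 * m)) := by
  have h : ((2 * m : ℕ) : ℚ) * ((k * b / (2 * m) : ℕ) : ℚ) + ((r m b k : ℕ) : ℚ) = k * b := by
    have := Nat.div_add_mod (k * b) (2 * m)
    unfold r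
    exact_mod_cast this
  unfold u
  push_cast at h
  have h2 : (r m b k : ℚ) = k * b - 2 * m * ((k * b / (2 * m) : ℕ) : ℚ) := by linarith
  rw [h2]; ring

lemma refl (f : ℕ → ℚ) (N : ℕ) (h0 : f 0 = 0) (hN : f N = 0) :
    ∑ k ∈ range N, f k = ∑ k ∈ range N, f (N - k) := by
  have h := sum_range_reflect f (N + 1)
  rw [sum_range_succ, sum_range_succ] at h
  simp only [Nat.add_sub_cancel, Nat.sub_self, h0, hN, add_zero] at h
  exact h.symm

lemma r_lt (m b k : ℕ) (hm : 1 ≤ m) : r m b k < 2 * m := Nat.mod_lt _ (by omega)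

lemma r_neg (m b k : ℕ) (hm : 1 ≤ m) (hk : k ≤ 2 * m) :
    (r m b k = 0 ∧ r m b (2 * m - k) = 0) ∨ (r m b k + r m b (2 * m - k) = 2 * m) := by
  have h1 : (r m b k + r m b (2 * m - k)) % (2 * m) = 0 := by
    unfold r
    rw [← Nat.add_mod, ← add_mul, Nat.add_sub_cancel' hk]
    simp
  have l1 := r_lt m b k hm
  have l2 := r_lt m b (2 * m - k) hm
  obtain ⟨t, ht⟩ := Nat.dvd_of_mod_eq_zero h1
  have : t < 2 := by nlinarith
  interval_cases t <;> omega

lemma r_ne (m b k : ℕ) (h : Nat.Coprime (2 * m) b) (h1 : 1 ≤ k) (h2 : k < 2 * m) :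
    r m b k ≠ 0 := by
  intro h0
  have := h.dvd_of_dvd_mul_right (Nat.dvd_of_mod_eq_zero h0)
  have := Nat.le_of_dvd (by omega) this
  omega

lemma u_neg (m b k : ℕ) (hm : 1 ≤ m) (h : Nat.Coprime (2 * m) b) (h1 : 1 ≤ k) (h2 : k < 2 * m) :
    u m b (2 * m - k) = - u m b k := by
  have h0 := r_ne m b k h h1 h2
  have : r m b k + r m b (2 * m - k) = 2 * m := by
    rcases r_neg m b k hm h2.le with h | h
    · exact absurd h.1 h0
    · exact h
  have : (r m b k : ℚ) + r m b (2 * m - k) = 2 * m := by exact_mod_cast this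
  unfold u; linarith

lemma odd_b (m b : ℕ) (h : Nat.Coprime (2 * m) b) : b % 2 = 1 := by
  have := Nat.Coprime.coprime_mul_right h
  rw [Nat.coprime_two_left] at this
  exact Nat.odd_iff.1 this

lemma r_m (m b : ℕ) (hm : 1 ≤ m) (h : Nat.Coprime (2 * m) b) : r m b m = m := by
  have ho := odd_b m b h
  unfold r
  have : m * b = m + 2 * m * (b / 2) := by
    have : b = 1 + 2 * (b / 2) := by omega
    conv_lhs => rw [this]
    ring
  rw [this, Nat.add_mul_mod_self_left, Nat.mod_eq_of_lt (by omega)]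

lemma u_dbl (m b l : ℕ) (hm : 1 ≤ m) (h : Nat.Coprime (2 * m) b) :
    u m b (2 * l) = u m b l + u m b (l + m) := by
  have l0 := r_lt m b l hm
  have ha : r m b (l + m) = (r m b l + m) % (2 * m) := by
    have := r_m m b hm h
    unfold r at *
    rw [add_mul, Nat.add_mod, this]
  have hd : r m b (2 * l) = (r m b l + r m b l) % (2 * m) := by
    unfold r
    rw [← Nat.add_mod]; congr 1; ring
  unfold u
  rw [ha, hd]
  by_cases hl : r m b l < m
  · rw [Nat.mod_eq_of_lt (by omega), Nat.mod_eq_of_lt (by omega)]; push_cast; ring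
  · rw [Nat.mod_eq_sub_mod (by omega), Nat.mod_eq_of_lt (by omega),
      Nat.mod_eq_sub_mod (by omega : r m b l + m ≥ 2 * m), Nat.mod_eq_of_lt (by omega),
      Nat.cast_sub (by omega), Nat.cast_sub (by omega)]
    push_cast; ring

lemma split_par (f : ℕ → ℚ) (m : ℕ) :
    ∑ k ∈ range (2 * m), f k = ∑ l ∈ range m, (f (2 * l) + f (2 * l + 1)) := by
  induction m with
  | zero => simp
  | succ m ih => rw [show 2 * (m + 1) = 2 * m + 1 + 1 by ring, sum_range_succ, sum_range_succ, ih,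
      sum_range_succ]; ring

lemma split_half (f : ℕ → ℚ) (m : ℕ) :
    ∑ k ∈ range (2 * m), f k = ∑ l ∈ range m, f l + ∑ l ∈ range m, f (l + m) := by
  rw [two_mul, sum_range_add]; simp [add_comm]

lemma sum_le (f : ℕ → ℚ) (m : ℕ) (hm : 1 ≤ m) :
    ∑ k ∈ range (2 * m), (if k ≤ m then f k else 0) = ∑ k ∈ range (m + 1), f k := by
  rw [← sum_filter]
  apply sum_congr _ (fun _ _ => rfl)
  ext x; simp; omega

lemma lin (m b : ℕ) (hm : 1 ≤ m) (h : Nat.Coprime (2 * m) b) :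
    ∑ k ∈ range (2 * m), d m k * (k * u m b k) = 0 := by
  have um : u m b m = 0 := by unfold u; rw [r_m m b hm h]; ring
  have P : ∑ k ∈ range (2 * m), ((m : ℚ) - k / 2) * (k * u m b k) = 0 := by
    have e := refl (fun k => ((m : ℚ) - k / 2) * (k * u m b k)) (2 * m) (by simp)
      (by push_cast; ring)
    have e2 : ∑ k ∈ range (2 * m), ((m : ℚ) - ((2 * m - k : ℕ) : ℚ) / 2) *
        (((2 * m - k : ℕ) : ℚ) * u m b (2 * m - k))
        = - ∑ k ∈ range (2 * m), ((m : ℚ) - k / 2) * (k * u m b k) := by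
      rw [← sum_neg_distrib]
      apply sum_congr rfl
      intro k hk
      rw [mem_range] at hk
      rcases Nat.eq_zero_or_pos k with rfl | hk0
      · simp
      · rw [u_neg m b k hm h hk0 hk, Nat.cast_sub hk.le]; push_cast; ring
    try simp only at e
    linarith
  have A1 : ∑ k ∈ range (m + 1), (k : ℚ) * u m b k = ∑ k ∈ range m, (k : ℚ) * u m b k := by
    rw [sum_range_succ, um]; ring
  have A2 : ∑ l ∈ range m, ((m : ℚ) - l) * u m b (l + m)
      = - ∑ k ∈ range m, (k : ℚ) * u m b k := by
    rw [← A1, ← sum_range_reflect (fun k : ℕ => (k : ℚ) * u m b k) (m + 1), ← sum_neg_distrib,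
      sum_range_succ]
    simp only [Nat.add_sub_cancel, Nat.sub_self]
    simp only [Nat.cast_zero, zero_mul, neg_zero, add_zero]
    apply sum_congr rfl
    intro l hl
    rw [mem_range] at hl
    have := u_neg m b (m - l) hm h (by omega) (by omega)
    rw [show 2 * m - (m - l) = l + m by omega] at this
    rw [this, Nat.cast_sub hl.le]; ring
  have O : ∑ k ∈ range (2 * m), ((k % 2 : ℕ) : ℚ) * (k * u m b k)
      = - 2 * ∑ k ∈ range m, (k : ℚ) * u m b k := by
    have s1 := split_par (fun k => (k : ℚ) * u m b k) m
    have s2 := split_half (fun k => (k : ℚ) * u m b k) m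
    have s3 := split_par (fun k => ((k % 2 : ℕ) : ℚ) * (k * u m b k)) m
    simp only at s1 s2 s3
    rw [s3]
    have t1 : ∀ l ∈ range m, (((2 * l % 2 : ℕ) : ℚ) * (((2 * l : ℕ) : ℚ) * u m b (2 * l)) +
        (((2 * l + 1) % 2 : ℕ) : ℚ) * (((2 * l + 1 : ℕ) : ℚ) * u m b (2 * l + 1)))
        = ((2 * l : ℕ) * u m b (2 * l) + ((2 * l + 1 : ℕ) : ℚ) * u m b (2 * l + 1))
          - (2 * (l * u m b l) + 2 * (l * u m b (l + m))) := by
      intro l _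
      rw [show 2 * l % 2 = 0 by omega, show (2 * l + 1) % 2 = 1 by omega, u_dbl m b l hm h]
      push_cast; ring
    rw [sum_congr rfl t1, sum_sub_distrib, ← s1, s2, sum_add_distrib, ← mul_sum, ← mul_sum]
    have A3 : ∑ l ∈ range m, ((m : ℚ) - l) * u m b (l + m) =
        ∑ l ∈ range m, ((l + m : ℕ) : ℚ) * u m b (l + m)
          - 2 * ∑ l ∈ range m, (l : ℚ) * u m b (l + m) := by
      rw [mul_sum, ← sum_sub_distrib]
      apply sum_congr rfl; intro l _; push_cast; ring
    linarith
  have I := sum_le (fun k => (k : ℚ) * u m b k) m hm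
  try simp only at I
  have : ∑ k ∈ range (2 * m), d m k * (k * u m b k)
     = ∑ k ∈ range (2 * m), ((m : ℚ) - k / 2) * (k * u m b k)
      + 1 / 2 * ∑ k ∈ range (2 * m), ((k % 2 : ℕ) : ℚ) * (k * u m b k)
      + ∑ k ∈ range (2 * m), (if k ≤ m then (k : ℚ) * u m b k else 0) := by
    rw [mul_sum, ← sum_add_distrib, ← sum_add_distrib]
    apply sum_congr rfl
    intro k _
    unfold d
    split_ifs <;> ring
  rw [this, P, O, I, A1]; ring

lemma perm (m b : ℕ) (hm : 1 ≤ m) (h : Nat.Coprime (2 * m) b) (f : ℕ → ℚ) :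
    ∑ k ∈ range (2 * m), f (r m b k) = ∑ k ∈ range (2 * m), f k := by
  have maps : Set.MapsTo (r m b) (range (2 * m) : Finset ℕ) (range (2 * m) : Finset ℕ) := by
    intro k _
    simpa using r_lt m b k hm
  have inj : Set.InjOn (r m b) (range (2 * m) : Finset ℕ) := by
    intro x hx y hy hxy
    simp only [coe_range, Set.mem_Iio] at hx hy
    have : x * b ≡ y * b [MOD 2 * m] := hxy
    have := Nat.ModEq.cancel_right_of_coprime h this
    exact Nat.ModEq.eq_of_lt_of_lt this hx hy
  have surj := Finset.surjOn_of_injOn_of_card_le (r m b) maps inj le_rfl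
  exact sum_nbij (r m b) maps inj surj (fun _ _ => rfl)

lemma r_par (m b k : ℕ) (h : Nat.Coprime (2 * m) b) : r m b k % 2 = k % 2 := by
  unfold r
  rw [Nat.mod_mul_right_mod, Nat.mul_mod, odd_b m b h]; simp

lemma quad (m b : ℕ) (hm : 1 ≤ m) (h : Nat.Coprime (2 * m) b) :
    2 * ∑ k ∈ range (2 * m), d m k * (r m b k * ((r m b k : ℚ) - 2 * m))
    = ∑ k ∈ range (2 * m), ((m : ℚ) + 1 + ((k % 2 : ℕ) : ℚ)) * (k * ((k : ℚ) - 2 * m)) - m ^ 2 := by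
  have r0 : r m b 0 = 0 := by simp [r]
  have r2 : r m b (2 * m) = 0 := by simp [r]
  have e := refl (fun k => d m k * (r m b k * ((r m b k : ℚ) - 2 * m))) (2 * m)
    (by simp [r0]) (by simp [r2])
  try simp only at e
  have p := perm m b hm h (fun k => ((m : ℚ) + 1 + ((k % 2 : ℕ) : ℚ)) * (k * ((k : ℚ) - 2 * m)))
  rw [← p, two_mul]
  nth_rewrite 2 [e]
  have s : ∑ k ∈ range (2 * m), (if k = m then -(m : ℚ) ^ 2 else 0) = - (m : ℚ) ^ 2 := by
    rw [sum_ite_eq' ]; rw [if_pos]; simp; omega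
  rw [sub_eq_add_neg, ← s, ← sum_add_distrib, ← sum_add_distrib]
  apply sum_congr rfl
  intro k hk
  rw [mem_range] at hk
  rw [r_par m b k h]
  have hv : (r m b (2 * m - k) * ((r m b (2 * m - k) : ℚ) - 2 * m))
      = r m b k * ((r m b k : ℚ) - 2 * m) := by
    rcases r_neg m b k hm hk.le with ⟨h1, h2⟩ | h1
    · rw [h1, h2]
    · have : (r m b k : ℚ) + r m b (2 * m - k) = 2 * m := by exact_mod_cast h1
      have : (r m b (2 * m - k) : ℚ) = 2 * m - r m b k := by linarith
      rw [this]; ring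
  rw [hv]
  have par : (2 * m - k) % 2 = k % 2 := by omega
  unfold d
  rw [par, Nat.cast_sub hk.le]
  push_cast
  rcases lt_trichotomy k m with hl | hl | hl
  · rw [if_pos (by omega), if_neg (by omega), if_neg (by omega)]; ring
  · rw [if_pos (by omega), if_pos (by omega), if_pos hl, hl, r_m m b hm h]; ring
  · rw [if_neg (by omega), if_pos (by omega), if_neg (by omega)]; ring

lemma s1 (N : ℕ) : ∑ k ∈ range (N + 1), (k : ℚ) ^ 2 = N * (N + 1) * (2 * N + 1) / 6 := by
  induction N with
  | zero => simp
  | succ q ih => rw [sum_range_succ, ih]; push_cast; ring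

lemma poly1 (m : ℕ) (a : ℚ) : ∑ k ∈ range (2 * m), (a - (k : ℚ) / 2 + ((k % 2 : ℕ) : ℚ) / 2) * k ^ 2
    = ∑ l ∈ range m, (a - l) * (8 * l ^ 2 + 4 * l + 1) := by
  rw [split_par]
  apply sum_congr rfl
  intro l _
  rw [show 2 * l % 2 = 0 by omega, show (2 * l + 1) % 2 = 1 by omega]
  push_cast; ring

lemma poly1' (m : ℕ) (a : ℚ) : ∑ l ∈ range m, (a - l) * (8 * (l : ℚ) ^ 2 + 4 * l + 1)
    = a * (8 * ((m - 1) * m * (2 * m - 1) / 6) + 4 * (m * (m - 1) / 2) + m)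
      - (8 * (m * (m - 1) / 2) ^ 2 + 4 * ((m - 1) * m * (2 * m - 1) / 6) + m * (m - 1) / 2) := by
  induction m with
  | zero => simp
  | succ q ih => rw [sum_range_succ, ih]; push_cast; ring

lemma poly2 (m : ℕ) (a e : ℚ) :
    ∑ k ∈ range (2 * m), (a + ((k % 2 : ℕ) : ℚ)) * (k * ((k : ℚ) - e))
    = a * ((2 * m - 1) * (2 * m) * (4 * m - 1) / 6 - e * (m * (2 * m - 1)))
      + (m * (4 * m ^ 2 - 1) / 3 - e * m ^ 2) := by
  rw [split_par]
  induction m with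
  | zero => simp
  | succ q ih =>
    rw [sum_range_succ, ih, show 2 * q % 2 = 0 by omega, show (2 * q + 1) % 2 = 1 by omega]
    push_cast; ring

lemma main (m b : ℕ) (hm : 1 ≤ m) (h : Nat.Coprime (2 * m) b) :
    ∑ k ∈ range (2 * m), c m (2 * m - k) *
        (((k * b / (2 * m) : ℕ) : ℚ) * (((k * b / (2 * m) : ℕ) : ℚ) + 1) / 2)
      = ((m : ℚ) + 1) * ((b : ℚ) ^ 2 - 1) * (2 * ((m : ℚ) + 1) - 1) / 24 := by
  have hm0 : (m : ℚ) ≠ 0 := by exact_mod_cast (by omega : m ≠ 0)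
  have hne : 8 * (2 * (m : ℚ)) ^ 2 ≠ 0 := by positivity
  apply mul_left_cancel₀ hne
  have e : 8 * (2 * (m : ℚ)) ^ 2 * ∑ k ∈ range (2 * m), c m (2 * m - k) *
        (((k * b / (2 * m) : ℕ) : ℚ) * (((k * b / (2 * m) : ℕ) : ℚ) + 1) / 2)
      = 4 * b ^ 2 * ∑ k ∈ range (2 * m), d m k * k ^ 2
        - 4 * b * ∑ k ∈ range (2 * m), d m k * (k * u m b k)
        + 4 * ∑ k ∈ range (2 * m), d m k * (r m b k * ((r m b k : ℚ) - 2 * m)) := by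
    rw [mul_sum, mul_sum, mul_sum, mul_sum, ← sum_sub_distrib, ← sum_add_distrib]
    apply sum_congr rfl
    intro k hk
    rw [mem_range] at hk
    rw [c_eq_d m k hk.le, mul_left_comm, q_eq m b k hm]
    ring
  have D : ∑ k ∈ range (2 * m), d m k * (k : ℚ) ^ 2
      = ∑ k ∈ range (2 * m), ((m : ℚ) - (k : ℚ) / 2 + ((k % 2 : ℕ) : ℚ) / 2) * k ^ 2
        + ∑ k ∈ range (m + 1), (k : ℚ) ^ 2 := by
    rw [← sum_le _ m hm, ← sum_add_distrib]
    apply sum_congr rfl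
    intro k _
    unfold d
    split_ifs <;> ring
  have Q := quad m b hm h
  rw [poly2] at Q
  rw [e, lin m b hm h, D, poly1, poly1', s1]
  linear_combination 2 * Q

end FloorD


/-- Floor/ceiling sum identity in type `D_n`: with `F = ⌊i(2n-2)/b⌋`,
`∑_{i=1}^{b-1} (b-i) (∑_{j=1}^{min(F,n-2)} ⌊(j+1)/2⌋ + ∑_{j=n-2}^{F-1} ⌈(j+3)/2⌉)
  = n(b²-1)(2n-1)/24`, where the second inner sum is empty when `F - 1 < n - 2`. -/
theorem floor_sum_identity_typeD (n b : ℕ) (hn : 2 ≤ n) (hb : 1 ≤ b)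
    (h : Nat.Coprime (2 * n - 2) b) :
    ∑ i ∈ Finset.Icc 1 (b - 1),
        ((b : ℚ) - i) *
          ((∑ j ∈ Finset.Icc 1 (min (i * (2 * n - 2) / b) (n - 2)), (((j + 1) / 2 : ℕ) : ℚ))
            + ∑ j ∈ Finset.Icc ((n : ℤ) - 2) (((i * (2 * n - 2) / b : ℕ) : ℤ) - 1),
                (((j + 4) / 2 : ℤ) : ℚ))
      = (n : ℚ) * ((b : ℚ) ^ 2 - 1) * (2 * (n : ℚ) - 1) / 24 := by
  obtain ⟨p, rfl⟩ := Nat.exists_eq_add_of_le' hn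
  have e : 2 * (p + 2) - 2 = 2 * (p + 1) := by omega
  rw [e] at h ⊢
  have e2 : p + 2 - 2 = p := by omega
  have e3 : ((p + 2 : ℕ) : ℤ) - 2 = p := by omega
  rw [e2, e3]
  simp only [FloorD.inner]
  rw [FloorD.swap (p + 1) b (by omega) hb, FloorD.main (p + 1) b (by omega) h]
  push_cast
  ring
end
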